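/- arXiv:1106.0082 — 5 statements merged into one kernel-verified Lean document; each statement's English description precedes it below -/
import Mathlib

section
/- Let C be a field of characteristic zero, V a C-vector space, ∂ a C-linear endomorphism of V, and k ≥ 1, N ≥ 1. Let elements v_{m_0,…,m_k} ∈ V be given, indexed by the tuples (m_0,…,m_k) ∈ {0,…,N}^{k+1} whose non-increasing rearrangement (μ_0,…,μ_k) satisfies μ_0 − μ_1 = 1. Then the equation Σ_{(m_0,…,m_k)} Λ₀^{m_0}(λ_1^{m_1}⋯λ_k^{m_k} ⊗ v_{m_0,…,m_k}) = 0 holds in C[λ_1,…,λ_k] ⊗_C V if and only if the following two conditions hold: (i) v_{m′_0,…,m′_k} = v_{m_0,…,m_k} whenever (m′_0,…,m′_k) is obtained from (m_0,…,m_k) by transposing an entry m_i = μ_0 with an entry m_j = μ_1; (ii) defining, for each tuple (n_0,…,n_k) ∈ {0,…,N−1}^{k+1} whose two largest entries are equal (ν_0 = ν_1), the element w_{n_0,…,n_k} := v_{m_0,…,m_k} where (m_0,…,m_k) is obtained from (n_0,…,n_k) by adding 1 to one maximal entry (well defined by (i)), one has ∂w_{n_0,…,n_k} + Σ_{h=0}^k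 w_{n_0,…,n_h−1,…,n_k} = 0 for all such tuples, where the summand w_{n_0,…,n_h−1,…,n_k} is interpreted as 0 unless n_h ≥ 1 and the two largest entries of (n_0,…,n_h−1,…,n_k) are equal. In particular, if ∂ is injective, then the equation has only the zero solution v ≡ 0. -/
/-- A tuple `(m_0,…,m_k)` of natural numbers whose non-increasing rearrangement
`(μ_0,…,μ_k)` satisfies `μ_0 − μ_1 = 1`. -/
def gapOne (k : ℕ) (m : Fin (k + 1) → ℕ) : Prop :=
  ∃ σ : Equiv.Perm (Fin (k + 1)), Antitone (fun j => m (σ j)) ∧ m (σ 0) = m (σ 1) + 1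

/-- A tuple `(n_0,…,n_k)` of natural numbers whose two largest entries are equal
(`ν_0 = ν_1`). -/
def twoMaxEq (k : ℕ) (m : Fin (k + 1) → ℕ) : Prop :=
  ∃ σ : Equiv.Perm (Fin (k + 1)), Antitone (fun j => m (σ j)) ∧ m (σ 0) = m (σ 1)

/-- We represent polynomials in `λ_1,…,λ_k` with coefficients in `V`
(i.e. elements of `C[λ_1,…,λ_k] ⊗_C V`) as finitely supported functions
`(Fin k →₀ ℕ) →₀ V` from monomials to coefficients.
`Λ₀(Q) = −(λ_1+⋯+λ_k)·Q − ∂̂(Q)`, where `∂̂` applies `D` to the coefficients and the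
multiplication by `λ_a` shifts the exponents. -/
noncomputable def vLamZero {C V : Type*} [Field C] [AddCommGroup V] [Module C V]
    (D : V →ₗ[C] V) (k : ℕ) (Q : (Fin k →₀ ℕ) →₀ V) : (Fin k →₀ ℕ) →₀ V :=
  -(∑ a : Fin k, Finsupp.mapDomain (· + Finsupp.single a 1) Q)
    - Finsupp.mapRange (⇑D) D.map_zero Q

open scoped Classical in
/-- The left-hand side `Σ_{(m_0,…,m_k)} Λ₀^{m_0} (λ_1^{m_1}⋯λ_k^{m_k} ⊗ v_{m_0,…,m_k})`,
the sum ranging over the tuples `(m_0,…,m_k) ∈ {0,…,N}^{k+1}` whose non-increasing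
rearrangement satisfies `μ_0 − μ_1 = 1`. -/
noncomputable def eqnLHS {C V : Type*} [Field C] [AddCommGroup V] [Module C V]
    (D : V →ₗ[C] V) (k N : ℕ) (v : (Fin (k + 1) → ℕ) → V) : (Fin k →₀ ℕ) →₀ V :=
  ∑ m : Fin (k + 1) → Fin (N + 1),
    if gapOne k (fun j => (m j : ℕ)) then
      (vLamZero D k)^[(m 0 : ℕ)]
        (Finsupp.single (Finsupp.equivFunOnFinite.symm fun a : Fin k => (m a.succ : ℕ))
          (v fun j => (m j : ℕ)))
    else 0

def SMax {k : ℕ} (m : Fin (k + 1) → ℕ) (i : Fin (k + 1)) : Prop := ∀ r, r ≠ i → m r < m i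

lemma exists_anti {k : ℕ} (m : Fin (k + 1) → ℕ) :
    ∃ σ : Equiv.Perm (Fin (k + 1)), Antitone (fun j => m (σ j)) := by
  refine ⟨Tuple.sort (fun j => OrderDual.toDual (m j)), ?_⟩
  have h := Tuple.monotone_sort (fun j => OrderDual.toDual (m j))
  intro a b hab
  exact h hab

lemma one_le_fin {k : ℕ} (t : Fin (k + 1)) (h : t ≠ 0) : 1 ≤ t := by
  rcases k with _ | k
  · exact absurd (Fin.ext (by omega)) h
  · rw [Fin.le_def]
    have : (t : ℕ) ≠ 0 := fun h' => h (Fin.ext h')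
    simp
    omega

lemma gapOne_iff {k : ℕ} (hk : 1 ≤ k) (m : Fin (k + 1) → ℕ) :
    gapOne k m ↔ ∃ i j, m i = m j + 1 ∧ ∀ r, r ≠ i → m r ≤ m j := by
  constructor
  · rintro ⟨σ, ha, h⟩
    refine ⟨σ 0, σ 1, h, fun r hr => ?_⟩
    have h1 : σ.symm r ≠ 0 := fun h' => hr (by rw [← h']; simp)
    have := ha (one_le_fin _ h1)
    simpa using this
  · rintro ⟨i, j, h, hr⟩
    obtain ⟨σ, ha⟩ := exists_anti m
    refine ⟨σ, ha, ?_⟩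
    have h0 : ∀ r, m r ≤ m (σ 0) := fun r => by simpa using ha (Fin.zero_le (σ.symm r))
    have e0 : σ 0 = i := by
      by_contra hne
      have := hr _ hne
      have := h0 i
      omega
    have h10 : (1 : Fin (k + 1)) ≠ 0 := by
      obtain ⟨k, rfl⟩ : ∃ l, k = l + 1 := ⟨k - 1, by omega⟩
      simp
    have e1 : σ 1 ≠ i := fun h' => h10 (σ.injective (h'.trans e0.symm))
    have a1 := hr _ e1
    have hj : j ≠ i := by rintro rfl; omega
    have h1 : σ.symm j ≠ 0 := fun h' => hj (by rw [← e0, ← h']; simp)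
    have a2 : m j ≤ m (σ 1) := by simpa using ha (one_le_fin _ h1)
    rw [e0]; omega

lemma twoMaxEq_iff {k : ℕ} (hk : 1 ≤ k) (m : Fin (k + 1) → ℕ) :
    twoMaxEq k m ↔ ∃ i j, i ≠ j ∧ m i = m j ∧ ∀ r, m r ≤ m i := by
  have h10 : (0 : Fin (k + 1)) ≠ 1 := by
    obtain ⟨k, rfl⟩ : ∃ l, k = l + 1 := ⟨k - 1, by omega⟩
    simp
  constructor
  · rintro ⟨σ, ha, h⟩
    exact ⟨σ 0, σ 1, σ.injective.ne h10, h, fun r => by simpa using ha (Fin.zero_le (σ.symm r))⟩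
  · rintro ⟨i, j, hij, h, hr⟩
    obtain ⟨σ, ha⟩ := exists_anti m
    refine ⟨σ, ha, ?_⟩
    have h0 : ∀ r, m r ≤ m (σ 0) := fun r => by simpa using ha (Fin.zero_le (σ.symm r))
    have a0 := h0 i
    have a1 := hr (σ 0)
    have a2 := hr (σ 1)
    have a3 : m i ≤ m (σ 1) := by
      by_cases hi : σ.symm i = 0
      · have : σ.symm j ≠ 0 := fun h' => hij (σ.symm.injective (hi.trans h'.symm))
        rw [h]
        simpa using ha (one_le_fin _ this)
      · simpa using ha (one_le_fin _ hi)
    omega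

lemma not_two_of_smax {k : ℕ} (hk : 1 ≤ k) {m : Fin (k + 1) → ℕ} {i} (h : SMax m i) :
    ¬ twoMaxEq k m := by
  rw [twoMaxEq_iff hk]
  rintro ⟨a, b, hab, he, hr⟩
  have := hr i
  by_cases ha : a = i
  · subst ha
    have := h b hab.symm
    omega
  · have := h a ha
    omega

lemma exists_smax {k : ℕ} (hk : 1 ≤ k) {m : Fin (k + 1) → ℕ} (h : ¬ twoMaxEq k m) :
    ∃ i, SMax m i := by
  obtain ⟨i, hi⟩ := Finite.exists_max m
  refine ⟨i, fun r hr => lt_of_le_of_ne (hi r) fun he => h ?_⟩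
  rw [twoMaxEq_iff hk]
  exact ⟨i, r, hr.symm, he.symm, hi⟩

lemma not_two_of_gap {k : ℕ} (hk : 1 ≤ k) {m : Fin (k + 1) → ℕ} (h : gapOne k m) :
    ¬ twoMaxEq k m := by
  rw [gapOne_iff hk] at h
  obtain ⟨i, j, h, hr⟩ := h
  exact not_two_of_smax hk (i := i) fun r hri => by have := hr r hri; omega

/-- raising a maximal entry -/
lemma gap_raise {k : ℕ} (hk : 1 ≤ k) {n : Fin (k + 1) → ℕ} {i} (hi : ∀ r, n r ≤ n i) :
    gapOne k (Function.update n i (n i + 1)) ↔ twoMaxEq k n := by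
  rw [gapOne_iff hk, twoMaxEq_iff hk]
  constructor
  · rintro ⟨a, b, h, hr⟩
    have hai : a = i := by
      by_contra hne
      have := hr i (Ne.symm hne)
      have := hi a
      simp only [Function.update_apply] at *
      split_ifs at * <;> omega
    subst hai
    have hb : b ≠ a := by rintro rfl; omega
    refine ⟨a, b, hb.symm, ?_, hi⟩
    simp [hb] at h
    exact h
  · rintro ⟨a, b, hab, he, hr⟩
    obtain ⟨c, hc, hci⟩ : ∃ c, c ≠ i ∧ n c = n i := by
      by_cases h : a = i
      · subst h
        exact ⟨b, hab.symm, he.symm⟩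
      · exact ⟨a, h, le_antisymm (hi a) (hr i)⟩
    refine ⟨i, c, by simp [hc, hci], fun r h => ?_⟩
    simp [hc, h, hci, hi r]

lemma smax_raise {k : ℕ} {n : Fin (k + 1) → ℕ} {i} (hi : ∀ r, n r ≤ n i) :
    SMax (Function.update n i (n i + 1)) i := by
  intro r h
  have := hi r
  simp [h]
  omega

lemma smax_lower {k : ℕ} {n : Fin (k + 1) → ℕ} {i h} (hi : SMax n i) (hne : h ≠ i) :
    SMax (Function.update n h (n h - 1)) i := by
  intro r hr
  have := hi r hr
  have := hi h hne
  simp only [Function.update_apply]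
  split_ifs <;> simp_all <;> omega

section rec
variable {C V : Type*} [Field C] [AddCommGroup V] [Module C V]

/-- the coefficients of multiplication by `x_0 + ... + x_k + D` -/
def Rop (D : V →ₗ[C] V) (k : ℕ) (q : (Fin (k + 1) → ℕ) → V) (n : Fin (k + 1) → ℕ) : V :=
  D (q n) + ∑ h : Fin (k + 1), if 1 ≤ n h then q (Function.update n h (n h - 1)) else 0

open scoped Classical in
noncomputable def Pco (k N : ℕ) (v : (Fin (k + 1) → ℕ) → V) (n : Fin (k + 1) → ℕ) : V :=
  if gapOne k n ∧ ∀ j, n j ≤ N then v n else 0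

lemma Rop_smax (D : V →ₗ[C] V) {k : ℕ} (q : (Fin (k + 1) → ℕ) → V)
    {n : Fin (k + 1) → ℕ} {i} (h0 : q n = 0)
    (h1 : ∀ h, h ≠ i → 1 ≤ n h → q (Function.update n h (n h - 1)) = 0) :
    Rop D k q n = if 1 ≤ n i then q (Function.update n i (n i - 1)) else 0 := by
  unfold Rop
  rw [h0, map_zero, zero_add]
  apply Finset.sum_eq_single i
  · intro h _ hne
    split_ifs with h2
    · exact h1 h hne h2
    · rfl
  · simp

lemma q_zero (D : V →ₗ[C] V) {k N : ℕ} (hk : 1 ≤ k) {v q : (Fin (k + 1) → ℕ) → V} {B : ℕ}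
    (hB : ∀ n, (∃ j, B < n j) → q n = 0) (hq : ∀ n, Pco k N v n = Rop D k q n) :
    ∀ (d : ℕ) (n : Fin (k + 1) → ℕ) (i : Fin (k + 1)), SMax n i → B + 1 ≤ n i + d → q n = 0 := by
  intro d
  induction d with
  | zero => intro n i _ h; exact hB n ⟨i, by omega⟩
  | succ d ih =>
    intro n i hi hd
    have hmax : ∀ r, n r ≤ n i := fun r => by
      by_cases h : r = i
      · rw [h]
      · exact (hi r h).le
    have hs := smax_raise hmax
    have e := hq (Function.update n i (n i + 1))
    rw [Rop_smax D q (i := i)] at e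
    · rw [Pco, if_neg] at e
      · simpa using e.symm
      · rw [gap_raise hk hmax]
        exact fun h => not_two_of_smax hk hi h.1
    · exact ih _ i hs (by simp; omega)
    · intro h hne _
      refine ih _ i (smax_lower hs hne) ?_
      simp [Function.update_of_ne hne.symm]
      omega

lemma q_eq (D : V →ₗ[C] V) {k N : ℕ} {v q : (Fin (k + 1) → ℕ) → V}
    (hz : ∀ n i, SMax n i → q n = 0) (hq : ∀ n, Pco k N v n = Rop D k q n)
    (n : Fin (k + 1) → ℕ) (i) (hi : ∀ r, n r ≤ n i) :
    q n = Pco k N v (Function.update n i (n i + 1)) := by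
  have hs := smax_raise hi
  rw [hq, Rop_smax D q (i := i) (hz _ i hs) (fun h hne _ => hz _ i (smax_lower hs hne))]
  simp

lemma forward (D : V →ₗ[C] V) {k N : ℕ} (hk : 1 ≤ k) {v q : (Fin (k + 1) → ℕ) → V}
    (hz : ∀ n i, SMax n i → q n = 0) (hq : ∀ n, Pco k N v n = Rop D k q n)
    (m : Fin (k + 1) → ℕ) (hm : ∀ j, m j ≤ N) (hg : gapOne k m) (i)
    (hi : ∀ r, m r ≤ m i) : (∀ r, r ≠ i → m r < m i) ∧
      (∀ r, Function.update m i (m i - 1) r ≤ Function.update m i (m i - 1) i) ∧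
      twoMaxEq k (Function.update m i (m i - 1)) ∧ v m = q (Function.update m i (m i - 1)) := by
  obtain ⟨a, b, hab, hr⟩ := (gapOne_iff hk m).1 hg
  have : i = a := by
    by_contra hne
    have := hr i hne
    have := hi a
    omega
  subst this
  have hmax : ∀ r, Function.update m i (m i - 1) r ≤ Function.update m i (m i - 1) i := by
    intro r
    by_cases h : r = i
    · rw [h]
    · have := hr r h
      simp [h]; omega
  have hu : Function.update (Function.update m i (m i - 1)) i
      (Function.update m i (m i - 1) i + 1) = m := by
    have : m i - 1 + 1 = m i := by omega
    simp [this]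
  refine ⟨fun r h => by have := hr r h; omega, hmax, ?_, ?_⟩
  · rw [← gap_raise hk hmax, hu]; exact hg
  · rw [q_eq D hz hq _ i hmax, hu, Pco, if_pos ⟨hg, hm⟩]

lemma key (D : V →ₗ[C] V) {k N : ℕ} (hk : 1 ≤ k) {v w : (Fin (k + 1) → ℕ) → V}
    (hw : ∀ m : Fin (k + 1) → ℕ, (∀ j, m j < N) → twoMaxEq k m →
            ∀ i : Fin (k + 1), (∀ r, m r ≤ m i) →
              w m = v (Function.update m i (m i + 1)))
    (q : (Fin (k + 1) → ℕ) → V)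
    (hq1 : ∀ n, twoMaxEq k n → (∀ j, n j < N) → q n = w n)
    (hq2 : ∀ n, ¬ twoMaxEq k n → q n = 0)
    (hq3 : ∀ n, ¬ (∀ j, n j < N) → q n = 0)
    (hR : ∀ m : Fin (k + 1) → ℕ, (∀ j, m j < N) → twoMaxEq k m → Rop D k q m = 0)
    (n) : Pco k N v n = Rop D k q n := by
  by_cases ht : twoMaxEq k n
  · have hP : Pco k N v n = 0 := if_neg fun h => not_two_of_gap hk h.1 ht
    rw [hP]
    by_cases hb : ∀ j, n j < N
    · exact (hR n hb ht).symm
    · unfold Rop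
      rw [hq3 n hb, map_zero, zero_add]
      symm
      apply Finset.sum_eq_zero
      intro h _
      split_ifs
      · apply hq3
        intro hall
        apply hb
        obtain ⟨i, j, hij, he, hr⟩ := (twoMaxEq_iff hk n).1 ht
        have : n i < N := by
          by_cases hi : i = h
          · have := hall j
            rw [Function.update_of_ne (by rw [← hi]; exact hij.symm)] at this
            omega
          · have := hall i
            rwa [Function.update_of_ne hi] at this
        intro r
        have := hr r
        omega
      · rfl
  · obtain ⟨i, hi⟩ := exists_smax hk ht
    rw [Rop_smax D q (i := i) (hq2 n ht)
      (fun h hne _ => hq2 _ (not_two_of_smax hk (smax_lower hi hne)))]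
    have hpos : 1 ≤ n i := by
      obtain ⟨r, hr⟩ : ∃ r, r ≠ i := by
        have : Nontrivial (Fin (k + 1)) := Fin.nontrivial_iff_two_le.2 (by omega)
        exact exists_ne i
      have := hi r hr
      omega
    rw [if_pos hpos]
    have hmax : ∀ r, Function.update n i (n i - 1) r ≤ Function.update n i (n i - 1) i := by
      intro r
      by_cases h : r = i
      · rw [h]
      · have := hi r h
        simp [h]; omega
    have hu : Function.update (Function.update n i (n i - 1)) i
        (Function.update n i (n i - 1) i + 1) = n := by
      have : n i - 1 + 1 = n i := by omega
      simp [this]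
    have hg := gap_raise hk hmax
    rw [hu] at hg
    have hbd : (∀ j, n j ≤ N) ↔ ∀ j, Function.update n i (n i - 1) j < N := by
      constructor
      · intro h j
        have := hmax j
        have := h i
        simp only [Function.update_self] at *
        omega
      · intro h j
        have := h i
        simp only [Function.update_self] at this
        by_cases hj : j = i
        · subst hj; omega
        · have := hi j hj; omega
    unfold Pco
    split_ifs with hc
    · rw [hq1 _ (hg.1 hc.1) (hbd.1 hc.2), hw _ (hbd.1 hc.2) (hg.1 hc.1) i hmax, hu]
    · symm
      by_cases h1 : gapOne k n
      · exact hq3 _ fun h => hc ⟨h1, hbd.2 h⟩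
      · exact hq2 _ fun h => h1 (hg.2 h)

/-! ### division -/

noncomputable def Lop (D : V →ₗ[C] V) (k : ℕ) : Module.End C ((Fin k →₀ ℕ) →₀ V) :=
  -(∑ a : Fin k, Finsupp.lmapDomain V C (· + Finsupp.single a 1))
    - Finsupp.mapRange.linearMap D

lemma vLam_eq (D : V →ₗ[C] V) (k : ℕ) : vLamZero D k = ⇑(Lop D k) := by
  ext Q : 1
  simp [vLamZero, Lop, LinearMap.sum_apply, Finsupp.lmapDomain_apply]

lemma mapDomain_shift {k : ℕ} (a : Fin k) (Q : (Fin k →₀ ℕ) →₀ V) (s : Fin k →₀ ℕ) :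
    Finsupp.mapDomain (· + Finsupp.single a 1) Q s
      = if 1 ≤ s a then Q (s - Finsupp.single a 1) else 0 := by
  split_ifs with h
  · have hs : s = (s - Finsupp.single a 1) + Finsupp.single a 1 :=
      (tsub_add_cancel_of_le (Finsupp.single_le_iff.2 h)).symm
    conv_lhs => rw [hs]
    exact Finsupp.mapDomain_apply (add_left_injective _) Q _
  · apply Finsupp.mapDomain_of_notMem_range
    rintro ⟨t, rfl⟩
    simp at h

lemma Lop_apply (D : V →ₗ[C] V) (k : ℕ) (Q : (Fin k →₀ ℕ) →₀ V) (s : Fin k →₀ ℕ) :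
    Lop D k Q s = -(∑ a : Fin k, if 1 ≤ s a then Q (s - Finsupp.single a 1) else 0) - D (Q s) := by
  rw [← vLam_eq]
  simp [vLamZero, Finsupp.finsetSum_apply, mapDomain_shift]

/-- the abstract division lemma -/
lemma division {M : Type*} [AddCommGroup M] [Module C M] (L : Module.End C M) (p : ℕ → M)
    (N : ℕ) (hp : ∀ a, N < a → p a = 0) :
    (∑ a ∈ Finset.range (N + 1), (L ^ a) (p a) = 0) ↔
      ∃ q : ℕ → M, (∃ B, ∀ a, B < a → q a = 0) ∧
        (p 0 = - L (q 0)) ∧ ∀ a, p (a + 1) = q a - L (q (a + 1)) := by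
  constructor
  · intro h
    refine ⟨fun a => ∑ b ∈ Finset.range (N + 1), (L ^ b) (p (a + 1 + b)), ⟨N, ?_⟩, ?_, ?_⟩
    · intro a ha
      apply Finset.sum_eq_zero
      intro b _
      rw [hp _ (by omega), map_zero]
    · rw [Finset.sum_range_succ'] at h
      simp only [pow_zero, Module.End.one_apply] at h
      beta_reduce
      rw [eq_neg_iff_add_eq_zero, add_comm, ← h, Finset.sum_range_succ, map_add, map_sum,
        hp (0 + 1 + N) (by omega)]
      simp only [map_zero, add_zero]
      congr 1
      apply Finset.sum_congr rfl
      intro b _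
      rw [pow_succ', Module.End.mul_apply, show 0 + 1 + b = b + 1 by omega]
    · intro a
      beta_reduce
      rw [eq_sub_iff_add_eq, Finset.sum_range_succ, map_add, hp (a + 1 + 1 + N) (by omega)]
      rw [Finset.sum_range_succ']
      simp only [pow_zero, Module.End.one_apply, map_zero, add_zero, map_sum]
      rw [add_comm]
      congr 1
      apply Finset.sum_congr rfl
      intro b _
      rw [pow_succ', Module.End.mul_apply, show a + 1 + 1 + b = a + 1 + (b + 1) by omega]
  · rintro ⟨q, ⟨B, hB⟩, h0, h1⟩
    have tel : ∀ l, ∑ a ∈ Finset.range (l + 1), (L ^ a) (p a) = - (L ^ (l + 1)) (q l) := by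
      intro l
      induction l with
      | zero => simp [h0]
      | succ l ih =>
        rw [Finset.sum_range_succ, ih, h1, map_sub, pow_succ L (l + 1), Module.End.mul_apply]
        abel
    have e := tel (N + B + 1)
    rw [hB _ (by omega), map_zero, neg_zero] at e
    rw [← e]
    apply Finset.sum_subset
    · intro x; simp; omega
    · intro x _ hx
      rw [hp x (by simpa using hx), map_zero]

noncomputable def fsEquiv (k : ℕ) : (Fin k →₀ ℕ) ≃ (Fin k → ℕ) := Finsupp.equivFunOnFinite

/-- the polynomial coefficient of `x_0^a` -/
noncomputable def pPoly (k N : ℕ) (v : (Fin (k + 1) → ℕ) → V) (a : ℕ) : (Fin k →₀ ℕ) →₀ V :=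
  ∑ s : Fin k → Fin (N + 1),
    Finsupp.single (Finsupp.equivFunOnFinite.symm fun j => (s j : ℕ))
      (Pco k N v (Fin.cons a fun j => (s j : ℕ)))

lemma pPoly_apply (k N : ℕ) (v : (Fin (k + 1) → ℕ) → V) (a : ℕ) (t : Fin k →₀ ℕ) :
    pPoly k N v a t = Pco k N v (Fin.cons a t) := by
  classical
  unfold pPoly
  rw [Finsupp.finsetSum_apply]
  by_cases h : ∀ j, t j ≤ N
  · rw [Finset.sum_eq_single (fun j => (⟨t j, by have := h j; omega⟩ : Fin (N + 1)))]
    · rw [Finsupp.single_apply, if_pos]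
      ext j; simp
    · intro s _ hs
      rw [Finsupp.single_apply, if_neg]
      rintro rfl
      apply hs
      ext j; simp
    · simp
  · rw [Finset.sum_eq_zero]
    · rw [Pco, if_neg]
      rintro ⟨_, h2⟩
      exact h fun j => by simpa using h2 j.succ
    · intro s _
      rw [Finsupp.single_apply, if_neg]
      rintro rfl
      apply h
      intro j
      simp
      omega

lemma eqnLHS_eq (D : V →ₗ[C] V) (k N : ℕ) (v : (Fin (k + 1) → ℕ) → V) :
    eqnLHS D k N v = ∑ a ∈ Finset.range (N + 1), ((Lop D k) ^ a) (pPoly k N v a) := by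
  classical
  rw [← Fin.sum_univ_eq_sum_range (fun a => ((Lop D k) ^ a) (pPoly k N v a))]
  unfold eqnLHS
  rw [← (Fin.consEquiv (fun _ : Fin (k + 1) => Fin (N + 1))).sum_comp, Fintype.sum_prod_type]
  apply Finset.sum_congr rfl
  intro a _
  rw [pPoly, map_sum]
  apply Finset.sum_congr rfl
  intro s _
  have hc : (fun j => (((Fin.cons a s : Fin (k + 1) → Fin (N + 1)) j : Fin (N + 1)) : ℕ))
      = Fin.cons (a : ℕ) fun j => (s j : ℕ) := by
    ext j
    refine Fin.cases ?_ (fun j => ?_) j <;> simp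
  have hb : ∀ j, (Fin.cons (a : ℕ) (fun j => (s j : ℕ)) : Fin (k + 1) → ℕ) j ≤ N := by
    intro j
    rw [← hc]
    beta_reduce
    have := ((Fin.cons a s : Fin (k + 1) → Fin (N + 1)) j).2
    omega
  simp only [Fin.consEquiv, Equiv.coe_fn_mk, hc, Fin.cons_zero, Fin.cons_succ]
  rw [vLam_eq, ← Module.End.pow_apply]
  unfold Pco
  split_ifs with h1 h2 h2
  · rfl
  · exact absurd ⟨h1, hb⟩ h2
  · exact absurd h2.1 h1
  · simp

lemma Rop_cons (D : V →ₗ[C] V) (k : ℕ) (q : (Fin (k + 1) → ℕ) → V) (Q : ℕ → (Fin k →₀ ℕ) →₀ V)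
    (hQ : ∀ a (t : Fin k →₀ ℕ), Q a t = q (Fin.cons a t)) (a : ℕ) (t : Fin k →₀ ℕ) :
    Rop D k q (Fin.cons a t) =
      (if 1 ≤ a then Q (a - 1) t else 0) - Lop D k (Q a) t := by
  rw [Lop_apply, Rop, Fin.sum_univ_succ]
  simp only [Fin.cons_zero, Fin.cons_succ, Fin.update_cons_zero, hQ]
  have : ∀ b : Fin k, (Function.update (Fin.cons a t : Fin (k + 1) → ℕ) b.succ (t b - 1))
      = Fin.cons a (t - Finsupp.single b 1 : Fin k →₀ ℕ) := by
    intro b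
    rw [← Fin.cons_update]
    congr 1
    ext j
    by_cases h : j = b
    · subst h; simp
    · simp [h, Finsupp.single_apply, Ne.symm h]
  simp only [this]
  abel

lemma eqn_iff (D : V →ₗ[C] V) (k N : ℕ) (v : (Fin (k + 1) → ℕ) → V) :
    eqnLHS D k N v = 0 ↔ ∃ q : (Fin (k + 1) → ℕ) → V,
      (∃ B, ∀ n, (∃ j, B < n j) → q n = 0) ∧ ∀ n, Pco k N v n = Rop D k q n := by
  have hp : ∀ a, N < a → pPoly k N v a = 0 := by
    intro a ha
    ext t
    rw [pPoly_apply, Pco, if_neg]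
    · rfl
    · rintro ⟨_, h⟩
      have := h 0
      simp at this
      omega
  have hcons : ∀ n : Fin (k + 1) → ℕ, ∃ (a : ℕ) (t : Fin k →₀ ℕ), n = Fin.cons a t := by
    intro n
    exact ⟨n 0, Finsupp.equivFunOnFinite.symm (Fin.tail n), (Fin.cons_self_tail n).symm⟩
  rw [eqnLHS_eq, division (Lop D k) _ N hp]
  constructor
  · rintro ⟨Q, ⟨B, hB⟩, h0, h1⟩
    refine ⟨fun n => Q (n 0) (Finsupp.equivFunOnFinite.symm (Fin.tail n)), ?_, ?_⟩
    · refine ⟨B + ∑ a ∈ Finset.range (B + 1), ∑ s ∈ (Q a).support, ∑ j, s j, ?_⟩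
      rintro n ⟨j, hj⟩
      by_contra hne
      beta_reduce at hne
      by_cases hb : B < n 0
      · rw [hB _ hb] at hne; exact hne rfl
      · obtain ⟨a, t, rfl⟩ := hcons n
        have e1 : Finsupp.equivFunOnFinite.symm (Fin.tail (Fin.cons a t : Fin (k + 1) → ℕ)) = t := by
          ext; simp [Fin.tail]
        rw [e1] at hne
        simp only [Fin.cons_zero] at hne hb
        revert hj
        refine Fin.cases ?_ (fun j => ?_) j
        · simp only [Fin.cons_zero]; omega
        · simp only [Fin.cons_succ]
          have i1 : t j ≤ ∑ j, t j := Finset.single_le_sum (fun _ _ => Nat.zero_le _) (Finset.mem_univ j)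
          have i2 : ∑ j, t j ≤ ∑ s ∈ (Q a).support, ∑ j, s j :=
            Finset.single_le_sum (f := fun s : Fin k →₀ ℕ => ∑ j, s j)
              (fun _ _ => Nat.zero_le _) (Finsupp.mem_support_iff.2 hne)
          have i3 : ∑ s ∈ (Q a).support, ∑ j, s j ≤
              ∑ a ∈ Finset.range (B + 1), ∑ s ∈ (Q a).support, ∑ j, s j :=
            Finset.single_le_sum (f := fun a => ∑ s ∈ (Q a).support, ∑ j, s j)
              (fun _ _ => Nat.zero_le _) (Finset.mem_range.2 (by omega))
          omega
    · intro n
      obtain ⟨a, t, rfl⟩ := hcons n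
      rw [Rop_cons D k _ Q, ← pPoly_apply]
      · rcases a with _ | a
        · simp [h0]
        · simp [h1]
      · intro a t
        simp only [Fin.cons_zero, Fin.tail_cons]
        congr 1
        ext j; simp
  · rintro ⟨q, ⟨B, hB⟩, h⟩
    have hfin : ∀ a, (Function.support fun t : Fin k →₀ ℕ => q (Fin.cons a t)).Finite := by
      intro a
      apply (Set.finite_Iic (Finsupp.equivFunOnFinite.symm fun _ : Fin k => B)).subset
      intro t ht j
      by_contra hlt
      apply ht
      apply hB
      refine ⟨j.succ, ?_⟩
      simpa using hlt
    have hQ : ∀ a (t : Fin k →₀ ℕ), (Finsupp.ofSupportFinite _ (hfin a)) t = q (Fin.cons a t) :=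
      fun a t => rfl
    refine ⟨fun a => Finsupp.ofSupportFinite _ (hfin a), ⟨B, ?_⟩, ?_, ?_⟩
    · intro a ha
      ext t
      exact hB _ ⟨0, by simpa using ha⟩
    · ext t
      rw [pPoly_apply, h, Rop_cons D k q _ hQ]
      simp
    · intro a
      ext t
      rw [pPoly_apply, h, Rop_cons D k q _ hQ]
      simp

lemma eqn_iff' (D : V →ₗ[C] V) {k N : ℕ} (hk : 1 ≤ k) {v : (Fin (k + 1) → ℕ) → V}
    (h : eqnLHS D k N v = 0) : ∃ q : (Fin (k + 1) → ℕ) → V,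
      (∀ n i, SMax n i → q n = 0) ∧ ∀ n, Pco k N v n = Rop D k q n := by
  obtain ⟨q, ⟨B, hB⟩, hq⟩ := (eqn_iff D k N v).1 h
  exact ⟨q, fun n i hi => q_zero D hk hB hq (B + 1) n i hi (by omega), hq⟩

lemma inj_zero (D : V →ₗ[C] V) {k N : ℕ} (hk : 1 ≤ k) {v q : (Fin (k + 1) → ℕ) → V}
    (hD : Function.Injective D)
    (hz : ∀ n i, SMax n i → q n = 0) (hq : ∀ n, Pco k N v n = Rop D k q n) :
    ∀ (d : ℕ) (n : Fin (k + 1) → ℕ), ∑ j, n j = d → q n = 0 := by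
  intro d
  induction d using Nat.strong_induction_on with
  | _ d ih =>
    intro n hn
    by_cases ht : twoMaxEq k n
    · have e := hq n
      rw [Pco, if_neg (fun h => not_two_of_gap hk h.1 ht), Rop, Finset.sum_eq_zero, add_zero] at e
      · exact hD (by rw [← e, map_zero])
      · intro h _
        split_ifs with h1
        · refine ih _ ?_ _ rfl
          rw [← hn]
          apply Finset.sum_lt_sum
          · intro j _
            simp only [Function.update_apply]
            split_ifs with hj
            · subst hj; omega
            · rfl
          · exact ⟨h, Finset.mem_univ _, by simp; omega⟩
        · rfl
    · obtain ⟨i, hi⟩ := exists_smax hk ht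
      exact hz n i hi

end rec

open scoped Classical in
/-- Let `C` be a field of characteristic zero, `V` a `C`-vector space, `∂ = D` a
`C`-linear endomorphism of `V`, and `k, N ≥ 1`.  For elements `v_{m_0,…,m_k} ∈ V`
indexed by the tuples in `{0,…,N}^{k+1}` whose non-increasing rearrangement satisfies
`μ_0 − μ_1 = 1`, the equation
`Σ_m Λ₀^{m_0}(λ_1^{m_1}⋯λ_k^{m_k} ⊗ v_m) = 0` holds in `C[λ_1,…,λ_k] ⊗_C V` iff:
(i) `v` is invariant under transposing a maximal entry with a second-maximal entry; and
(ii) setting `w_n := v_{n + e_i}` for any maximal entry position `i` of a tuple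
`n ∈ {0,…,N−1}^{k+1}` whose two largest entries are equal, one has
`D(w_n) + Σ_h w_{n − e_h} = 0`, the summand being `0` unless `n_h ≥ 1` and the two
largest entries of `n − e_h` are equal.
In particular, if `D` is injective, the equation has only the zero solution. -/
theorem stmt_14 (C V : Type*) [Field C] [CharZero C] [AddCommGroup V] [Module C V]
    (D : V →ₗ[C] V) (k N : ℕ) (hk : 1 ≤ k) (hN : 1 ≤ N)
    (v : (Fin (k + 1) → ℕ) → V) :
    (eqnLHS D k N v = 0 ↔
      ((∀ m : Fin (k + 1) → ℕ, (∀ j, m j ≤ N) → gapOne k m →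
          ∀ i j : Fin (k + 1), (∀ r, m r ≤ m i) → m i = m j + 1 →
            v (fun a => m (Equiv.swap i j a)) = v m) ∧
       ∃ w : (Fin (k + 1) → ℕ) → V,
         (∀ m : Fin (k + 1) → ℕ, (∀ j, m j < N) → twoMaxEq k m →
            ∀ i : Fin (k + 1), (∀ r, m r ≤ m i) →
              w m = v (Function.update m i (m i + 1))) ∧
         (∀ m : Fin (k + 1) → ℕ, (∀ j, m j < N) → twoMaxEq k m →
            D (w m) + ∑ h : Fin (k + 1),
              (if 1 ≤ m h ∧ twoMaxEq k (Function.update m h (m h - 1))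
               then w (Function.update m h (m h - 1)) else 0) = 0))) ∧
    (Function.Injective D → eqnLHS D k N v = 0 →
      ∀ m : Fin (k + 1) → ℕ, (∀ j, m j ≤ N) → gapOne k m → v m = 0) := by
  refine ⟨⟨fun h => ?_, ?_⟩, ?_⟩
  · obtain ⟨q, hz, hq⟩ := eqn_iff' D hk h
    have hraise : ∀ m : Fin (k + 1) → ℕ, (∀ j, m j < N) → twoMaxEq k m →
        ∀ i : Fin (k + 1), (∀ r, m r ≤ m i) → q m = v (Function.update m i (m i + 1)) := by
      intro m hm ht i hi
      rw [q_eq D hz hq m i hi, Pco, if_pos]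
      refine ⟨(gap_raise hk hi).2 ht, fun j => ?_⟩
      have := hm j
      have := hm i
      simp only [Function.update_apply]
      split_ifs <;> omega
    refine ⟨?_, q, hraise, ?_⟩
    · intro m hm hg i j hi hij
      obtain ⟨hs, hmax, ht, hv⟩ := forward D hk hz hq m hm hg i hi
      have hji : j ≠ i := by rintro rfl; omega
      rw [hv, hraise _ _ ht j]
      · congr 1
        ext a
        simp only [Function.update_apply, Equiv.swap_apply_def, if_neg hji]
        split_ifs <;> simp_all
      · intro r
        have := hmax r
        simp [hji] at *
        omega
      · intro r
        have := hmax r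
        have := hm i
        simp only [Function.update_self] at *
        omega
    · intro m hm ht
      have e := hq m
      rw [Pco, if_neg (fun h => not_two_of_gap hk h.1 ht), Rop] at e
      refine Eq.trans ?_ e.symm
      congr 1
      apply Finset.sum_congr rfl
      intro h _
      by_cases h1 : 1 ≤ m h
      · by_cases h2 : twoMaxEq k (Function.update m h (m h - 1))
        · simp [h1, h2]
        · obtain ⟨i, hi⟩ := exists_smax hk h2
          simp [h2, hz _ i hi]
      · simp [h1]
  · rintro ⟨-, w, hw, hw2⟩
    rw [eqn_iff]
    refine ⟨fun n => if twoMaxEq k n ∧ ∀ j, n j < N then w n else 0, ⟨N, ?_⟩, ?_⟩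
    · rintro n ⟨j, hj⟩
      refine if_neg fun h => ?_
      have := h.2 j
      omega
    · apply key D hk hw
      · intro n h1 h2
        exact if_pos ⟨h1, h2⟩
      · intro n h1
        exact if_neg fun h => h1 h.1
      · intro n h1
        exact if_neg fun h => h1 h.2
      · intro m hm ht
        refine Eq.trans ?_ (hw2 m hm ht)
        rw [Rop, if_pos ⟨ht, hm⟩]
        congr 1
        apply Finset.sum_congr rfl
        intro h _
        have hb : ∀ j, Function.update m h (m h - 1) j < N := by
          intro j
          have := hm j
          have := hm h
          simp only [Function.update_apply]
          split_ifs <;> omega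
        by_cases h1 : 1 ≤ m h
        · by_cases h2 : twoMaxEq k (Function.update m h (m h - 1))
          · rw [if_pos h1, if_pos ⟨h2, hb⟩, if_pos ⟨h1, h2⟩]
          · simp [h2]
        · simp [h1]
  · intro hD h m hm hg
    obtain ⟨q, hz, hq⟩ := eqn_iff' D hk h
    obtain ⟨i, hi⟩ := Finite.exists_max m
    obtain ⟨-, -, -, hv⟩ := forward D hk hz hq m hm hg i hi
    rw [hv]
    exact inj_zero D hk hD hz hq _ _ rfl
end

section
/- Fix k ≥ 1. In the commutative ring R = ℤ[λ_1,…,λ_k][t, t^{−1}] of Laurent polynomials in t over ℤ[λ_1,…,λ_k], set λ₀ := −λ_1 − ⋯ − λ_k − t. Then for every tuple (n_0,…,n_k) ∈ ℤ≥0^{k+1} there exists a unique finitely supported family of integers (c^{n_0,…,n_k}_{m_0,…,m_k}), indexed by the tuples (m_0,…,m_k) ∈ ℤ≥0^{k+1} whose non-increasing rearrangement (μ_0,…,μ_k) satisfies μ_0 − μ_1 = 1, such that the identity λ₀^{n_0} λ_1^{n_1} ⋯ λ_k^{n_k} = Σ_{(m_0,…,m_k)} c^{n_0,…,n_k}_{m_0,…,m_k}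 · λ₀^{m_0} λ_1^{m_1} ⋯ λ_k^{m_k} · t^{Σ_i (n_i − m_i)} holds in R. -/
/-- The variable `λ_a` in the ring `R = ℤ[λ_1,…,λ_k][t,t⁻¹]` of Laurent polynomials in
`t` over `ℤ[λ_1,…,λ_k]`. -/
noncomputable def lamL (k : ℕ) (a : Fin k) : LaurentPolynomial (MvPolynomial (Fin k) ℤ) :=
  LaurentPolynomial.C (MvPolynomial.X a)

/-- The element `λ₀ = −λ_1 − ⋯ − λ_k − t` of `R = ℤ[λ_1,…,λ_k][t,t⁻¹]`. -/
noncomputable def lamLZero (k : ℕ) : LaurentPolynomial (MvPolynomial (Fin k) ℤ) :=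
  -(∑ a : Fin k, lamL k a) - LaurentPolynomial.T 1

theorem gapOne_of {k : ℕ} (hk : 1 ≤ k) (m : Fin (k + 1) → ℕ) (i : Fin (k + 1))
    (h1 : ∀ j, j ≠ i → m j < m i) (j : Fin (k + 1)) (h2 : m j + 1 = m i) : gapOne k m := by
  let f : Fin (k + 1) → ℕᵒᵈ := fun j => OrderDual.toDual (m j)
  have hs : Monotone (f ∘ Tuple.sort f) := Tuple.monotone_sort f
  have ha : Antitone (fun j => m (Tuple.sort f j)) := fun a b hab => hs hab
  refine ⟨Tuple.sort f, ha, ?_⟩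
  generalize Tuple.sort f = σ at ha
  have h0 : σ 0 = i := by
    by_contra hne
    have := h1 _ hne
    have h3 := ha (Fin.zero_le (σ.symm i))
    simp at h3
    omega
  have hne : σ 1 ≠ i := by
    intro h
    rw [← h0] at h
    have := σ.injective h
    have h4 := congrArg Fin.val this
    rw [Fin.coe_ofNat_eq_mod, Fin.val_zero, Nat.mod_eq_of_lt (by omega)] at h4
    omega
  have h5 : m j ≤ m (σ 1) := by
    have hj : σ.symm j ≠ 0 := by
      intro h
      have : j = i := by rw [← h0, ← h]; simp
      subst this
      omega
    have h6 : (1 : Fin (k+1)) ≤ σ.symm j := by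
      rw [Fin.le_def, Fin.coe_ofNat_eq_mod, Nat.mod_eq_of_lt (by omega)]
      have : (σ.symm j).val ≠ 0 := fun h => hj (Fin.ext h)
      omega
    have := ha h6
    simpa using this
  have := h1 _ hne
  rw [h0]
  omega

theorem gapOne_elim {k : ℕ} (hk : 1 ≤ k) (m : Fin (k + 1) → ℕ) (h : gapOne k m) :
    ∃ i j, (∀ l, l ≠ i → m l < m i) ∧ j ≠ i ∧ m j + 1 = m i := by
  obtain ⟨σ, ha, h⟩ := h
  have h10 : (1 : Fin (k+1)) ≠ 0 := by
    intro h4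
    have h4 := congrArg Fin.val h4
    rw [Fin.coe_ofNat_eq_mod, Fin.val_zero, Nat.mod_eq_of_lt (by omega)] at h4
    omega
  refine ⟨σ 0, σ 1, ?_, fun h => h10 (σ.injective h), h.symm⟩
  intro l hl
  have hj : σ.symm l ≠ 0 := by
    intro h
    apply hl
    rw [← h]; simp
  have h6 : (1 : Fin (k+1)) ≤ σ.symm l := by
    rw [Fin.le_def, Fin.coe_ofNat_eq_mod, Nat.mod_eq_of_lt (by omega)]
    have : (σ.symm l).val ≠ 0 := fun h => hj (Fin.ext h)
    omega
  have := ha h6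
  simp at this
  omega

def mono15 {k : ℕ} {B : Type*} [CommRing B] (y : Fin (k + 1) → B) (m : Fin (k + 1) → ℕ) : B :=
  ∏ i, y i ^ m i

theorem mono15_add {k : ℕ} {B : Type*} [CommRing B] (y : Fin (k + 1) → B)
    (m : Fin (k + 1) → ℕ) (l : Fin (k + 1)) :
    mono15 y (m + Pi.single l 1) = mono15 y m * y l := by
  unfold mono15
  simp only [Pi.add_apply, pow_add, Finset.prod_mul_distrib]
  congr 1
  rw [Finset.prod_eq_single l]
  · simp
  · intro b _ hb
    simp [hb]
  · simp

theorem stepA {k : ℕ} (hk : 1 ≤ k) {B : Type*} [CommRing B] (y : Fin (k + 1) → B)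
    (hy : ∑ i, y i = -1) (M : ℕ) (i j : Fin (k + 1)) (hij : i ≠ j) (d : ℕ) :
    ∀ m : Fin (k + 1) → ℕ, m i = M → m j = M → (∀ l, m l ≤ M) → ∑ l, (M - m l) = d →
      mono15 y m ∈ Submodule.span ℤ (mono15 y '' {m | gapOne k m}) := by
  induction d using Nat.strong_induction_on with
  | _ d ih =>
  intro m hi hj hM hd
  have h1 : mono15 y m = - ∑ l, mono15 y (m + Pi.single l 1) := by
    simp only [mono15_add]
    rw [← Finset.mul_sum, hy]; ring
  rw [h1]
  refine Submodule.neg_mem _ (Submodule.sum_mem _ fun l _ => ?_)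
  by_cases hl : m l = M
  · apply Submodule.subset_span
    refine ⟨_, ?_, rfl⟩
    obtain ⟨j', hj', hjM⟩ : ∃ j', j' ≠ l ∧ m j' = M := by
      by_cases h : i = l
      · exact ⟨j, fun h' => hij (h.trans h'.symm), hj⟩
      · exact ⟨i, h, hi⟩
    refine gapOne_of hk _ l ?_ j' ?_
    · intro b hb
      have := hM b
      simp [hb]
      omega
    · simp [hj']
      omega
  · have hlt : m l < M := lt_of_le_of_ne (hM l) hl
    have hil : i ≠ l := fun h => hl (h ▸ hi)
    have hjl : j ≠ l := fun h => hl (h ▸ hj)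
    refine ih _ ?_ (m + Pi.single l 1) (by simp [hil, hi]) (by simp [hjl, hj]) ?_ rfl
    · rw [← hd]
      apply Finset.sum_lt_sum
      · intro b _
        simp only [Pi.add_apply]
        omega
      · refine ⟨l, Finset.mem_univ _, ?_⟩
        simp
        omega
    · intro b
      by_cases hb : b = l
      · subst hb; simp; omega
      · simp [hb, hM b]

theorem stepB {k : ℕ} (hk : 1 ≤ k) {B : Type*} [CommRing B] (y : Fin (k + 1) → B)
    (hy : ∑ i, y i = -1) (M : ℕ) :
    ∀ m : Fin (k + 1) → ℕ, (∀ l, m l ≤ M) →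
      mono15 y m ∈ Submodule.span ℤ (mono15 y '' {m | gapOne k m}) := by
  induction M with
  | zero =>
    intro m hm
    refine stepA hk y hy 0 0 (Fin.last k) ?_ _ m (by simpa using hm 0) (by simpa using hm _) hm rfl
    intro h
    have := congrArg Fin.val h
    simp at this
    omega
  | succ M ih =>
    intro m hm
    by_cases h1 : ∃ i, m i = M + 1
    · obtain ⟨i, hi⟩ := h1
      by_cases h2 : ∃ j, j ≠ i ∧ m j = M + 1
      · obtain ⟨j, hji, hj⟩ := h2
        exact stepA hk y hy (M + 1) i j hji.symm _ m hi hj hm rfl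
      · push Not at h2
        have h3 : ∀ j, j ≠ i → m j < m i := by
          intro j hj
          have := hm j
          have := h2 j hj
          omega
        by_cases h4 : ∃ j, m j = M
        · obtain ⟨j, hj⟩ := h4
          exact Submodule.subset_span ⟨m, gapOne_of hk m i h3 j (by omega), rfl⟩
        · push Not at h4
          have h5 : ∀ j, j ≠ i → m j < M := by
            intro j hj
            have := h3 j hj
            have := h4 j
            omega
          have hm' : m = Function.update m i M + Pi.single i 1 := by
            ext b
            by_cases hb : b = i
            · subst hb; simp [hi]
            · simp [hb]
          have h6 : mono15 y m = - mono15 y (Function.update m i M)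
              - ∑ j ∈ Finset.univ.erase i, mono15 y (Function.update m i M + Pi.single j 1) := by
            conv_lhs => rw [hm', mono15_add]
            simp only [mono15_add]
            rw [← Finset.mul_sum]
            have := Finset.add_sum_erase Finset.univ y (Finset.mem_univ i)
            rw [hy] at this
            linear_combination (mono15 y (Function.update m i M)) * this
          rw [h6]
          refine Submodule.sub_mem _ (Submodule.neg_mem _ (ih _ ?_))
            (Submodule.sum_mem _ fun j hj => ih _ ?_)
          · intro b
            by_cases hb : b = i
            · subst hb; simp
            · simpa [hb] using (h5 b hb).le
          · have hji := (Finset.mem_erase.1 hj).1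
            intro b
            by_cases hb : b = i
            · subst hb; simp [hji.symm]
            · have := h5 b hb
              by_cases hbj : b = j
              · subst hbj; simp [hb]; omega
              · simp [hb, hbj]; omega
    · push Not at h1
      refine ih m fun l => ?_
      have := hm l
      have := h1 l
      omega

open MvPolynomial in
theorem coeff15 {k : ℕ} (f : MvPolynomial (Fin (k + 1)) ℤ) (m : Fin (k + 1) →₀ ℕ) :
    coeff m (f * (1 + ∑ i, X i)) =
      coeff m f + ∑ i, if i ∈ m.support then coeff (m - Finsupp.single i 1) f else 0 := by
  classical
  rw [mul_add, mul_one, coeff_add, Finset.mul_sum, coeff_sum]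
  simp only [coeff_mul_X']

open MvPolynomial in
theorem indep15 {k : ℕ} (hk : 1 ≤ k) (f : MvPolynomial (Fin (k + 1)) ℤ)
    (h : ∀ m : Fin (k + 1) →₀ ℕ, coeff m (f * (1 + ∑ i, X i)) ≠ 0 → gapOne k m) : f = 0 := by
  classical
  by_contra hf
  have hne : f.support.Nonempty := by
    rwa [Finset.nonempty_iff_ne_empty, Ne, MvPolynomial.support_eq_empty]
  -- maximal exponent
  let F : (Fin (k + 1) →₀ ℕ) → ℕ := fun m => Finset.univ.sup m
  have hF : ∀ m l, m l ≤ F m := fun m l => Finset.le_sup (f := m) (Finset.mem_univ l)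
  obtain ⟨p, hp, hpmax⟩ := f.support.exists_max_image F hne
  obtain ⟨M, hM⟩ : ∃ M, F p = M := ⟨_, rfl⟩
  have hle : ∀ m, coeff m f ≠ 0 → ∀ l, m l ≤ M := by
    intro m hm l
    exact (hF m l).trans ((hpmax m (mem_support_iff.2 hm)).trans hM.le)
  have hpi : ∃ i, p i = M := by
    obtain ⟨i, _, hi⟩ := Finset.exists_mem_eq_sup Finset.univ Finset.univ_nonempty p
    exact ⟨i, hi.symm.trans hM⟩
  -- gap zero
  have gap0 : ∀ m i, coeff m f ≠ 0 → m i = M → ∃ j, j ≠ i ∧ m j = M := by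
    intro m i hm hi
    have hz : ∀ q : Fin (k + 1) →₀ ℕ, M < q i → coeff q f = 0 := by
      intro q hq
      by_contra hh
      have := hle q hh i
      omega
    have hc : coeff (m + Finsupp.single i 1) (f * (1 + ∑ i, X i)) = coeff m f := by
      rw [coeff15, hz _ (by simp [hi]), zero_add, Finset.sum_eq_single i]
      · simp
      · intro b _ hb
        rw [hz]
        · simp
        · simp [hi, Finsupp.single_apply, hb]
      · simp
    obtain ⟨a, b, ha, hba, hb⟩ := gapOne_elim hk _ (h _ (hc ▸ hm))
    have hai : a = i := by
      by_contra hai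
      have h1 := ha i (Ne.symm hai)
      have := hle m hm a
      simp [Finsupp.single_apply, Ne.symm hai] at h1
      omega
    subst hai
    refine ⟨b, hba, ?_⟩
    simp [Finsupp.single_apply, Ne.symm hba] at hb
    omega
  have hex : (f.support.filter fun m => ∃ i, m i = M).Nonempty :=
    ⟨p, Finset.mem_filter.2 ⟨hp, hpi⟩⟩
  obtain ⟨m, hm, hmin⟩ := Finset.exists_min_image _ (fun m => ∑ i, m i) hex
  obtain ⟨hmf, i, hi⟩ := Finset.mem_filter.1 hm
  rw [mem_support_iff] at hmf
  obtain ⟨j, hji, hj⟩ := gap0 m i hmf hi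
  have hc : coeff m (f * (1 + ∑ i, X i)) = coeff m f := by
    rw [coeff15, Finset.sum_eq_zero, add_zero]
    intro b _
    split_ifs with hb
    · by_contra hh
      have hb' : m b ≠ 0 := Finsupp.mem_support_iff.1 hb
      have h2 : ∃ i, (m - Finsupp.single b 1 : Fin (k + 1) →₀ ℕ) i = M := by
        by_cases hbi : b = i
        · refine ⟨j, ?_⟩
          have : b ≠ j := fun h => hji (h.symm.trans hbi)
          simp [Finsupp.single_apply, this, hj]
        · exact ⟨i, by simp [Finsupp.single_apply, hbi, hi]⟩
      have h3 := hmin _ (Finset.mem_filter.2 ⟨mem_support_iff.2 hh, h2⟩)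
      have h4 : ∑ i, (m - Finsupp.single b 1 : Fin (k + 1) →₀ ℕ) i < ∑ i, m i := by
        apply Finset.sum_lt_sum
        · intro l _
          simp
        · refine ⟨b, Finset.mem_univ _, ?_⟩
          simp
          omega
      omega
    · rfl
  obtain ⟨a, b, ha, hba, hb⟩ := gapOne_elim hk _ (h m (hc ▸ hmf))
  have h5 := hle m hmf a
  by_cases hai : a = i
  · subst hai
    have := ha j hji
    omega
  · have := ha i (Ne.symm hai)
    omega

open MvPolynomial in
theorem ker15 {k : ℕ} (P : MvPolynomial (Fin (k + 1)) ℤ)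
    (h : aeval (Fin.cons (-(∑ a : Fin k, X a) - 1) X : Fin (k + 1) → MvPolynomial (Fin k) ℤ) P = 0) :
    ∃ f, P = f * (1 + ∑ i, X i) := by
  let I : Ideal (MvPolynomial (Fin (k + 1)) ℤ) := Ideal.span {1 + ∑ i, X i}
  have hI : (1 + ∑ i, X i : MvPolynomial (Fin (k + 1)) ℤ) ∈ I :=
    Ideal.subset_span rfl
  have key : (Ideal.Quotient.mkₐ ℤ I) = ((Ideal.Quotient.mkₐ ℤ I).comp
      (rename Fin.succ : MvPolynomial (Fin k) ℤ →ₐ[ℤ] _)).comp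
      (aeval (Fin.cons (-(∑ a : Fin k, X a) - 1) X : Fin (k + 1) → MvPolynomial (Fin k) ℤ)) := by
    apply MvPolynomial.algHom_ext
    intro i
    refine Fin.cases ?_ (fun a => ?_) i
    · simp only [AlgHom.comp_apply, aeval_X, Fin.cons_zero]
      rw [Ideal.Quotient.mkₐ_eq_mk, Ideal.Quotient.eq]
      convert hI using 1
      simp [Fin.sum_univ_succ]
      ring
    · simp
  have h1 : Ideal.Quotient.mkₐ ℤ I P = 0 := by
    rw [key, AlgHom.comp_apply, h, map_zero]
  rw [Ideal.Quotient.mkₐ_eq_mk, Ideal.Quotient.eq_zero_iff_mem, Ideal.mem_span_singleton'] at h1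
  obtain ⟨f, hf⟩ := h1
  exact ⟨f, hf.symm⟩

open MvPolynomial in
theorem linind15 {k : ℕ} (hk : 1 ≤ k) (c : (Fin (k + 1) → ℕ) →₀ ℤ)
    (hc : ∀ m, ¬ gapOne k m → c m = 0)
    (h : (c.sum fun m cm => cm •
      mono15 (Fin.cons (-(∑ a : Fin k, X a) - 1) X : Fin (k + 1) → MvPolynomial (Fin k) ℤ) m) = 0) :
    c = 0 := by
  classical
  let P : MvPolynomial (Fin (k + 1)) ℤ :=
    c.sum fun m cm => monomial (Finsupp.equivFunOnFinite.symm m) cm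
  have hP : ∀ m : Fin (k + 1) →₀ ℕ, coeff m P = c m := by
    intro m
    simp only [P, Finsupp.sum, coeff_sum, coeff_monomial]
    rw [Finset.sum_eq_single (m : Fin (k + 1) → ℕ)]
    · simp
    · intro b _ hb
      rw [if_neg]
      rintro rfl
      exact hb rfl
    · intro hm
      simpa using hm
  obtain ⟨f, hf⟩ := ker15 P (by
    rw [← h]
    simp only [P, Finsupp.sum, map_sum]
    refine Finset.sum_congr rfl fun m _ => ?_
    rw [aeval_monomial, Finsupp.prod_fintype _ _ (by simp)]
    simp [mono15])
  have hf0 : f = 0 := indep15 hk f (by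
    intro m hm
    rw [← hf, hP] at hm
    by_contra hh
    exact hm (hc _ hh))
  rw [hf0, zero_mul] at hf
  ext m
  have := hP (Finsupp.equivFunOnFinite.symm m)
  rw [hf] at this
  simpa using this.symm

noncomputable def y15 (k : ℕ) : Fin (k + 1) → LaurentPolynomial (MvPolynomial (Fin k) ℤ) :=
  fun i => (Fin.cons (lamLZero k) (lamL k) : Fin (k + 1) → _) i * LaurentPolynomial.T (-1)

theorem mono_y15 (k : ℕ) (m : Fin (k + 1) → ℕ) :
    lamLZero k ^ m 0 * (∏ a : Fin k, lamL k a ^ m a.succ)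
      = mono15 (y15 k) m * LaurentPolynomial.T (∑ i, (m i : ℤ)) := by
  have hT : LaurentPolynomial.T (∑ i, (m i : ℤ))
      = ∏ i, (LaurentPolynomial.T 1 : LaurentPolynomial (MvPolynomial (Fin k) ℤ)) ^ m i := by
    rw [Finset.prod_pow_eq_pow_sum, LaurentPolynomial.T_pow]
    simp
  rw [hT, mono15, ← Finset.prod_mul_distrib]
  have : ∀ i, y15 k i ^ m i * (LaurentPolynomial.T 1) ^ m i
      = (Fin.cons (lamLZero k) (lamL k) : Fin (k + 1) → LaurentPolynomial (MvPolynomial (Fin k) ℤ)) i ^ m i := by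
    intro i
    rw [← mul_pow, y15, mul_assoc, ← LaurentPolynomial.T_add]
    simp
  rw [Finset.prod_congr rfl fun i _ => this i, Fin.prod_univ_succ]
  simp

theorem sum_y15 (k : ℕ) : ∑ i, y15 k i = -1 := by
  unfold y15
  rw [← Finset.sum_mul, Fin.sum_univ_succ]
  simp only [Fin.cons_zero, Fin.cons_succ, lamLZero]
  have : (LaurentPolynomial.T 1 : LaurentPolynomial (MvPolynomial (Fin k) ℤ)) * LaurentPolynomial.T (-1) = 1 := by
    rw [← LaurentPolynomial.T_add]; simp
  linear_combination -this

noncomputable def ev15 (k : ℕ) :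
    LaurentPolynomial (MvPolynomial (Fin k) ℤ) →ₐ[MvPolynomial (Fin k) ℤ] MvPolynomial (Fin k) ℤ :=
  AddMonoidAlgebra.lift (MvPolynomial (Fin k) ℤ) (MvPolynomial (Fin k) ℤ) ℤ 1

theorem ev15_T (k : ℕ) (n : ℤ) : ev15 k (LaurentPolynomial.T n) = 1 := by
  unfold ev15 LaurentPolynomial.T
  erw [AddMonoidAlgebra.lift_single]
  simp

theorem ev15_C (k : ℕ) (p : MvPolynomial (Fin k) ℤ) : ev15 k (LaurentPolynomial.C p) = p :=
  (ev15 k).commutes p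

open MvPolynomial in
theorem ev15_mono (k : ℕ) (m : Fin (k + 1) → ℕ) : ev15 k (mono15 (y15 k) m) =
    mono15 (Fin.cons (-(∑ a : Fin k, X a) - 1) X : Fin (k + 1) → MvPolynomial (Fin k) ℤ) m := by
  unfold mono15
  rw [map_prod]
  refine Finset.prod_congr rfl fun i _ => ?_
  rw [map_pow]
  congr 1
  rw [y15, map_mul, ev15_T, mul_one]
  refine Fin.cases ?_ (fun a => ?_) i
  · simp [lamLZero, lamL, ev15_T, ev15_C]
  · simp [lamL, ev15_C]

theorem equiv15 (k : ℕ) (n : Fin (k + 1) → ℕ) (c : (Fin (k + 1) → ℕ) →₀ ℤ) :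
    (lamLZero k ^ n 0 * ∏ a : Fin k, lamL k a ^ n a.succ
        = c.sum fun m cm =>
            cm • (lamLZero k ^ m 0 * (∏ a : Fin k, lamL k a ^ m a.succ)
              * LaurentPolynomial.T (∑ i : Fin (k + 1), ((n i : ℤ) - (m i : ℤ)))))
    ↔ mono15 (y15 k) n = c.sum fun m cm => cm • mono15 (y15 k) m := by
  have h1 : (c.sum fun m cm =>
            cm • (lamLZero k ^ m 0 * (∏ a : Fin k, lamL k a ^ m a.succ)
              * LaurentPolynomial.T (∑ i : Fin (k + 1), ((n i : ℤ) - (m i : ℤ)))))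
      = (c.sum fun m cm => cm • mono15 (y15 k) m) * LaurentPolynomial.T (∑ i, (n i : ℤ)) := by
    rw [Finsupp.sum, Finsupp.sum, Finset.sum_mul]
    refine Finset.sum_congr rfl fun m _ => ?_
    rw [mono_y15, mul_assoc, ← LaurentPolynomial.T_add, smul_mul_assoc, Finset.sum_sub_distrib]
    congr 3
    ring
  rw [h1, mono_y15]
  exact (LaurentPolynomial.isUnit_T _).mul_left_inj

/-- Fix `k ≥ 1` and work in `R = ℤ[λ_1,…,λ_k][t,t⁻¹]` with `λ₀ = −λ_1 − ⋯ − λ_k − t`.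
For every tuple `(n_0,…,n_k) ∈ ℤ≥0^{k+1}` there is a unique finitely supported family of
integers `c`, indexed by the tuples `(m_0,…,m_k)` whose non-increasing rearrangement
satisfies `μ_0 − μ_1 = 1`, such that
`λ₀^{n_0} λ_1^{n_1} ⋯ λ_k^{n_k}
  = Σ_m c_m · λ₀^{m_0} λ_1^{m_1} ⋯ λ_k^{m_k} · t^{Σ_i (n_i − m_i)}` in `R`. -/
theorem stmt_15 (k : ℕ) (hk : 1 ≤ k) (n : Fin (k + 1) → ℕ) :
    ∃! c : (Fin (k + 1) → ℕ) →₀ ℤ,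
      (∀ m, ¬ gapOne k m → c m = 0) ∧
      lamLZero k ^ n 0 * ∏ a : Fin k, lamL k a ^ n a.succ
        = c.sum fun m cm =>
            cm • (lamLZero k ^ m 0 * (∏ a : Fin k, lamL k a ^ m a.succ)
              * LaurentPolynomial.T (∑ i : Fin (k + 1), ((n i : ℤ) - (m i : ℤ)))) := by
  simp only [equiv15]
  have hs := stepB hk (y15 k) (sum_y15 k) (Finset.univ.sup n) n
    (fun l => Finset.le_sup (f := n) (Finset.mem_univ l))
  rw [Finsupp.mem_span_image_iff_linearCombination] at hs
  obtain ⟨c, hc, hcs⟩ := hs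
  have hc' : ∀ m, ¬ gapOne k m → c m = 0 := by
    intro m hm
    by_contra h
    exact hm ((Finsupp.mem_supported ℤ c).1 hc (Finsupp.mem_support_iff.2 h))
  refine ⟨c, ⟨hc', hcs.symm⟩, ?_⟩
  rintro d ⟨hd, hds⟩
  rw [← sub_eq_zero]
  apply linind15 hk
  · intro m hm
    simp [hd m hm, hc' m hm]
  · have h0 : Finsupp.linearCombination ℤ (mono15 (y15 k)) (d - c) = 0 := by
      rw [map_sub, hcs, sub_eq_zero, hds]
      rfl
    have h1 := congrArg (ev15 k) h0
    rw [map_zero, Finsupp.linearCombination_apply, Finsupp.sum, map_sum] at h1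
    rw [Finsupp.sum, ← h1]
    refine Finset.sum_congr rfl fun m _ => ?_
    rw [map_zsmul, ev15_mono]
end

section
/- Fix k ≥ 1. In the commutative polynomial ring ℤ[λ_1,…,λ_k, t], set λ₀ := −λ_1 − ⋯ − λ_k − t. Then for every tuple (n_0,…,n_k) ∈ ℤ≥0^{k+1} there exists a finitely supported family of integers (b^{n_0,…,n_k}_{m_0,…,m_k}), indexed by tuples (m_0,…,m_k) ∈ ℤ≥0^{k+1} whose non-increasing rearrangement (μ_0,…,μ_k) satisfies μ_0 − μ_1 ∈ {0,1}, such that: (1) λ₀^{n_0} λ_1^{n_1} ⋯ λ_k^{n_k} = Σ_{(m_0,…,m_k)} b^{n_0,…,n_k}_{m_0,…,m_k} · λ₀^{m_0} λ_1^{m_1} ⋯ λ_k^{m_k} · t^{Σ_i(n_i − m_i)} in ℤ[λ_1,…,λ_k, t]; (2) for every index α with n_α = ν_0 (where (ν_0,…,ν_k) is the non-increasing rearrangement of (n_0,…,n_k)), the coefficient b^{n_0,…,n_k}_{m_0,…,m_k} is zero unless m_α = μ_0 ≤ ν_0, m_β ≥ n_β for every β ≠ α, and Σ_i(n_i − m_i)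 ≥ 0; in particular, if μ_0 = ν_0 then b^{n_0,…,n_k}_{m_0,…,m_k} is zero unless m_i = n_i for every i = 0,…,k. -/
/-- A tuple `(m_0,…,m_k)` of natural numbers whose non-increasing rearrangement
`(μ_0,…,μ_k)` satisfies `μ_0 − μ_1 ∈ {0,1}`. -/
def gapLeOne (k : ℕ) (m : Fin (k + 1) → ℕ) : Prop :=
  ∃ σ : Equiv.Perm (Fin (k + 1)), Antitone (fun j => m (σ j)) ∧ m (σ 0) ≤ m (σ 1) + 1

/-- The variable `λ_a` in the polynomial ring `ℤ[λ_1,…,λ_k,t]`, realized as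
`MvPolynomial (Option (Fin k)) ℤ` with `t` the variable `none`. -/
noncomputable def lamP (k : ℕ) (a : Fin k) : MvPolynomial (Option (Fin k)) ℤ :=
  MvPolynomial.X (some a)

/-- The variable `t` of `ℤ[λ_1,…,λ_k,t]`. -/
noncomputable def tP (k : ℕ) : MvPolynomial (Option (Fin k)) ℤ :=
  MvPolynomial.X none

/-- The element `λ₀ = −λ_1 − ⋯ − λ_k − t` of `ℤ[λ_1,…,λ_k,t]`. -/
noncomputable def lamPZero (k : ℕ) : MvPolynomial (Option (Fin k)) ℤ :=
  -(∑ a : Fin k, lamP k a) - tP k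

noncomputable def LL (k : ℕ) : Fin (k + 1) → MvPolynomial (Option (Fin k)) ℤ :=
  Fin.cons (lamPZero k) (lamP k)

noncomputable def MM (k : ℕ) (n : Fin (k + 1) → ℕ) : MvPolynomial (Option (Fin k)) ℤ :=
  ∏ i, LL k i ^ n i

lemma MM_eq (k : ℕ) (n : Fin (k + 1) → ℕ) :
    MM k n = lamPZero k ^ n 0 * ∏ a : Fin k, lamP k a ^ n a.succ := by
  simp [MM, LL, Fin.prod_univ_succ]

lemma LL_sum (k : ℕ) : ∑ i, LL k i = - tP k := by
  simp [LL, Fin.sum_univ_succ, lamPZero]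
  ring

lemma MM_add (k : ℕ) (a : Fin (k + 1) → ℕ) (β : Fin (k + 1)) :
    MM k (a + Pi.single β 1) = MM k a * LL k β := by
  simp only [MM, Pi.add_apply, pow_add, Finset.prod_mul_distrib]
  congr 1
  rw [Finset.prod_eq_single β]
  · simp
  · intro i _ hi
    simp [hi]
  · simp

lemma not_gap (k : ℕ) (hk : 1 ≤ k) (n : Fin (k + 1) → ℕ) (h : ¬ gapLeOne k n) :
    ∃ α, ∀ β, β ≠ α → n β + 2 ≤ n α := by
  obtain ⟨k, rfl⟩ : ∃ j, k = j + 1 := ⟨k - 1, by omega⟩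
  have hs := Tuple.monotone_sort (fun i => OrderDual.toDual (n i))
  set σ := Tuple.sort (fun i => OrderDual.toDual (n i)) with hσ
  have ha : Antitone (fun j => n (σ j)) := fun i j hij => hs hij
  have h2 : ¬ n (σ 0) ≤ n (σ 1) + 1 := fun h' => h ⟨σ, ha, h'⟩
  refine ⟨σ 0, fun β hβ => ?_⟩
  obtain ⟨j, rfl⟩ := σ.surjective β
  have hj : j ≠ 0 := fun h => hβ (by rw [h])
  have h1 : (1 : Fin (k + 1 + 1)) ≤ j := Fin.one_le_of_ne_zero hj
  have := ha h1
  simp only at this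
  omega

def SS (k : ℕ) (n : Fin (k + 1) → ℕ) : Set (Fin (k + 1) → ℕ) :=
  {m | gapLeOne k m ∧ (∀ α : Fin (k + 1), (∀ r, n r ≤ n α) →
        ((∀ r, m r ≤ m α) ∧ m α ≤ n α ∧ (∀ β, β ≠ α → n β ≤ m β) ∧
          ∑ i : Fin (k + 1), m i ≤ ∑ i : Fin (k + 1), n i)) ∧
      (Finset.univ.sup m = Finset.univ.sup n → m = n)}

noncomputable def FF (k : ℕ) (n m : Fin (k + 1) → ℕ) : MvPolynomial (Option (Fin k)) ℤ :=
  MM k m * tP k ^ (∑ i : Fin (k + 1), ((n i : ℤ) - (m i : ℤ))).toNat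

lemma span_mul {R : Type*} [CommRing R] (A B : Set R) (c x : R)
    (hx : x ∈ Submodule.span ℤ A) (h : ∀ a ∈ A, c * a ∈ Submodule.span ℤ B) :
    c * x ∈ Submodule.span ℤ B := by
  have : Submodule.span ℤ A ≤ (Submodule.span ℤ B).comap (LinearMap.mulLeft ℤ c) :=
    Submodule.span_le.2 h
  exact this hx

lemma SS_sub (k : ℕ) (n n' : Fin (k + 1) → ℕ) (α : Fin (k + 1))
    (hα : ∀ β, β ≠ α → n β + 2 ≤ n α) (h1 : n' α + 1 = n α)
    (h2 : ∀ β, β ≠ α → n β ≤ n' β) (h3 : ∀ β, β ≠ α → n' β ≤ n β + 1)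
    (hs : ∑ i, n' i ≤ ∑ i, n i) (m) (hm : m ∈ SS k n') :
    m ∈ SS k n ∧ ∑ i, m i ≤ ∑ i, n' i := by
  obtain ⟨hg, hb, -⟩ := hm
  obtain ⟨c1, c2, c3, c4⟩ := hb α (fun r => by
    by_cases hr : r = α
    · rw [hr]
    · have := h3 r hr
      have := hα r hr
      omega)
  refine ⟨⟨hg, ?_, ?_⟩, c4⟩
  · intro γ hγ
    have : γ = α := by
      by_contra hne
      have := hα γ hne
      have := hγ α
      omega
    subst this
    refine ⟨c1, by omega, fun β hβ => (h2 β hβ).trans (c3 β hβ), c4.trans hs⟩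
  · intro he
    exfalso
    have e1 : Finset.univ.sup m ≤ m α := Finset.sup_le fun r _ => c1 r
    have e2 : n α ≤ Finset.univ.sup n := Finset.le_sup (Finset.mem_univ α)
    omega

lemma main_span (k : ℕ) (hk : 1 ≤ k) (N : ℕ) : ∀ (n : Fin (k + 1) → ℕ), (∀ i, n i ≤ N) →
    MM k n ∈ Submodule.span ℤ (FF k n '' SS k n) := by
  induction N with
  | zero =>
    intro n hn
    have hg : gapLeOne k n := ⟨1, fun i j _ => by simp [Nat.le_zero.1 (hn _)], by
      simp [Nat.le_zero.1 (hn _)]⟩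
    refine Submodule.subset_span ⟨n, ⟨hg, fun α h => ⟨h, le_rfl, fun _ _ => le_rfl, le_rfl⟩,
      fun _ => rfl⟩, by simp [FF]⟩
  | succ N ih =>
    intro n hn
    by_cases hg : gapLeOne k n
    · refine Submodule.subset_span ⟨n, ⟨hg, fun α h => ⟨h, le_rfl, fun _ _ => le_rfl, le_rfl⟩,
        fun _ => rfl⟩, by simp [FF]⟩
    obtain ⟨α, hα⟩ := not_gap k hk n hg
    have hpos : 2 ≤ n α := by
      have : Nontrivial (Fin (k + 1)) := Fin.nontrivial_iff_two_le.2 (by omega)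
      obtain ⟨β, hβ⟩ := exists_ne α
      have := hα β hβ
      omega
    obtain ⟨a, ha⟩ : ∃ a, a + Pi.single α 1 = n := ⟨n - Pi.single α 1, by
      ext i
      by_cases hi : i = α
      · subst hi
        simp
        omega
      · simp [hi]⟩
    have haα : a α + 1 = n α := by rw [← ha]; simp
    have haβ : ∀ β, β ≠ α → a β = n β := fun β hβ => by rw [← ha]; simp [hβ]
    have hsum : ∑ i, a i + 1 = ∑ i, n i := by
      rw [← ha]
      simp [Finset.sum_add_distrib]
    have key : MM k n = -(∑ β ∈ Finset.univ.erase α, MM k (a + Pi.single β 1)) - tP k * MM k a := by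
      have := LL_sum k
      rw [← Finset.add_sum_erase _ _ (Finset.mem_univ α)] at this
      simp only [MM_add, ← Finset.mul_sum]
      rw [← ha, MM_add]
      linear_combination MM k a * this
    rw [key]
    refine Submodule.sub_mem _ (Submodule.neg_mem _ (Submodule.sum_mem _ fun β hβ => ?_)) ?_
    · have hβ' : β ≠ α := (Finset.mem_erase.1 hβ).1
      set n' := a + Pi.single β 1 with hn'
      have h1 : n' α + 1 = n α := by simp [hn', hβ'.symm, haα]
      have h2 : ∀ γ, γ ≠ α → n γ ≤ n' γ := fun γ hγ => by simp [hn', haβ γ hγ]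
      have h3 : ∀ γ, γ ≠ α → n' γ ≤ n γ + 1 := fun γ hγ => by
        simp only [hn', Pi.add_apply, haβ γ hγ, Pi.single_apply]
        split_ifs <;> omega
      have hs : ∑ i, n' i = ∑ i, n i := by
        rw [← hsum, hn']
        simp [Finset.sum_add_distrib]
      have := ih n' (fun i => by
        by_cases hi : i = α
        · subst hi
          have := hn i
          omega
        · have := h3 i hi
          have := hα i hi
          have := hn α
          omega)
      refine Submodule.span_mono ?_ this
      rintro _ ⟨m, hm, rfl⟩
      refine ⟨m, (SS_sub k n n' α hα h1 h2 h3 hs.le m hm).1, ?_⟩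
      have hs' : ∑ i, (n' i : ℤ) = ∑ i, (n i : ℤ) := by exact_mod_cast hs
      simp only [FF, Finset.sum_sub_distrib, hs']
    · have := ih a (fun i => by
        by_cases hi : i = α
        · subst hi
          have := hn i
          omega
        · have := haβ i hi
          have := hα i hi
          have := hn α
          omega)
      refine span_mul _ _ _ _ this ?_
      rintro _ ⟨m, hm, rfl⟩
      obtain ⟨hm1, hm2⟩ := SS_sub k n a α hα haα (fun β hβ => (haβ β hβ).ge)
        (fun β hβ => by rw [haβ β hβ]; omega) (by omega) m hm
      refine Submodule.subset_span ⟨m, hm1, ?_⟩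
      have e1 : ∑ i, (a i : ℤ) + 1 = ∑ i, (n i : ℤ) := by exact_mod_cast hsum
      have e2 : ∑ i, (m i : ℤ) ≤ ∑ i, (a i : ℤ) := by exact_mod_cast hm2
      simp only [FF, Finset.sum_sub_distrib]
      have e3 : (∑ i, (n i : ℤ) - ∑ i, (m i : ℤ)).toNat
          = (∑ i, (a i : ℤ) - ∑ i, (m i : ℤ)).toNat + 1 := by omega
      rw [e3, pow_succ]
      ring

/-- Fix `k ≥ 1` and work in `ℤ[λ_1,…,λ_k,t]` with `λ₀ = −λ_1 − ⋯ − λ_k − t`.  For every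
tuple `(n_0,…,n_k) ∈ ℤ≥0^{k+1}` there is a finitely supported family of integers `b`,
indexed by the tuples `(m_0,…,m_k)` whose non-increasing rearrangement satisfies
`μ_0 − μ_1 ∈ {0,1}`, such that:
(1) `λ₀^{n_0} λ_1^{n_1} ⋯ λ_k^{n_k}
  = Σ_m b_m · λ₀^{m_0} λ_1^{m_1} ⋯ λ_k^{m_k} · t^{Σ_i (n_i − m_i)}`;
(2) for every `α` with `n_α = ν_0` (maximal), `b_m = 0` unless `m_α = μ_0 ≤ ν_0`,
`m_β ≥ n_β` for every `β ≠ α`, and `Σ_i (n_i − m_i) ≥ 0`; in particular if `μ_0 = ν_0`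
then `b_m = 0` unless `m = n`. -/
theorem stmt_16 (k : ℕ) (hk : 1 ≤ k) (n : Fin (k + 1) → ℕ) :
    ∃ b : (Fin (k + 1) → ℕ) →₀ ℤ,
      (∀ m, ¬ gapLeOne k m → b m = 0) ∧
      (lamPZero k ^ n 0 * ∏ a : Fin k, lamP k a ^ n a.succ
        = b.sum fun m bm =>
            bm • (lamPZero k ^ m 0 * (∏ a : Fin k, lamP k a ^ m a.succ)
              * tP k ^ (∑ i : Fin (k + 1), ((n i : ℤ) - (m i : ℤ))).toNat)) ∧
      (∀ (m : Fin (k + 1) → ℕ) (α : Fin (k + 1)), (∀ r, n r ≤ n α) → b m ≠ 0 →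
        ((∀ r, m r ≤ m α) ∧ m α ≤ n α ∧ (∀ β, β ≠ α → n β ≤ m β) ∧
          ∑ i : Fin (k + 1), m i ≤ ∑ i : Fin (k + 1), n i)) ∧
      (∀ m : Fin (k + 1) → ℕ, b m ≠ 0 →
        Finset.univ.sup m = Finset.univ.sup n → m = n) := by
  have h := main_span k hk (Finset.univ.sup n) n (fun i => Finset.le_sup (Finset.mem_univ i))
  obtain ⟨b, hb, hb2⟩ := (Finsupp.mem_span_image_iff_linearCombination ℤ).1 h
  have hS : ∀ m, b m ≠ 0 → m ∈ SS k n := fun m hm =>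
    (Finsupp.mem_supported ℤ b).1 hb (Finsupp.mem_support_iff.2 hm)
  refine ⟨b, fun m hm => ?_, ?_, fun m α hα hm => (hS m hm).2.1 α hα, fun m hm => (hS m hm).2.2⟩
  · by_contra h0
    exact hm (hS m h0).1
  · rw [← MM_eq, ← hb2, Finsupp.linearCombination_apply]
    simp only [FF, MM_eq]
end

section
/- Let V be an algebra of differential functions in ℓ < ∞ differential variables over a field of characteristic zero, and let K(∂) = (K_{ij}(∂)) be an ℓ×ℓ matrix differential operator with quasiconstant coefficients. Then: (a) for every k ≥ 0 the map δ_K is a well-defined map Ω̃^k(V) → Ω̃^{k+1}(V) (i.e., δ_K P is again skewsymmetric), and δ_K ∘ δ_K = 0, so (Ω̃•(V), δ_K) is a cohomology complex; (b) δ_K commutes with the action of ∂ on Ω̃•(V) given by (∂P)_{i_1,…,i_k}(λ_1,…,λ_k) = (∂ + λ_1 + ⋯ + λ_k) P_{i_1,…,i_k}(λ_1,…,λ_k) (with ∂ applied to the coefficients); consequently the canonical quotient map Ω̃•(V) → Ω•(V) := Ω̃•(V)/∂Ω̃•(V) is a homomorphism of complexes (δ_K descends to Ω•(V) and squares to zero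 there). -/
/-- The structure of an algebra of differential functions in `ℓ` differential variables
on a commutative ring `V`: a derivation `∂ = pd` and pairwise commuting derivations
`∂/∂u_i^{(n)} = D i n` such that each `f ∈ V` is annihilated by all but finitely many of
the `D i n`, and `[D i n, ∂] = D i (n−1)` (zero for `n = 0`). -/
structure IsAlgDiffFun {V : Type*} [CommRing V] {l : ℕ}
    (pd : V → V) (D : Fin l → ℕ → V → V) : Prop where
  pd_add : ∀ a b : V, pd (a + b) = pd a + pd b
  pd_leibniz : ∀ a b : V, pd (a * b) = pd a * b + a * pd b
  d_add : ∀ (i : Fin l) (n : ℕ) (a b : V), D i n (a + b) = D i n a + D i n b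
  d_leibniz : ∀ (i : Fin l) (n : ℕ) (a b : V), D i n (a * b) = D i n a * b + a * D i n b
  d_comm : ∀ (i : Fin l) (n : ℕ) (j : Fin l) (m : ℕ) (f : V),
    D i n (D j m f) = D j m (D i n f)
  d_fin : ∀ f : V, {p : Fin l × ℕ | D p.1 p.2 f ≠ 0}.Finite
  comm_zero : ∀ (i : Fin l) (f : V), D i 0 (pd f) = pd (D i 0 f)
  comm_succ : ∀ (i : Fin l) (n : ℕ) (f : V),
    D i (n + 1) (pd f) = pd (D i (n + 1) f) + D i n f

/-- Apply a map `f` to all the coefficients of a polynomial. -/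
noncomputable def coeffMap {V : Type*} [CommRing V] {k : ℕ} (f : V → V)
    (Q : MvPolynomial (Fin k) V) : MvPolynomial (Fin k) V :=
  ∑ m ∈ Q.support, (MvPolynomial.monomial m) (f (MvPolynomial.coeff m Q))

/-- The polynomial `(λ_α + ∂)^n K_{j,i'}(λ_α) = Σ_m Σ_{p=0}^n binom(n,p) (∂^p K_{j,i',m})
λ_α^{n−p+m}`, where `K_{j,i'}(∂) = Σ_{m=0}^N K_{j,i',m} ∂^m`. -/
noncomputable def kFactor {V : Type*} [CommRing V] {l : ℕ} (pd : V → V)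
    (N : ℕ) (Kc : Fin l → Fin l → ℕ → V) (n : ℕ) (j i' : Fin l) {k : ℕ} (α : Fin k) :
    MvPolynomial (Fin k) V :=
  ∑ m ∈ Finset.range (N + 1), ∑ p ∈ Finset.range (n + 1),
    (MvPolynomial.monomial (Finsupp.single α (n - p + m)))
      ((n.choose p : V) * pd^[p] (Kc j i' m))

/-- The map `δ_K : Ω̃^k(V) → Ω̃^{k+1}(V)`:
`(δ_K P)_{i_0,…,i_k}(λ_0,…,λ_k) = Σ_α (−1)^α Σ_j Σ_n
(∂ P_{i_0,…,î_α,…,i_k}(λ_0,…,λ̂_α,…,λ_k)/∂u_j^{(n)}) ((λ_α+∂)^n K_{j,i_α}(λ_α))`. -/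
noncomputable def deltaK {V : Type*} [CommRing V] {l : ℕ} (pd : V → V)
    (D : Fin l → ℕ → V → V) (N : ℕ) (Kc : Fin l → Fin l → ℕ → V) {k : ℕ}
    (P : (Fin k → Fin l) → MvPolynomial (Fin k) V) :
    (Fin (k + 1) → Fin l) → MvPolynomial (Fin (k + 1)) V :=
  fun i => ∑ α : Fin (k + 1), (-1 : ℤ) ^ (α : ℕ) •
    ∑ j : Fin l, ∑ᶠ n : ℕ,
      coeffMap (D j n) (MvPolynomial.rename α.succAbove (P (fun b => i (α.succAbove b))))
        * kFactor pd N Kc n j (i α) α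

/-- An array `P ∈ Ω̃^k(V)` is skewsymmetric if it is skewsymmetric with respect to
simultaneous permutations of the variables `λ_1,…,λ_k` and the indices `i_1,…,i_k`. -/
def OmegaSkew {V : Type*} [CommRing V] {l k : ℕ}
    (P : (Fin k → Fin l) → MvPolynomial (Fin k) V) : Prop :=
  ∀ (σ : Equiv.Perm (Fin k)) (i : Fin k → Fin l),
    MvPolynomial.rename σ (P (fun a => i (σ a))) = (Equiv.Perm.sign σ : ℤ) • P i

/-- The action of `∂` on `Ω̃^k(V)`:
`(∂P)_{i_1,…,i_k}(λ_1,…,λ_k) = (∂ + λ_1 + ⋯ + λ_k) P_{i_1,…,i_k}(λ_1,…,λ_k)` with `∂`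
applied to the coefficients. -/
noncomputable def bigD {V : Type*} [CommRing V] {l k : ℕ} (pd : V → V)
    (P : (Fin k → Fin l) → MvPolynomial (Fin k) V) :
    (Fin k → Fin l) → MvPolynomial (Fin k) V :=
  fun i => (∑ a : Fin k, MvPolynomial.X a) * P i + coeffMap pd (P i)

open MvPolynomial in
theorem cm_coeff {V : Type*} [CommRing V] {k : ℕ} {f : V → V} (h0 : f 0 = 0)
    (Q : MvPolynomial (Fin k) V) (m : Fin k →₀ ℕ) :
    coeff m (coeffMap f Q) = f (coeff m Q) := by
  classical
  unfold coeffMap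
  rw [coeff_sum]
  simp only [coeff_monomial]
  rw [Finset.sum_ite_eq' ]
  split_ifs with h
  · rfl
  · rw [notMem_support_iff.1 h, h0]

/-- additive derivation -/
structure IsDer {V : Type*} [CommRing V] (f : V → V) : Prop where
  add : ∀ a b : V, f (a + b) = f a + f b
  leib : ∀ a b : V, f (a * b) = f a * b + a * f b

namespace IsDer
variable {V : Type*} [CommRing V] {k : ℕ} {f : V → V}

theorem zero (h : IsDer f) : f 0 = 0 := by
  have := h.add 0 0
  simpa using this

theorem one (h : IsDer f) : f 1 = 0 := by
  have := h.leib 1 1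
  simpa using this

theorem natCast (h : IsDer f) (n : ℕ) : f (n : V) = 0 := by
  induction n with
  | zero => simpa using h.zero
  | succ n ih => push_cast; rw [h.add, ih, h.one, add_zero]

theorem natCast_mul (h : IsDer f) (n : ℕ) (x : V) : f ((n : V) * x) = n * f x := by
  rw [h.leib, h.natCast]; ring

theorem cm_add (h : IsDer f) (P Q : MvPolynomial (Fin k) V) :
    coeffMap f (P + Q) = coeffMap f P + coeffMap f Q := by
  ext m
  simp only [cm_coeff h.zero, MvPolynomial.coeff_add, h.add]

theorem cm_monomial (h : IsDer f) (m : Fin k →₀ ℕ) (a : V) :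
    coeffMap f (MvPolynomial.monomial m a) = MvPolynomial.monomial m (f a) := by
  classical
  ext m'
  rw [cm_coeff h.zero, MvPolynomial.coeff_monomial, MvPolynomial.coeff_monomial]
  split_ifs
  · rfl
  · exact h.zero

theorem cm_zero (h : IsDer f) : coeffMap f (0 : MvPolynomial (Fin k) V) = 0 := by
  simp [coeffMap]

/-- bundled -/
noncomputable def cmHom (h : IsDer f) : MvPolynomial (Fin k) V →+ MvPolynomial (Fin k) V where
  toFun := coeffMap f
  map_zero' := h.cm_zero
  map_add' := h.cm_add

theorem cm_sum (h : IsDer f) {ι : Type*} (s : Finset ι) (g : ι → MvPolynomial (Fin k) V) :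
    coeffMap f (∑ x ∈ s, g x) = ∑ x ∈ s, coeffMap f (g x) :=
  map_sum h.cmHom g s

theorem cm_mul (h : IsDer f) (P Q : MvPolynomial (Fin k) V) :
    coeffMap f (P * Q) = coeffMap f P * Q + P * coeffMap f Q := by
  induction P using MvPolynomial.induction_on' with
  | add p q hp hq => rw [add_mul, h.cm_add, h.cm_add, hp, hq]; ring
  | monomial u a =>
    induction Q using MvPolynomial.induction_on' with
    | add p q hp hq => rw [mul_add, h.cm_add, h.cm_add, hp, hq]; ring
    | monomial v b =>
      simp only [MvPolynomial.monomial_mul, h.cm_monomial, h.leib, map_add]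

theorem cm_X (h : IsDer f) (a : Fin k) : coeffMap f (MvPolynomial.X a : MvPolynomial (Fin k) V) = 0 := by
  rw [MvPolynomial.X, h.cm_monomial, h.one, map_zero]

theorem cm_rename (h : IsDer f) {k' : ℕ} (σ : Fin k → Fin k') (Q : MvPolynomial (Fin k) V) :
    coeffMap f (MvPolynomial.rename σ Q) = MvPolynomial.rename σ (coeffMap f Q) := by
  induction Q using MvPolynomial.induction_on' with
  | add p q hp hq => rw [map_add, h.cm_add, h.cm_add, map_add, hp, hq]
  | monomial u a => simp only [MvPolynomial.rename_monomial, h.cm_monomial]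

end IsDer

namespace DF
variable {V : Type*} [CommRing V] {l : ℕ} {pd : V → V} {D : Fin l → ℕ → V → V}
  {N : ℕ} {Kc : Fin l → Fin l → ℕ → V} {k : ℕ}

theorem hpd (hV : IsAlgDiffFun pd D) : IsDer pd := ⟨hV.pd_add, hV.pd_leibniz⟩
theorem hD (hV : IsAlgDiffFun pd D) (j : Fin l) (n : ℕ) : IsDer (D j n) :=
  ⟨hV.d_add j n, hV.d_leibniz j n⟩

theorem quasi_pd (hV : IsAlgDiffFun pd D) (c : V) (hc : ∀ j n, D j n c = 0) :
    ∀ j n, D j n (pd c) = 0 := by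
  intro j n
  cases n with
  | zero => rw [hV.comm_zero, hc, (hpd hV).zero]
  | succ n => rw [hV.comm_succ, hc, hc, (hpd hV).zero, add_zero]

theorem quasi_iter (hV : IsAlgDiffFun pd D) (p : ℕ) (c : V) (hc : ∀ j n, D j n c = 0) :
    ∀ j n, D j n (pd^[p] c) = 0 := by
  induction p generalizing c with
  | zero => simpa using hc
  | succ p ih => rw [Function.iterate_succ_apply]; exact ih _ (quasi_pd hV c hc)

theorem cm_kFactor (hV : IsAlgDiffFun pd D)
    (hK : ∀ (i j : Fin l) (m : ℕ) (j' : Fin l) (n : ℕ), D j' n (Kc i j m) = 0)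
    (n : ℕ) (j i' : Fin l) (α : Fin k) (j' : Fin l) (n' : ℕ) :
    coeffMap (D j' n') (kFactor pd N Kc n j i' α) = 0 := by
  unfold kFactor
  rw [(hD hV j' n').cm_sum]
  refine Finset.sum_eq_zero fun m _ => ?_
  rw [(hD hV j' n').cm_sum]
  refine Finset.sum_eq_zero fun p _ => ?_
  rw [(hD hV j' n').cm_monomial, (hD hV j' n').natCast_mul,
    quasi_iter hV p _ (fun a b => hK _ _ _ a b), mul_zero, map_zero]

theorem kFactor_succ (hV : IsAlgDiffFun pd D) (n : ℕ) (j i' : Fin l) (α : Fin k) :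
    kFactor pd N Kc (n + 1) j i' α =
      MvPolynomial.X α * kFactor pd N Kc n j i' α + coeffMap pd (kFactor pd N Kc n j i' α) := by
  have hp := hpd hV
  unfold kFactor
  rw [hp.cm_sum, Finset.mul_sum, ← Finset.sum_add_distrib]
  refine Finset.sum_congr rfl fun m _ => ?_
  rw [hp.cm_sum, Finset.mul_sum]
  generalize Kc j i' m = c
  have hX : ∀ (e : ℕ) (x : V), (MvPolynomial.X α : MvPolynomial (Fin k) V) *
      MvPolynomial.monomial (Finsupp.single α e) x =
      MvPolynomial.monomial (Finsupp.single α (e + 1)) x := by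
    intro e x
    rw [MvPolynomial.X, MvPolynomial.monomial_mul, one_mul, ← Finsupp.single_add, add_comm]
  simp only [hX, hp.cm_monomial, hp.natCast_mul, ← Function.iterate_succ_apply' pd]
  rw [Finset.sum_range_succ' _ (n + 1)]
  simp only [Nat.choose_succ_succ, Nat.cast_add, add_mul, map_add, Finset.sum_add_distrib]
  have e1 : ∑ x ∈ Finset.range (n + 1),
      (MvPolynomial.monomial (Finsupp.single α (n - x + m + 1)))
        ((n.choose x : V) * pd^[x] c) =
      ∑ x ∈ Finset.range (n + 1),
      (MvPolynomial.monomial (Finsupp.single α (n + 1 - (x + 1) + m)))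
        ((n.choose (x + 1) : V) * pd^[x + 1] c) +
      (MvPolynomial.monomial (Finsupp.single α (n + 1 - 0 + m)))
        (((n + 1).choose 0 : V) * pd^[0] c) := by
    rw [Finset.sum_range_succ', Finset.sum_range_succ]
    simp only [Nat.choose_succ_self, Nat.cast_zero, zero_mul, map_zero, add_zero]
    congr 1
    · refine Finset.sum_congr rfl fun x hx => ?_
      have := Finset.mem_range.1 hx
      congr 3
      omega
    · simp only [Nat.choose_zero_right]
      congr 3
      omega
  rw [e1]
  simp only [Nat.add_sub_add_right, Nat.succ_eq_add_one]
  abel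

theorem kFactor_rename {k' : ℕ} (σ : Fin k → Fin k') (n : ℕ) (j i' : Fin l) (α : Fin k) :
    MvPolynomial.rename σ (kFactor pd N Kc n j i' α) = kFactor pd N Kc n j i' (σ α) := by
  simp only [kFactor, map_sum, MvPolynomial.rename_monomial, Finsupp.mapDomain_single]

/-- single-slot operator -/
noncomputable def E (pd : V → V) (D : Fin l → ℕ → V → V) (N : ℕ) (Kc : Fin l → Fin l → ℕ → V)
    (α : Fin k) (i' : Fin l) (Q : MvPolynomial (Fin k) V) : MvPolynomial (Fin k) V :=
  ∑ j : Fin l, ∑ᶠ n : ℕ, coeffMap (D j n) Q * kFactor pd N Kc n j i' α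

/-- bound -/
def Bd (D : Fin l → ℕ → V → V) (Q : MvPolynomial (Fin k) V) (M : ℕ) : Prop :=
  ∀ j n, M ≤ n → coeffMap (D j n) Q = 0

theorem Bd.mono {Q : MvPolynomial (Fin k) V} {M M' : ℕ} (h : Bd D Q M) (hM : M ≤ M') :
    Bd D Q M' := fun j n hn => h j n (hM.trans hn)

theorem exists_Bd (hV : IsAlgDiffFun pd D) (Q : MvPolynomial (Fin k) V) : ∃ M, Bd D Q M := by
  have hfin : (⋃ m ∈ Q.support, Prod.snd '' {p : Fin l × ℕ | D p.1 p.2 (Q.coeff m) ≠ 0}).Finite :=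
    Set.Finite.biUnion (Finset.finite_toSet _) fun m _ => (hV.d_fin _).image _
  obtain ⟨M, hM⟩ := hfin.bddAbove
  refine ⟨M + 1, fun j n hn => ?_⟩
  unfold coeffMap
  refine Finset.sum_eq_zero fun m hm => ?_
  by_cases h : D j n (Q.coeff m) = 0
  · rw [h, map_zero]
  · have : n ≤ M := hM (Set.mem_biUnion (by exact hm) ⟨(j, n), h, rfl⟩)
    omega

theorem E_eq {Q : MvPolynomial (Fin k) V} {M : ℕ} (h : Bd D Q M) (α : Fin k) (i' : Fin l) :
    E pd D N Kc α i' Q = ∑ j : Fin l, ∑ n ∈ Finset.range M,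
      coeffMap (D j n) Q * kFactor pd N Kc n j i' α := by
  unfold E
  refine Finset.sum_congr rfl fun j _ => ?_
  apply finsum_eq_finsetSum_of_support_subset
  intro n hn
  by_contra hc
  apply hn
  have : M ≤ n := by simpa using hc
  simp only [h j n this, zero_mul]

theorem Bd.of_comm (hV : IsAlgDiffFun pd D) {Q : MvPolynomial (Fin k) V} {M : ℕ} (h : Bd D Q M)
    (i : Fin l) (m : ℕ) : Bd D (coeffMap (D i m) Q) M := by
  intro j n hn
  have := h j n hn
  ext e
  rw [cm_coeff (hD hV j n).zero, cm_coeff (hD hV i m).zero, hV.d_comm,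
    ← cm_coeff (hD hV j n).zero, this]
  simp [(hD hV i m).zero]

theorem E_add (hV : IsAlgDiffFun pd D) (α : Fin k) (i' : Fin l) (P Q : MvPolynomial (Fin k) V) :
    E pd D N Kc α i' (P + Q) = E pd D N Kc α i' P + E pd D N Kc α i' Q := by
  obtain ⟨M₁, h₁⟩ := exists_Bd hV P
  obtain ⟨M₂, h₂⟩ := exists_Bd hV Q
  have h₁ := h₁.mono (le_max_left M₁ M₂)
  have h₂ := h₂.mono (le_max_right M₁ M₂)
  have h₃ : Bd D (P + Q) (max M₁ M₂) := fun j n hn => by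
    rw [(hD hV j n).cm_add, h₁ j n hn, h₂ j n hn, add_zero]
  rw [E_eq h₁, E_eq h₂, E_eq h₃]
  simp only [(hD hV _ _).cm_add, add_mul, Finset.sum_add_distrib]

/-- bundled -/
noncomputable def EHom (hV : IsAlgDiffFun pd D) (N : ℕ) (Kc : Fin l → Fin l → ℕ → V)
    (α : Fin k) (i' : Fin l) : MvPolynomial (Fin k) V →+ MvPolynomial (Fin k) V :=
  AddMonoidHom.mk' (E pd D N Kc α i') (E_add hV α i')

theorem E_sum (hV : IsAlgDiffFun pd D) (α : Fin k) (i' : Fin l) {ι : Type*} (s : Finset ι)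
    (g : ι → MvPolynomial (Fin k) V) :
    E pd D N Kc α i' (∑ x ∈ s, g x) = ∑ x ∈ s, E pd D N Kc α i' (g x) :=
  map_sum (EHom hV N Kc α i') g s

theorem E_zsmul (hV : IsAlgDiffFun pd D) (α : Fin k) (i' : Fin l) (z : ℤ)
    (Q : MvPolynomial (Fin k) V) :
    E pd D N Kc α i' (z • Q) = z • E pd D N Kc α i' Q :=
  map_zsmul (EHom hV N Kc α i') z Q

theorem E_mul_const (hV : IsAlgDiffFun pd D) (α : Fin k) (i' : Fin l)
    (Q R : MvPolynomial (Fin k) V) (hR : ∀ j n, coeffMap (D j n) R = 0) :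
    E pd D N Kc α i' (Q * R) = E pd D N Kc α i' Q * R := by
  obtain ⟨M, h⟩ := exists_Bd hV Q
  have h' : Bd D (Q * R) M := fun j n hn => by
    rw [(hD hV j n).cm_mul, h j n hn, hR]; ring
  rw [E_eq h, E_eq h']
  simp only [(hD hV _ _).cm_mul, hR, Finset.sum_mul, mul_zero, add_zero]
  refine Finset.sum_congr rfl fun j _ => Finset.sum_congr rfl fun n _ => ?_
  ring

theorem E_rename (hV : IsAlgDiffFun pd D) {k' : ℕ} (σ : Fin k → Fin k') (α : Fin k) (i' : Fin l)
    (Q : MvPolynomial (Fin k) V) :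
    MvPolynomial.rename σ (E pd D N Kc α i' Q) =
      E pd D N Kc (σ α) i' (MvPolynomial.rename σ Q) := by
  obtain ⟨M, h⟩ := exists_Bd hV Q
  have h' : Bd D (MvPolynomial.rename σ Q) M := fun j n hn => by
    rw [(hD hV j n).cm_rename, h j n hn, map_zero]
  rw [E_eq h, E_eq h']
  simp only [map_sum, map_mul, kFactor_rename, (hD hV _ _).cm_rename]

theorem E_comm (hV : IsAlgDiffFun pd D)
    (hK : ∀ (i j : Fin l) (m : ℕ) (j' : Fin l) (n : ℕ), D j' n (Kc i j m) = 0)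
    (α β : Fin k) (a b : Fin l) (Q : MvPolynomial (Fin k) V) :
    E pd D N Kc α a (E pd D N Kc β b Q) = E pd D N Kc β b (E pd D N Kc α a Q) := by
  obtain ⟨M, h⟩ := exists_Bd hV Q
  have key : ∀ (α β : Fin k) (a b : Fin l), E pd D N Kc α a (E pd D N Kc β b Q) =
      ∑ j : Fin l, ∑ n ∈ Finset.range M, ∑ i : Fin l, ∑ m ∈ Finset.range M,
        coeffMap (D i m) (coeffMap (D j n) Q) * kFactor pd N Kc m i a α *
          kFactor pd N Kc n j b β := by
    intro α β a b
    rw [E_eq h β b, E_sum hV]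
    refine Finset.sum_congr rfl fun j _ => ?_
    rw [E_sum hV]
    refine Finset.sum_congr rfl fun n _ => ?_
    rw [E_mul_const hV _ _ _ _ (fun _ _ => cm_kFactor hV hK _ _ _ _ _ _),
      E_eq (h.of_comm hV j n), Finset.sum_mul]
    simp only [Finset.sum_mul]
  rw [key, key]
  have h2 : ∀ G : Fin l → ℕ → MvPolynomial (Fin k) V, ∑ j : Fin l, ∑ n ∈ Finset.range M, G j n =
      ∑ p ∈ (Finset.univ : Finset (Fin l)) ×ˢ Finset.range M, G p.1 p.2 :=
    fun G => (Finset.sum_product' _ _ _).symm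
  simp only [h2]
  rw [Finset.sum_comm]
  refine Finset.sum_congr rfl fun p _ => Finset.sum_congr rfl fun q _ => ?_
  have hc : coeffMap (D p.1 p.2) (coeffMap (D q.1 q.2) Q) =
      coeffMap (D q.1 q.2) (coeffMap (D p.1 p.2) Q) := by
    ext e
    simp only [cm_coeff (hD hV _ _).zero]
    exact hV.d_comm _ _ _ _ _
  rw [hc]
  ring

theorem E_pd (hV : IsAlgDiffFun pd D) (α : Fin k) (i' : Fin l) (Q : MvPolynomial (Fin k) V) :
    E pd D N Kc α i' (coeffMap pd Q) =
      MvPolynomial.X α * E pd D N Kc α i' Q + coeffMap pd (E pd D N Kc α i' Q) := by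
  obtain ⟨M, h⟩ := exists_Bd hV Q
  have hp := hpd hV
  have c0 : ∀ j, coeffMap (D j 0) (coeffMap pd Q) = coeffMap pd (coeffMap (D j 0) Q) := by
    intro j
    ext e
    simp only [cm_coeff hp.zero, cm_coeff (hD hV j 0).zero, hV.comm_zero]
  have cs : ∀ j n, coeffMap (D j (n + 1)) (coeffMap pd Q) =
      coeffMap pd (coeffMap (D j (n + 1)) Q) + coeffMap (D j n) Q := by
    intro j n
    ext e
    simp only [cm_coeff hp.zero, cm_coeff (hD hV j _).zero, hV.comm_succ, MvPolynomial.coeff_add]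
  have h' : Bd D (coeffMap pd Q) (M + 1) := fun j n hn => by
    obtain ⟨n, rfl⟩ : ∃ n', n = n' + 1 := ⟨n - 1, by omega⟩
    rw [cs, h j n (by omega), h j (n + 1) (by omega), hp.cm_zero, add_zero]
  rw [E_eq h', E_eq h, Finset.mul_sum, hp.cm_sum, ← Finset.sum_add_distrib]
  refine Finset.sum_congr rfl fun j _ => ?_
  rw [Finset.sum_range_succ', hp.cm_sum, Finset.mul_sum, c0]
  simp only [cs, kFactor_succ hV, hp.cm_mul, add_mul, mul_add, Finset.sum_add_distrib]
  have e : ∑ n ∈ Finset.range M, coeffMap pd (coeffMap (D j n) Q) * kFactor pd N Kc n j i' α =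
      ∑ n ∈ Finset.range M, coeffMap pd (coeffMap (D j (n + 1)) Q) * kFactor pd N Kc (n + 1) j i' α
      + coeffMap pd (coeffMap (D j 0) Q) * kFactor pd N Kc 0 j i' α := by
    rw [← Finset.sum_range_succ' (fun n => coeffMap pd (coeffMap (D j n) Q) *
      kFactor pd N Kc n j i' α), Finset.sum_range_succ, h j M le_rfl, hp.cm_zero, zero_mul,
      add_zero]
  rw [e]
  simp only [kFactor_succ hV, mul_add, Finset.sum_add_distrib, mul_left_comm (MvPolynomial.X α)]
  abel

theorem deltaK_eq (P : (Fin k → Fin l) → MvPolynomial (Fin k) V) (i : Fin (k + 1) → Fin l) :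
    deltaK pd D N Kc P i = ∑ α : Fin (k + 1), (-1 : ℤ) ^ (α : ℕ) •
      E pd D N Kc α (i α) (MvPolynomial.rename α.succAbove (P (fun b => i (α.succAbove b)))) := rfl

theorem delta_bigD (hV : IsAlgDiffFun pd D) (P : (Fin k → Fin l) → MvPolynomial (Fin k) V) :
    deltaK pd D N Kc (bigD pd P) = bigD pd (deltaK pd D N Kc P) := by
  funext i
  have hp := hpd hV
  have hz : ∀ (z : ℤ) (Q : MvPolynomial (Fin (k + 1)) V),
      coeffMap pd (z • Q) = z • coeffMap pd Q := fun z Q => map_zsmul hp.cmHom z Q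
  unfold bigD
  simp only [deltaK_eq]
  rw [Finset.mul_sum, hp.cm_sum, ← Finset.sum_add_distrib]
  refine Finset.sum_congr rfl fun α _ => ?_
  rw [hz, mul_smul_comm, ← smul_add]
  congr 1
  rw [map_add, map_mul, map_sum, ← hp.cm_rename, E_add hV, mul_comm, E_mul_const hV, E_pd hV,
    Fin.sum_univ_succAbove _ α]
  · simp only [MvPolynomial.rename_X]
    ring
  · intro j n
    rw [(hD hV j n).cm_sum]
    simp only [MvPolynomial.rename_X, (hD hV j n).cm_X, Finset.sum_const_zero]

theorem delta_sq (hV : IsAlgDiffFun pd D)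
    (hK : ∀ (i j : Fin l) (m : ℕ) (j' : Fin l) (n : ℕ), D j' n (Kc i j m) = 0)
    (P : (Fin k → Fin l) → MvPolynomial (Fin k) V) :
    deltaK pd D N Kc (deltaK pd D N Kc P) = 0 := by
  funext i
  rw [deltaK_eq]
  simp only [deltaK_eq, map_sum, E_sum hV, map_zsmul, E_zsmul hV, Finset.smul_sum, E_rename hV,
    MvPolynomial.rename_rename, smul_smul, ← pow_add, Pi.zero_apply]
  rw [← Finset.sum_product']
  refine Finset.sum_involution (fun x _ => (x.1.succAbove x.2, x.2.predAbove x.1)) ?_ ?_ ?_ ?_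
  · rintro ⟨α, β⟩ -
    have hs : ∀ c, (α.succAbove β).succAbove ((β.predAbove α).succAbove c) =
      α.succAbove (β.succAbove c) := fun c => Fin.succAbove_succAbove_succAbove_predAbove α β c
    have hf : (α.succAbove β).succAbove ∘ (β.predAbove α).succAbove =
      α.succAbove ∘ β.succAbove := funext hs
    simp only [hs, hf, Fin.succAbove_succAbove_predAbove]
    rw [Fin.neg_one_pow_succAbove_add_predAbove, E_comm hV hK, neg_smul, add_neg_cancel]
  · rintro ⟨α, β⟩ - - h
    exact Fin.succAbove_ne α β (congrArg Prod.fst h)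
  · intro _ _; simp
  · rintro ⟨α, β⟩ -
    simp only [Fin.succAbove_succAbove_predAbove, Fin.predAbove_predAbove_succAbove]

theorem exists_perm (σ : Equiv.Perm (Fin (k + 1))) (α : Fin (k + 1)) :
    ∃ τ : Equiv.Perm (Fin k), (∀ b, σ (α.succAbove b) = (σ α).succAbove (τ b)) ∧
      (-1 : ℤ) ^ (α : ℕ) * (Equiv.Perm.sign τ : ℤ) =
        (Equiv.Perm.sign σ : ℤ) * (-1) ^ ((σ α : Fin (k + 1)) : ℕ) := by
  set ρ : Equiv.Perm (Fin (k + 1)) := (σ α).cycleRange * σ * α.cycleRange⁻¹ with hρ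
  obtain ⟨⟨p, τ⟩, hτ⟩ := Equiv.Perm.decomposeFin.symm.surjective ρ
  have hρ0 : ρ 0 = 0 := by
    simp [hρ, Equiv.Perm.inv_def]
  have hp : p = 0 := by
    rw [← hρ0, ← hτ, Equiv.Perm.decomposeFin_symm_apply_zero]
  subst hp
  refine ⟨τ, fun b => ?_, ?_⟩
  · have h1 : ρ b.succ = (τ b).succ := by
      rw [← hτ, Equiv.Perm.decomposeFin_symm_apply_succ]; simp
    have h2 : ρ b.succ = (σ α).cycleRange (σ (α.succAbove b)) := by
      simp [hρ, Equiv.Perm.inv_def, Fin.cycleRange_symm_succ]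
    rw [h2] at h1
    rw [← Fin.cycleRange_symm_succ (σ α) (τ b), ← h1, Equiv.symm_apply_apply]
  · have h1 : Equiv.Perm.sign ρ = Equiv.Perm.sign τ := by
      rw [← hτ, Equiv.Perm.decomposeFin.symm_sign]; simp
    rw [← h1, hρ]
    simp only [map_mul, map_inv, Fin.sign_cycleRange]
    rcases neg_one_pow_eq_or ℤ (α : ℕ) with h | h <;>
    rcases Int.units_eq_one_or (Equiv.Perm.sign σ) with h' | h' <;>
    · simp [h, h', mul_comm]
      try rw [← mul_assoc, h]
      try ring

theorem delta_skew (hV : IsAlgDiffFun pd D)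
    (P : (Fin k → Fin l) → MvPolynomial (Fin k) V) (hP : OmegaSkew P) :
    OmegaSkew (deltaK pd D N Kc P) := by
  intro σ i
  rw [deltaK_eq, deltaK_eq, map_sum, Finset.smul_sum]
  rw [← Equiv.sum_comp σ (fun α => (Equiv.Perm.sign σ : ℤ) • (-1 : ℤ) ^ (α : ℕ) •
      E pd D N Kc α (i α) (MvPolynomial.rename α.succAbove (P (fun b => i (α.succAbove b)))))]
  refine Finset.sum_congr rfl fun α _ => ?_
  obtain ⟨τ, hτ, hs⟩ := exists_perm σ α
  rw [map_zsmul, E_rename hV, MvPolynomial.rename_rename, smul_smul, ← hs, mul_smul]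
  have hf : (σ ∘ α.succAbove) = (σ α).succAbove ∘ τ := funext hτ
  have := hP τ (fun b => i ((σ α).succAbove b))
  simp only [hτ]
  rw [hf, ← MvPolynomial.rename_rename, this, map_zsmul, E_zsmul hV]

end DF

/-- Let `V` be an algebra of differential functions in `ℓ < ∞` differential variables
over a field of characteristic zero, and let `K(∂)` be an `ℓ×ℓ` matrix differential
operator with quasiconstant coefficients.  Then:
(a) `δ_K` maps skewsymmetric arrays to skewsymmetric arrays and `δ_K ∘ δ_K = 0`, so
`(Ω̃^•(V), δ_K)` is a cohomology complex;
(b) `δ_K` commutes with the action of `∂` on `Ω̃^•(V)`, so it descends to the quotient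
complex `Ω^•(V) = Ω̃^•(V)/∂Ω̃^•(V)`. -/
theorem stmt_17 (V : Type*) [CommRing V] [Algebra ℚ V]
    (l : ℕ) (pd : V → V) (D : Fin l → ℕ → V → V)
    (hV : IsAlgDiffFun pd D)
    (N : ℕ) (Kc : Fin l → Fin l → ℕ → V)
    (hKquasi : ∀ (i j : Fin l) (m : ℕ) (j' : Fin l) (n : ℕ), D j' n (Kc i j m) = 0) :
    (∀ (k : ℕ) (P : (Fin k → Fin l) → MvPolynomial (Fin k) V), OmegaSkew P →
      OmegaSkew (deltaK pd D N Kc P) ∧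
      deltaK pd D N Kc (deltaK pd D N Kc P) = 0) ∧
    (∀ (k : ℕ) (P : (Fin k → Fin l) → MvPolynomial (Fin k) V), OmegaSkew P →
      deltaK pd D N Kc (bigD pd P) = bigD pd (deltaK pd D N Kc P)) := by
  exact ⟨fun k P hP => ⟨DF.delta_skew hV P hP, DF.delta_sq hV hKquasi P⟩,
    fun k P _ => DF.delta_bigD hV P⟩
end

section
/- Let V be a normal algebra of differential functions in ℓ < ∞ differential variables over a field of characteristic zero, and assume that the algebra of quasiconstants F ⊆ V is a field. Let K(∂) = (K_{ij}(∂)) be an ℓ×ℓ matrix differential operator of order N with quasiconstant coefficients whose leading coefficient K_N = (K_{ij,N})_{i,j} ∈ Mat_{ℓ×ℓ}(F) is invertible. Then: (a) for every k ≥ 0, ker(δ_K : Ω̃^k(V) → Ω̃^{k+1}(V)) = δ_K(Ω̃^{k−1}(V)) ⊕ Ω̃^k_{0,0} (an internal direct sum of F-subspaces, with the convention Ω̃^{−1}(V) = 0); in other words, the inclusion of the subcomplex (Ω̃•_{0,0}, 0) into (Ω̃•(V), δ_K) induces an isomorphism H^k(Ω̃•(V), δ_K) ≅ Ω̃^k_{0,0};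 (b) for every k ≥ 0, H^k(Ω̃•(V), δ_K) is a vector space over F of dimension binom(Nℓ, k). -/
/-- Membership in the subspace `V_{m,i} = {f : ∂f/∂u_j^{(n)} = 0 whenever (n,j) > (m,i)
in the lexicographic order}`. -/
def memVmi {V : Type*} [CommRing V] {l : ℕ} (D : Fin l → ℕ → V → V) (m : ℕ) (i : Fin l) (f : V) : Prop :=
  ∀ (n : ℕ) (j : Fin l), (m < n ∨ (m = n ∧ i < j)) → D j n f = 0

/-- An algebra of differential functions is normal if `∂/∂u_i^{(m)} (V_{m,i}) = V_{m,i}`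
for all `m, i`. -/
def IsNormalADF {V : Type*} [CommRing V] {l : ℕ} (D : Fin l → ℕ → V → V) : Prop :=
  ∀ (m : ℕ) (i : Fin l) (f : V), memVmi D m i f → ∃ g, memVmi D m i g ∧ D i m g = f

section AbstractPart
open AlternatingMap

variable {F M V : Type*} [CommRing F] [AddCommGroup M] [Module F M] [AddCommGroup V] [Module F V]

/-- coefficientwise action as a linear map into alternating maps -/
def actAlt {k : ℕ} (T : M →ₗ[F] (V →ₗ[F] V)) (c : M [⋀^Fin k]→ₗ[F] V) :
    M →ₗ[F] M [⋀^Fin k]→ₗ[F] V where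
  toFun x := (T x).compAlternatingMap c
  map_add' x y := by ext; simp
  map_smul' r x := by ext; simp

/-- abstract differential -/
def dAlt {k : ℕ} (T : M →ₗ[F] (V →ₗ[F] V)) (c : M [⋀^Fin k]→ₗ[F] V) :
    M [⋀^Fin (k+1)]→ₗ[F] V := alternatizeUncurryFin (actAlt T c)

lemma dAlt_apply {k : ℕ} (T : M →ₗ[F] (V →ₗ[F] V)) (c : M [⋀^Fin k]→ₗ[F] V)
    (a : Fin (k+1) → M) :
    dAlt T c a = ∑ i : Fin (k + 1), (-1 : ℤ) ^ (i : ℕ) • T (a i) (c (fun b => a (i.succAbove b))) := by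
  rw [dAlt, alternatizeUncurryFin_apply]
  rfl

lemma dAlt_zero {k : ℕ} (T : M →ₗ[F] (V →ₗ[F] V)) :
    dAlt T (0 : M [⋀^Fin k]→ₗ[F] V) = 0 := by
  ext a; simp [dAlt_apply]

lemma dAlt_sub {k : ℕ} (T : M →ₗ[F] (V →ₗ[F] V)) (c d : M [⋀^Fin k]→ₗ[F] V) :
    dAlt T (c - d) = dAlt T c - dAlt T d := by
  ext a; simp [dAlt_apply, smul_sub]

lemma dAlt_dAlt {k : ℕ} (T : M →ₗ[F] (V →ₗ[F] V))
    (hT : ∀ x y f, T x (T y f) = T y (T x f)) (c : M [⋀^Fin k]→ₗ[F] V) :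
    dAlt T (dAlt T c) = 0 := by
  let f : M →ₗ[F] M →ₗ[F] M [⋀^Fin k]→ₗ[F] V :=
    { toFun := fun x => actAlt T ((T x).compAlternatingMap c)
      map_add' := fun x y => by ext; simp [actAlt]
      map_smul' := fun r x => by ext; simp [actAlt] }
  have := alternatizeUncurryFin_alternatizeUncurryFinLM_comp_of_symmetric (f := f)
    (fun x y => by ext; simp [f, actAlt, hT])
  rw [← this, dAlt]
  congr 1
  ext x a
  simp only [actAlt, dAlt, f, LinearMap.coe_mk, AddHom.coe_mk, LinearMap.compAlternatingMap_apply,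
    alternatizeUncurryFin_apply, LinearMap.comp_apply, alternatizeUncurryFinLM_apply, map_sum,
    map_zsmul]
  refine Finset.sum_congr rfl fun i _ => ?_
  rw [hT]

lemma curryLeft_dAlt {k : ℕ} (T : M →ₗ[F] (V →ₗ[F] V)) (c : M [⋀^Fin (k+1)]→ₗ[F] V) (x : M) :
    curryLeft (dAlt T c) x = (T x).compAlternatingMap c - dAlt T (curryLeft c x) := by
  ext a
  simp only [curryLeft_apply_apply, dAlt_apply, AlternatingMap.sub_apply,
    LinearMap.compAlternatingMap_apply]
  rw [Fin.sum_univ_succ, sub_eq_add_neg, ← Finset.sum_neg_distrib]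
  congr 1
  · simp
  · refine Finset.sum_congr rfl fun i _ => ?_
    simp only [Fin.val_succ, pow_succ, mul_neg, mul_one, neg_smul, Matrix.cons_val_succ]
    congr 3
    congr 1
    ext b
    refine Fin.cases ?_ (fun b => ?_) b <;> simp

lemma curryLeft_dAlt_zero (T : M →ₗ[F] (V →ₗ[F] V)) (c : M [⋀^Fin 0]→ₗ[F] V) (x : M) :
    curryLeft (dAlt T c) x = (T x).compAlternatingMap c := by
  ext a
  simp [dAlt_apply]
  congr 2
  exact Subsingleton.elim _ _

lemma curryLeft_swap {k : ℕ} (c : M [⋀^Fin (k+2)]→ₗ[F] V) (x y : M) :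
    curryLeft (curryLeft c x) y = - curryLeft (curryLeft c y) x := by
  have h := curryLeft_same c (x + y)
  simp only [map_add, curryLeft_add, LinearMap.add_apply, curryLeft_same, zero_add, add_zero] at h
  exact eq_neg_of_add_eq_zero_right h

lemma ext_curryLeft {k : ℕ} {c d : M [⋀^Fin (k+1)]→ₗ[F] V}
    (h : ∀ x, curryLeft c x = curryLeft d x) : c = d := by
  ext a
  have := congrArg (fun f => f (Matrix.vecTail a)) (h (a 0))
  simp only [curryLeft_apply_apply] at this
  have h' : Matrix.vecCons (a 0) (Matrix.vecTail a) = a := Matrix.cons_head_tail a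
  rwa [h'] at this

end AbstractPart

section FinBasis
open AlternatingMap
variable {F J V : Type*} [CommRing F] [AddCommGroup V] [Module F V]

/-- finitely supported alternating maps -/
def FBd : {k : ℕ} → ((J →₀ F) [⋀^Fin k]→ₗ[F] V) → Prop
  | 0, _ => True
  | _ + 1, c => ∃ S : Finset J, ∀ x ∉ S, curryLeft c (Finsupp.single x 1) = 0

lemma ext_single {k : ℕ} {c d : (J →₀ F) [⋀^Fin (k+1)]→ₗ[F] V}
    (h : ∀ x, curryLeft c (Finsupp.single x 1) = curryLeft d (Finsupp.single x 1)) : c = d := by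
  apply ext_curryLeft
  intro x
  have : curryLeft c = curryLeft d := by
    apply Finsupp.lhom_ext'
    intro a
    apply LinearMap.ext_ring
    exact h a
  rw [this]

lemma curry_lin {k : ℕ} (c : (J →₀ F) [⋀^Fin (k+2)]→ₗ[F] V) (x y : J →₀ F)
    (h : curryLeft c y = 0) : curryLeft (curryLeft c x) y = 0 := by
  rw [curryLeft_swap, h]; simp

lemma FBd.curry {k : ℕ} {c : (J →₀ F) [⋀^Fin (k+1)]→ₗ[F] V} (h : FBd c) (x : J →₀ F) :
    FBd (curryLeft c x) := by
  cases k with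
  | zero => trivial
  | succ k =>
    obtain ⟨S, hS⟩ := h
    exact ⟨S, fun y hy => curry_lin _ _ _ (hS y hy)⟩

lemma FBd.comp {k : ℕ} {c : (J →₀ F) [⋀^Fin k]→ₗ[F] V} (h : FBd c) (g : V →ₗ[F] V) :
    FBd (g.compAlternatingMap c) := by
  cases k with
  | zero => trivial
  | succ k =>
    obtain ⟨S, hS⟩ := h
    exact ⟨S, fun y hy => by rw [curryLeft_compAlternatingMap, hS y hy]; simp⟩

lemma FBd.sub {k : ℕ} {c d : (J →₀ F) [⋀^Fin k]→ₗ[F] V} (h : FBd c) (h' : FBd d) :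
    FBd (c - d) := by
  classical
  cases k with
  | zero => trivial
  | succ k =>
    obtain ⟨S, hS⟩ := h
    obtain ⟨S', hS'⟩ := h'
    refine ⟨S ∪ S', fun y hy => ?_⟩
    rw [Finset.notMem_union] at hy
    have : curryLeft (c - d) (Finsupp.single y 1) = curryLeft c (Finsupp.single y 1)
      - curryLeft d (Finsupp.single y 1) := rfl
    rw [this, hS y hy.1, hS' y hy.2, sub_zero]

lemma FBd.act {k : ℕ} {c : (J →₀ F) [⋀^Fin k]→ₗ[F] V} (h : FBd c)
    (T : (J →₀ F) →ₗ[F] (V →ₗ[F] V))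
    (hfin : ∀ f, ∃ S : Finset J, ∀ x ∉ S, T (Finsupp.single x 1) f = 0) :
    ∃ S : Finset J, ∀ x ∉ S, (T (Finsupp.single x 1)).compAlternatingMap c = 0 := by
  classical
  induction k with
  | zero =>
    obtain ⟨S, hS⟩ := hfin (c ![])
    refine ⟨S, fun x hx => ?_⟩
    ext a
    rw [Subsingleton.elim a ![]]
    simpa using hS x hx
  | succ k ih =>
    obtain ⟨S, hS⟩ := id h
    choose R hR using fun y : J => ih (h.curry (Finsupp.single y 1))
    refine ⟨S.biUnion R, fun x hx => ext_single fun y => ?_⟩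
    rw [curryLeft_compAlternatingMap]
    by_cases hy : y ∈ S
    · rw [hR y x]
      · rfl
      · intro h; exact hx (Finset.mem_biUnion.2 ⟨y, hy, h⟩)
    · rw [hS y hy]; simp

lemma FBd.dAlt {k : ℕ} {c : (J →₀ F) [⋀^Fin k]→ₗ[F] V} (h : FBd c)
    (T : (J →₀ F) →ₗ[F] (V →ₗ[F] V))
    (hfin : ∀ f, ∃ S : Finset J, ∀ x ∉ S, T (Finsupp.single x 1) f = 0) :
    FBd (dAlt T c) := by
  classical
  obtain ⟨S, hS⟩ := h.act T hfin
  cases k with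
  | zero => exact ⟨S, fun x hx => by rw [curryLeft_dAlt_zero, hS x hx]⟩
  | succ k =>
    obtain ⟨S', hS'⟩ := h
    refine ⟨S ∪ S', fun y hy => ?_⟩
    rw [Finset.notMem_union] at hy
    rw [curryLeft_dAlt, hS y hy.1, hS' y hy.2, dAlt_zero, sub_zero]

/-- values of an alternating map lie in a submodule -/
def ValIn {k : ℕ} (W : Submodule F V) (c : (J →₀ F) [⋀^Fin k]→ₗ[F] V) : Prop :=
  ∀ a, c a ∈ W

lemma ValIn.dAlt {k : ℕ} {W : Submodule F V} {c : (J →₀ F) [⋀^Fin k]→ₗ[F] V} (h : ValIn W c)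
    (T : (J →₀ F) →ₗ[F] (V →ₗ[F] V)) (hT : ∀ x, ∀ f ∈ W, T x f ∈ W) : ValIn W (dAlt T c) := by
  intro a
  rw [dAlt_apply]
  exact Submodule.sum_mem _ fun i _ => W.toAddSubgroup.zsmul_mem (hT _ _ (h _)) _

theorem main_lemma {k : ℕ} (T : (J →₀ F) →ₗ[F] (V →ₗ[F] V))
    (hcomm : ∀ x y f, T x (T y f) = T y (T x f))
    (hfin : ∀ f, ∃ S : Finset J, ∀ x ∉ S, T (Finsupp.single x 1) f = 0)
    (W : ℕ → Submodule F V) (v : ℕ → (J →₀ F))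
    (h0 : ∀ t x, ∀ f ∈ W t, T x f ∈ W t)
    (h1 : ∀ t s, t ≤ s → ∀ f ∈ W t, T (v s) f = 0)
    (h2 : ∀ t, ∀ f ∈ W (t+1), T (v t) f = 0 → f ∈ W t)
    (h3 : ∀ t, ∃ I : V →ₗ[F] V, ∀ f ∈ W (t+1), I f ∈ W (t+1) ∧ T (v t) (I f) = f)
    (t : ℕ) : ∀ (c : (J →₀ F) [⋀^Fin (k+1)]→ₗ[F] V) (_ : FBd c) (_ : ValIn (W t) c)
    (_ : ∀ s, t ≤ s → curryLeft c (v s) = 0)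
    (_ : ∀ s, curryLeft (dAlt T c) (v s) = 0),
    ∃ e : (J →₀ F) [⋀^Fin k]→ₗ[F] V, FBd e ∧ ValIn (W 0) (c - dAlt T e) ∧
      ∀ s, curryLeft (c - dAlt T e) (v s) = 0 := by
  have hsub : ∀ {n : ℕ} (c d : (J →₀ F) [⋀^Fin (n+1)]→ₗ[F] V) x,
      curryLeft (c - d) x = curryLeft c x - curryLeft d x := fun _ _ _ => rfl
  induction t with
  | zero =>
    intro c hc hv h4 h5
    refine ⟨0, ?_, ?_, ?_⟩
    · cases k with
      | zero => trivial
      | succ k => exact ⟨∅, fun _ _ => rfl⟩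
    · rw [dAlt_zero, sub_zero]; exact hv
    · intro s; rw [dAlt_zero, sub_zero]; exact h4 s (Nat.zero_le _)
  | succ t ih =>
    intro c hc hv h4 h5
    obtain ⟨I, hI⟩ := h3 t
    set e := I.compAlternatingMap (curryLeft c (v t)) with he
    have hbv : ValIn (W (t+1)) (curryLeft c (v t)) := fun a => hv _
    have hev : ValIn (W (t+1)) e := fun a => (hI _ (hbv a)).1
    have hTe : (T (v t)).compAlternatingMap e = curryLeft c (v t) := by
      ext a; exact (hI _ (hbv a)).2
    have heF : FBd e := (hc.curry _).comp _
    have hTe' : ∀ s, t < s → (T (v s)).compAlternatingMap e = 0 := by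
      intro s hs; ext a; exact h1 (t+1) s hs _ (hev a)
    have hde : ∀ s, curryLeft (dAlt T e) (v s) = (T (v s)).compAlternatingMap e ∨ ¬ (t ≤ s) := by
      intro s
      by_cases hs : t ≤ s
      · left
        clear_value e
        cases k with
        | zero => exact curryLeft_dAlt_zero _ _ _
        | succ k =>
          rw [curryLeft_dAlt]
          have : curryLeft e (v s) = 0 := by
            rw [he, curryLeft_compAlternatingMap]
            rcases hs.eq_or_lt with rfl | hs
            · rw [curryLeft_same]; simp
            · rw [curry_lin _ _ _ (h4 s hs)]; simp
          rw [this, dAlt_zero, sub_zero]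
      · right; exact hs
    set c' := c - dAlt T e with hc'
    have hc'F : FBd c' := hc.sub (heF.dAlt T hfin)
    have hc'v : ValIn (W (t+1)) c' := fun a => (W (t+1)).sub_mem (hv a) (hev.dAlt T (h0 _) a)
    have hdc' : dAlt T c' = dAlt T c := by rw [hc', dAlt_sub, dAlt_dAlt T hcomm, sub_zero]
    have h4' : ∀ s, t ≤ s → curryLeft c' (v s) = 0 := by
      intro s hs
      rw [hc', hsub, (hde s).resolve_right (not_not.2 hs)]
      rcases hs.eq_or_lt with rfl | hs
      · rw [hTe, sub_self]
      · rw [hTe' s hs, h4 s hs, sub_zero]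
    have hc'v' : ValIn (W t) c' := by
      intro a
      refine h2 t _ (hc'v a) ?_
      have := h5 t
      rw [← hdc', curryLeft_dAlt, h4' t le_rfl, dAlt_zero, sub_zero] at this
      exact congrArg (fun f => f a) this
    obtain ⟨e', he'F, he'v, he'⟩ := ih c' hc'F hc'v' h4' (by rw [hdc']; exact h5)
    have hkey : c - dAlt T (e - (0 - e')) = c' - dAlt T e' := by
      rw [dAlt_sub, dAlt_sub, dAlt_zero, hc']; abel
    refine ⟨e - (0 - e'), ?_, ?_, ?_⟩
    · refine heF.sub (FBd.sub ?_ he'F)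
      cases k with
      | zero => trivial
      | succ k => exact ⟨∅, fun _ _ => rfl⟩
    · rw [hkey]; exact he'v
    · rw [hkey]; exact he'

theorem main_lemma_zero (T : (J →₀ F) →ₗ[F] (V →ₗ[F] V))
    (W : ℕ → Submodule F V) (v : ℕ → (J →₀ F))
    (h2 : ∀ t, ∀ f ∈ W (t+1), T (v t) f = 0 → f ∈ W t)
    (c : (J →₀ F) [⋀^Fin 0]→ₗ[F] V) (h5 : ∀ s, curryLeft (dAlt T c) (v s) = 0) (t : ℕ)
    (hv : ValIn (W t) c) : ValIn (W 0) c := by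
  induction t with
  | zero => exact hv
  | succ t ih =>
    refine ih fun a => h2 t _ (hv a) ?_
    have := h5 t
    rw [curryLeft_dAlt_zero] at this
    exact congrArg (fun f => f a) this

lemma FBd.exists_finset {k : ℕ} {c : (J →₀ F) [⋀^Fin k]→ₗ[F] V} (h : FBd c) :
    ∃ S : Finset J, ∀ a : Fin k → J, (∃ i, a i ∉ S) → c (fun i => Finsupp.single (a i) 1) = 0 := by
  cases k with
  | zero => exact ⟨∅, fun a ⟨i, _⟩ => i.elim0⟩
  | succ k =>
    obtain ⟨S, hS⟩ := h
    refine ⟨S, fun a ⟨i, hi⟩ => ?_⟩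
    have h1 := neg_one_pow_smul_map_insertNth c i (Finsupp.single (a i) 1)
      (i.removeNth (fun i => Finsupp.single (a i) (1:F)))
    have h2 := congrArg (fun f => f (i.removeNth (fun i => Finsupp.single (a i) (1:F)))) (hS _ hi)
    simp only [curryLeft_apply_apply] at h2
    rw [h2, Fin.insertNth_self_removeNth i (fun i => Finsupp.single (a i) (1:F))] at h1
    rcases neg_one_pow_eq_or ℤ (i : ℕ) with h | h <;> simpa [h] using h1

lemma FBd.of_finset {k : ℕ} {c : (J →₀ F) [⋀^Fin k]→ₗ[F] V} (S : Finset J)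
    (hS : ∀ a : Fin k → J, (∃ i, a i ∉ S) → c (fun i => Finsupp.single (a i) 1) = 0) : FBd c := by
  cases k with
  | zero => trivial
  | succ k =>
    refine ⟨S, fun x hx => ?_⟩
    refine Module.Basis.ext_alternating (Finsupp.basisSingleOne (R := F) (ι := J)) fun a _ => ?_
    have := hS (Fin.cons x a) ⟨0, by simpa using hx⟩
    simp only [curryLeft_apply_apply, Finsupp.coe_basisSingleOne, AlternatingMap.zero_apply]
    rw [← this]
    congr 1
    ext i
    refine Fin.cases ?_ (fun i => ?_) i <;> simp

/-- skew functions give alternating maps -/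
lemma exists_alt {k : ℕ} (hV2 : ∀ x : V, x + x = 0 → x = 0) (c : (Fin k → J) → V)
    (hc : ∀ (σ : Equiv.Perm (Fin k)) a, c (fun i => a (σ i)) = (Equiv.Perm.sign σ : ℤ) • c a) :
    ∃ w : (J →₀ F) [⋀^Fin k]→ₗ[F] V, ∀ a, w (fun i => Finsupp.single (a i) 1) = c a := by
  classical
  let m0 : MultilinearMap F (fun _ : Fin k => Π₀ _ : J, F) V :=
    MultilinearMap.fromDFinsuppEquiv (fun _ : Fin k => J) F (M := fun _ _ => F)
      (fun p => MultilinearMap.mkPiRing F (Fin k) (c p))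
  let m : MultilinearMap F (fun _ : Fin k => J →₀ F) V :=
    m0.compLinearMap (fun _ => (finsuppLequivDFinsupp F : (J →₀ F) ≃ₗ[F] _).toLinearMap)
  have hm : ∀ a : Fin k → J, m (fun i => Finsupp.single (a i) 1) = c a := by
    intro a
    have : m (fun i => Finsupp.single (a i) 1) = m0 (fun i => DFinsupp.single (a i) 1) := by
      simp only [m, MultilinearMap.compLinearMap_apply]
      congr 1
      ext i : 1
      exact Finsupp.toDFinsupp_single _ _
    rw [this]
    simp only [m0]
    rw [MultilinearMap.fromDFinsuppEquiv_single]
    simp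
  have hperm : ∀ σ : Equiv.Perm (Fin k), m.domDomCongr σ = (Equiv.Perm.sign σ : ℤ) • m := by
    intro σ
    refine Module.Basis.ext_multilinear (fun _ => Finsupp.basisSingleOne (R := F) (ι := J))
      fun a => ?_
    simp only [Finsupp.coe_basisSingleOne, MultilinearMap.domDomCongr_apply,
      _root_.smul_apply]
    exact ((hm (fun i => a (σ i))).trans (hc σ a)).trans (by rw [hm])
  refine ⟨{ m with map_eq_zero_of_eq' := ?_ }, hm⟩
  intro a i j hij hne
  have h := congrArg (fun f => f a) (hperm (Equiv.swap i j))
  simp only [MultilinearMap.domDomCongr_apply, Equiv.Perm.sign_swap hne,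
    Units.val_neg, Units.val_one, neg_smul, one_smul] at h
  have h' : (fun b => a (Equiv.swap i j b)) = a := by
    ext1 b
    by_cases hb : b = i
    · subst hb; simp [hij]
    · by_cases hb' : b = j
      · subst hb'; simp [hij]
      · rw [Equiv.swap_apply_of_ne_of_ne hb hb']
  rw [h'] at h
  have h2 : m a = - m a := h
  exact hV2 (m a) (by nth_rewrite 1 [h2]; simp)

end FinBasis

lemma exists_section {F : Type*} [CommRing F] (hF : IsField F) {V : Type*} [AddCommGroup V]
    [Module F V] (W : Submodule F V) (A : V →ₗ[F] V) (hAW : ∀ f ∈ W, A f ∈ W)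
    (hs : ∀ f ∈ W, ∃ g ∈ W, A g = f) :
    ∃ I : V →ₗ[F] V, ∀ f ∈ W, I f ∈ W ∧ A (I f) = f := by
  let _ := hF.toField
  let A' : W →ₗ[F] W := A.restrict hAW
  have hsurj : LinearMap.range A' = ⊤ := by
    rw [LinearMap.range_eq_top]
    rintro ⟨f, hf⟩
    obtain ⟨g, hg, hgf⟩ := hs f hf
    exact ⟨⟨g, hg⟩, Subtype.ext hgf⟩
  obtain ⟨I, hI⟩ := A'.exists_rightInverse_of_surjective hsurj
  obtain ⟨I', hI'⟩ := (W.subtype ∘ₗ I).exists_extend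
  refine ⟨I', fun f hf => ?_⟩
  have h1 : I' f = I ⟨f, hf⟩ := congrArg (fun g => g ⟨f, hf⟩) hI'
  rw [h1]
  refine ⟨(I ⟨f, hf⟩).2, ?_⟩
  have := congrArg (fun g => ((g ⟨f, hf⟩ : W) : V)) hI
  exact this

lemma rank_alt {F : Type*} [CommRing F] [Nontrivial F] (J : Type) [Fintype J] (k : ℕ) :
    Module.rank F ((J →₀ F) [⋀^Fin k]→ₗ[F] F) = ((Fintype.card J).choose k : Cardinal) := by
  have e := (exteriorPower.alternatingMapLinearEquiv (R := F) (M := (J →₀ F)) (N := F) (n := k))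
  rw [e.rank_eq, ← Module.finrank_eq_rank, Module.finrank_linearMap, exteriorPower.finrank_eq]
  simp
section PolyPart
open MvPolynomial
variable {V : Type*} [CommRing V]

lemma coeff_coeffMap {k : ℕ} (f : V → V) (hf : f 0 = 0) (Q : MvPolynomial (Fin k) V)
    (m : Fin k →₀ ℕ) : coeff m (coeffMap f Q) = f (coeff m Q) := by
  classical
  unfold coeffMap
  rw [coeff_sum]
  simp only [coeff_monomial]
  rw [Finset.sum_ite_eq' Q.support m]
  split_ifs with h
  · rfl
  · rw [notMem_support_iff.1 h, hf]

/-- exponent vectors from functions -/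
noncomputable def ex {k : ℕ} (m : Fin k → ℕ) : Fin k →₀ ℕ := Finsupp.equivFunOnFinite.symm m

lemma ex_apply {k : ℕ} (m : Fin k → ℕ) (i : Fin k) : ex m i = m i := rfl

lemma ex_coe {k : ℕ} (m : Fin k →₀ ℕ) : ex (fun i => m i) = m := by ext; rfl

lemma coeff_key {k : ℕ} (f : V → V) (hf : f 0 = 0) (Q : MvPolynomial (Fin k) V)
    (α : Fin (k+1)) (m : Fin (k+1) → ℕ) (e : ℕ) (r : V) :
    coeff (ex m) (coeffMap f (rename α.succAbove Q) * monomial (Finsupp.single α e) r)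
      = if e = m α then f (coeff (ex fun b => m (α.succAbove b)) Q) * r else 0 := by
  rw [coeff_mul_monomial', coeff_coeffMap f hf]
  by_cases he : e = m α
  · rw [if_pos he, if_pos]
    · congr 2
      have : ex m - Finsupp.single α e
          = Finsupp.mapDomain α.succAbove (ex fun b => m (α.succAbove b)) := by
        ext i
        by_cases hi : i = α
        · subst hi
          rw [Finsupp.mapDomain_of_notMem_range _ _ (by simp)]
          simp [ex_apply, he]
        · obtain ⟨b, rfl⟩ := Fin.exists_succAbove_eq hi
          rw [Finsupp.mapDomain_apply (Fin.succAbove_right_injective)]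
          simp [ex_apply, Fin.succAbove_ne]
      rw [this, coeff_rename_mapDomain _ Fin.succAbove_right_injective]
    · rw [Finsupp.single_le_iff, ex_apply, he]
  · rw [if_neg he]
    split_ifs with h
    · rw [Finsupp.single_le_iff, ex_apply] at h
      rw [coeff_rename_eq_zero, hf, zero_mul]
      intro u hu
      exfalso
      have := congrArg (fun g => g α) hu
      simp only [Finsupp.coe_tsub, Pi.sub_apply, Finsupp.single_eq_same, ex_apply] at this
      rw [Finsupp.mapDomain_of_notMem_range _ _ (by simp)] at this
      omega
    · rfl

/-- coefficients of the polynomial `(λ+∂)^n K` -/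
noncomputable def thetaV {l : ℕ} (pd : V → V) (N : ℕ) (Kc : Fin l → Fin l → ℕ → V)
    (j : Fin l) (n : ℕ) (x : Fin l × ℕ) : V :=
  ∑ m ∈ Finset.range (N + 1), ∑ p ∈ Finset.range (n + 1),
    if n - p + m = x.2 then (n.choose p : V) * pd^[p] (Kc j x.1 m) else 0

lemma coeff_kF {l k : ℕ} (pd : V → V) (N : ℕ) (Kc : Fin l → Fin l → ℕ → V)
    (f : V → V) (hf : f 0 = 0) (Q : MvPolynomial (Fin k) V)
    (α : Fin (k+1)) (m : Fin (k+1) → ℕ) (n : ℕ) (j i' : Fin l) :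
    coeff (ex m) (coeffMap f (rename α.succAbove Q) * kFactor pd N Kc n j i' α)
      = thetaV pd N Kc j n (i', m α) * f (coeff (ex fun b => m (α.succAbove b)) Q) := by
  unfold kFactor thetaV
  simp only [Finset.mul_sum, coeff_sum, Finset.sum_mul]
  refine Finset.sum_congr rfl fun a _ => Finset.sum_congr rfl fun p _ => ?_
  rw [coeff_key f hf]
  split_ifs
  · ring
  · simp

/-- coefficient array -/
noncomputable def toC {l k : ℕ} (P : (Fin k → Fin l) → MvPolynomial (Fin k) V) :
    (Fin k → Fin l × ℕ) → V :=
  fun a => coeff (ex fun i => (a i).2) (P fun i => (a i).1)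

lemma toC_ext {l k : ℕ} {P Q : (Fin k → Fin l) → MvPolynomial (Fin k) V}
    (h : ∀ a, toC P a = toC Q a) : P = Q := by
  ext i m
  have := h (fun b => (i b, m b))
  simpa [toC, ex_coe] using this

lemma toC_pair {l k : ℕ} (P : (Fin k → Fin l) → MvPolynomial (Fin k) V) (i : Fin k → Fin l)
    (m : Fin k →₀ ℕ) : coeff m (P i) = toC P (fun b => (i b, m b)) := by
  simp [toC, ex_coe]

/-- the operator attached to an index -/
noncomputable def T0 {l : ℕ} (pd : V → V) (D : Fin l → ℕ → V → V) (N : ℕ)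
    (Kc : Fin l → Fin l → ℕ → V) (x : Fin l × ℕ) (f : V) : V :=
  ∑ j : Fin l, ∑ᶠ n : ℕ, thetaV pd N Kc j n x * D j n f

lemma d_zero {l : ℕ} {pd : V → V} {D : Fin l → ℕ → V → V} (hV : IsAlgDiffFun pd D)
    (j : Fin l) (n : ℕ) : D j n 0 = 0 := by
  have := hV.d_add j n 0 0
  simpa using this

lemma d_bound {l : ℕ} {pd : V → V} {D : Fin l → ℕ → V → V} (hV : IsAlgDiffFun pd D)
    (f : V) : ∃ B : ℕ, ∀ j n, B ≤ n → D j n f = 0 := by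
  obtain ⟨B, hB⟩ := ((hV.d_fin f).image Prod.snd).bddAbove
  refine ⟨B + 1, fun j n hn => ?_⟩
  by_contra h
  have := hB ⟨(j, n), h, rfl⟩
  simp only at this
  omega

lemma T0_eq {l : ℕ} {pd : V → V} {D : Fin l → ℕ → V → V} (N : ℕ)
    (Kc : Fin l → Fin l → ℕ → V) (x : Fin l × ℕ) (f : V) (B : ℕ)
    (hB : ∀ j n, B ≤ n → D j n f = 0) :
    T0 pd D N Kc x f = ∑ j : Fin l, ∑ n ∈ Finset.range B, thetaV pd N Kc j n x * D j n f := by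
  unfold T0
  refine Finset.sum_congr rfl fun j _ => ?_
  apply finsum_eq_sum_of_support_subset
  intro n hn
  simp only [Finset.coe_range, Set.mem_Iio]
  by_contra h
  exact hn (by simp [hB j n (not_lt.1 h)])

lemma toC_deltaK {l k : ℕ} {pd : V → V} {D : Fin l → ℕ → V → V} (hV : IsAlgDiffFun pd D) (N : ℕ)
    (Kc : Fin l → Fin l → ℕ → V) (P : (Fin k → Fin l) → MvPolynomial (Fin k) V)
    (a : Fin (k+1) → Fin l × ℕ) :
    toC (deltaK pd D N Kc P) a = ∑ α : Fin (k+1), (-1 : ℤ) ^ (α : ℕ) •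
      T0 pd D N Kc (a α) (toC P (fun b => a (α.succAbove b))) := by
  unfold toC deltaK
  rw [coeff_sum]
  refine Finset.sum_congr rfl fun α _ => ?_
  rw [← lcoeff_apply V, map_zsmul, map_sum]
  congr 1
  refine Finset.sum_congr rfl fun j _ => ?_
  rw [← LinearMap.toAddMonoidHom_coe, AddMonoidHom.map_finsum]
  · refine finsum_congr fun n => ?_
    simp only [LinearMap.toAddMonoidHom_coe, lcoeff_apply]
    exact coeff_kF pd N Kc (D j n) (d_zero hV j n) _ α _ n j _
  · set Q := rename α.succAbove (P fun b => (a (α.succAbove b)).1) with hQ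
    choose B hB using fun m => d_bound hV (coeff m Q)
    refine (Finset.range (Q.support.sup B)).finite_toSet.subset fun n hn => ?_
    simp only [Finset.coe_range, Set.mem_Iio]
    by_contra h
    apply hn
    have : coeffMap (D j n) Q = 0 := by
      unfold coeffMap
      refine Finset.sum_eq_zero fun m hm => ?_
      rw [hB m j n ((Finset.le_sup hm).trans (not_lt.1 h)), map_zero]
    show coeffMap (D j n) Q * _ = 0
    rw [this, zero_mul]

lemma skew_toC {l k : ℕ} (P : (Fin k → Fin l) → MvPolynomial (Fin k) V) :
    OmegaSkew P ↔ ∀ (σ : Equiv.Perm (Fin k)) a,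
      toC P (fun i => a (σ i)) = (Equiv.Perm.sign σ : ℤ) • toC P a := by
  have key : ∀ (σ : Equiv.Perm (Fin k)) (i : Fin k → Fin l) (m : Fin k → ℕ),
      coeff (ex m) (rename σ (P fun a => i (σ a)))
        = toC P (fun b => (i (σ b), m (σ b))) := by
    intro σ i m
    have : ex m = Finsupp.mapDomain σ (ex fun b => m (σ b)) := by
      ext b
      obtain ⟨b, rfl⟩ := σ.surjective b
      rw [Finsupp.mapDomain_apply σ.injective]
      rfl
    rw [this, coeff_rename_mapDomain _ σ.injective]
    rfl
  constructor
  · intro h σ a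
    have := congrArg (coeff (ex fun b => (a b).2)) (h σ (fun b => (a b).1))
    have h1 := (key σ (fun b => (a b).1) (fun b => (a b).2)).symm.trans this
    rw [← lcoeff_apply V, map_zsmul] at h1
    exact h1
  · intro h σ i
    ext m
    rw [← ex_coe m, key]
    have := h σ (fun b => (i b, m b))
    rw [this, ← lcoeff_apply V, map_zsmul]
    rfl

lemma exists_poly {l k : ℕ} (c : (Fin k → Fin l × ℕ) → V) (S : Finset (Fin l × ℕ))
    (hS : ∀ a, (∃ i, a i ∉ S) → c a = 0) :
    ∃ P : (Fin k → Fin l) → MvPolynomial (Fin k) V, ∀ a, toC P a = c a := by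
  classical
  let A : Finset (Fin k →₀ ℕ) := (Fintype.piFinset fun _ : Fin k => S.image Prod.snd).image ex
  refine ⟨fun i => ∑ m ∈ A, monomial m (c fun b => (i b, m b)), fun a => ?_⟩
  unfold toC
  rw [coeff_sum]
  simp only [coeff_monomial]
  rw [Finset.sum_ite_eq']
  split_ifs with h
  · rfl
  · symm
    apply hS
    by_contra! h'
    refine h (Finset.mem_image_of_mem _ (Fintype.mem_piFinset.2 fun i => ?_))
    exact Finset.mem_image_of_mem _ (h' i)

end PolyPart
section Concrete
variable {V : Type*} [CommRing V]

lemma pd_mem {l : ℕ} {pd : V → V} {D : Fin l → ℕ → V → V} (hV : IsAlgDiffFun pd D)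
    (Fq : Subring V) (hFq : ∀ x : V, x ∈ Fq ↔ ∀ (j : Fin l) (n : ℕ), D j n x = 0)
    {x : V} (hx : x ∈ Fq) : pd x ∈ Fq := by
  have hpd0 : pd 0 = 0 := by simpa using hV.pd_add 0 0
  rw [hFq] at hx ⊢
  intro j n
  cases n with
  | zero => rw [hV.comm_zero, hx, hpd0]
  | succ n => rw [hV.comm_succ, hx, hx, hpd0, add_zero]

lemma theta_mem {l : ℕ} {pd : V → V} {D : Fin l → ℕ → V → V} (hV : IsAlgDiffFun pd D)
    (Fq : Subring V) (hFq : ∀ x : V, x ∈ Fq ↔ ∀ (j : Fin l) (n : ℕ), D j n x = 0)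
    (N : ℕ) (Kc : Fin l → Fin l → ℕ → V)
    (hKquasi : ∀ (i j : Fin l) (m : ℕ), Kc i j m ∈ Fq) (j : Fin l) (n : ℕ) (x : Fin l × ℕ) :
    thetaV pd N Kc j n x ∈ Fq := by
  have hit : ∀ p y, y ∈ Fq → pd^[p] y ∈ Fq := by
    intro p
    induction p with
    | zero => intro y hy; exact hy
    | succ p ih => intro y hy; exact ih _ (pd_mem hV Fq hFq hy)
  refine Subring.sum_mem _ fun m _ => Subring.sum_mem _ fun p _ => ?_
  split_ifs
  · exact Fq.mul_mem (natCast_mem _ _) (hit _ _ (hKquasi _ _ _))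
  · exact Fq.zero_mem

lemma theta_zero {l : ℕ} (pd : V → V) (N : ℕ) (Kc : Fin l → Fin l → ℕ → V)
    (j : Fin l) (n : ℕ) (x : Fin l × ℕ) (h : n + N < x.2) : thetaV pd N Kc j n x = 0 := by
  refine Finset.sum_eq_zero fun m hm => Finset.sum_eq_zero fun p hp => if_neg ?_
  rw [Finset.mem_range] at hm
  omega

lemma theta_top {l : ℕ} (pd : V → V) (N : ℕ) (Kc : Fin l → Fin l → ℕ → V)
    (j : Fin l) (n : ℕ) (i : Fin l) : thetaV pd N Kc j n (i, n + N) = Kc j i N := by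
  unfold thetaV
  rw [Finset.sum_eq_single N, Finset.sum_eq_single 0]
  · simp
  · intro p hp hp0
    rw [Finset.mem_range] at hp
    exact if_neg (by simp only; omega)
  · intro h; simp at h
  · intro m hm hmN
    rw [Finset.mem_range] at hm
    refine Finset.sum_eq_zero fun p hp => if_neg (by simp only; omega)
  · intro h; simp at h

variable {l : ℕ} {pd : V → V} {D : Fin l → ℕ → V → V} (hV : IsAlgDiffFun pd D)
    {Fq : Subring V} (hFq : ∀ x : V, x ∈ Fq ↔ ∀ (j : Fin l) (n : ℕ), D j n x = 0)
    {N : ℕ} {Kc : Fin l → Fin l → ℕ → V}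
    (hKquasi : ∀ (i j : Fin l) (m : ℕ), Kc i j m ∈ Fq)

/-- `D` as a linear map -/
def Dl (hV : IsAlgDiffFun pd D)
    (hFq : ∀ x : V, x ∈ Fq ↔ ∀ (j : Fin l) (n : ℕ), D j n x = 0) (j : Fin l) (n : ℕ) :
    V →ₗ[Fq] V where
  toFun := D j n
  map_add' := hV.d_add j n
  map_smul' r f := by
    rw [Subring.smul_def, smul_eq_mul, hV.d_leibniz, (hFq r).1 r.2 j n, zero_mul, zero_add]
    rfl

/-- `T0` as a linear map -/
noncomputable def T0l (hV : IsAlgDiffFun pd D)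
    (hFq : ∀ x : V, x ∈ Fq ↔ ∀ (j : Fin l) (n : ℕ), D j n x = 0)
    (N : ℕ) (Kc : Fin l → Fin l → ℕ → V) (x : Fin l × ℕ) : V →ₗ[Fq] V where
  toFun := T0 pd D N Kc x
  map_add' f g := by
    obtain ⟨B, hB⟩ := d_bound hV f
    obtain ⟨C, hC⟩ := d_bound hV g
    have h1 : ∀ j n, max B C ≤ n → D j n f = 0 := fun j n h => hB j n (le_trans (le_max_left _ _) h)
    have h2 : ∀ j n, max B C ≤ n → D j n g = 0 := fun j n h => hC j n (le_trans (le_max_right _ _) h)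
    rw [T0_eq N Kc x f _ h1, T0_eq N Kc x g _ h2, T0_eq N Kc x (f+g) (max B C)
      (fun j n h => by rw [hV.d_add, h1 j n h, h2 j n h, add_zero])]
    simp only [hV.d_add, mul_add, Finset.sum_add_distrib]
  map_smul' r f := by
    obtain ⟨B, hB⟩ := d_bound hV f
    have h1 : ∀ j n, D j n (r • f) = r • D j n f := fun j n => (Dl hV hFq j n).map_smul r f
    rw [T0_eq N Kc x f _ hB, T0_eq N Kc x (r • f) B
      (fun j n h => by rw [h1, hB j n h, smul_zero])]
    simp only [h1, Finset.smul_sum, RingHom.id_apply, mul_smul_comm]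

include hFq hKquasi hV in
lemma D_T0 (x : Fin l × ℕ) (f : V) (i : Fin l) (m : ℕ) :
    D i m (T0 pd D N Kc x f) = T0 pd D N Kc x (D i m f) := by
  obtain ⟨B, hB⟩ := d_bound hV f
  rw [T0_eq N Kc x f _ hB, T0_eq N Kc x (D i m f) B
    (fun j n h => by rw [hV.d_comm, hB j n h, d_zero hV])]
  change Dl hV hFq i m _ = _
  simp only [map_sum]
  refine Finset.sum_congr rfl fun j _ => Finset.sum_congr rfl fun n _ => ?_
  change D i m _ = _
  rw [hV.d_leibniz, (hFq _).1 (theta_mem hV Fq hFq N Kc hKquasi j n x), zero_mul, zero_add,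
    hV.d_comm]

include hFq hKquasi hV in
lemma T0_comm (x y : Fin l × ℕ) (f : V) :
    T0 pd D N Kc x (T0 pd D N Kc y f) = T0 pd D N Kc y (T0 pd D N Kc x f) := by
  obtain ⟨B, hB⟩ := d_bound hV f
  have h0 : T0 pd D N Kc x 0 = 0 := (T0l hV hFq N Kc x).map_zero
  rw [T0_eq N Kc y f _ hB, T0_eq N Kc y (T0 pd D N Kc x f) B
    (fun j n h => by rw [D_T0 hV hFq hKquasi, hB j n h, h0])]
  change T0l hV hFq N Kc x _ = _
  simp only [map_sum]
  refine Finset.sum_congr rfl fun j _ => Finset.sum_congr rfl fun n _ => ?_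
  rw [D_T0 hV hFq hKquasi]
  exact (T0l hV hFq N Kc x).map_smul ⟨_, theta_mem hV Fq hFq N Kc hKquasi j n y⟩ (D j n f)

lemma T0_level (n : ℕ) (i : Fin l) (f : V) (hf : ∀ j n', n < n' → D j n' f = 0) :
    T0 pd D N Kc (i, n + N) f = ∑ j, Kc j i N * D j n f := by
  unfold T0
  refine Finset.sum_congr rfl fun j _ => ?_
  rw [finsum_eq_single _ n, theta_top]
  intro n' hn'
  rcases lt_or_gt_of_ne hn' with h | h
  · rw [theta_zero, zero_mul]
    simpa using h
  · rw [hf j n' h, mul_zero]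

/-- the filtration -/
def Wf (hV : IsAlgDiffFun pd D)
    (hFq : ∀ x : V, x ∈ Fq ↔ ∀ (j : Fin l) (n : ℕ), D j n x = 0) (t : ℕ) : Submodule Fq V where
  carrier := {f | ∀ (j : Fin l) (n : ℕ), t ≤ n * l + j → D j n f = 0}
  zero_mem' := fun j n _ => d_zero hV j n
  add_mem' := fun {f g} hf hg j n h => by rw [hV.d_add, hf j n h, hg j n h, add_zero]
  smul_mem' := fun r f hf j n h => by
    have : D j n (r • f) = r • D j n f := (Dl hV hFq j n).map_smul r f
    rw [this, hf j n h, smul_zero]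

lemma mem_Wf (t : ℕ) (f : V) :
    f ∈ Wf hV hFq t ↔ ∀ (j : Fin l) (n : ℕ), t ≤ n * l + j → D j n f = 0 := Iff.rfl

lemma lex_iff (hl : 0 < l) (t n : ℕ) (j : Fin l) :
    t + 1 ≤ n * l + j ↔ (t / l < n ∨ (t / l = n ∧ t % l < j)) := by
  have h1 := Nat.div_add_mod' t l
  have h2 := Nat.mod_lt t hl
  have h3 := j.2
  rcases lt_trichotomy (t / l) n with h | h | h
  · have := Nat.mul_le_mul_right l (Nat.succ_le_of_lt h)
    rw [Nat.succ_mul] at this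
    constructor
    · intro _; left; exact h
    · intro _; omega
  · subst h
    constructor
    · intro _; right; exact ⟨rfl, by omega⟩
    · rintro (h | ⟨_, h⟩) <;> omega
  · have := Nat.mul_le_mul_right l (Nat.succ_le_of_lt h)
    rw [Nat.succ_mul] at this
    constructor
    · intro _; omega
    · rintro (h | ⟨h, _⟩) <;> omega

/-- abstract package -/
structure Pkg (pd : V → V) (D : Fin l → ℕ → V → V) (N : ℕ) (Kc : Fin l → Fin l → ℕ → V)
    (Fq : Subring V) (T : ((Fin l × ℕ) →₀ Fq) →ₗ[Fq] (V →ₗ[Fq] V)) (W : ℕ → Submodule Fq V)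
    (v : ℕ → ((Fin l × ℕ) →₀ Fq)) : Prop where
  single : ∀ x f, T (Finsupp.single x 1) f = T0 pd D N Kc x f
  comm : ∀ x y f, T x (T y f) = T y (T x f)
  fin : ∀ f, ∃ S : Finset (Fin l × ℕ), ∀ x ∉ S, T (Finsupp.single x 1) f = 0
  h0 : ∀ t x, ∀ f ∈ W t, T x f ∈ W t
  h1 : ∀ t s, t ≤ s → ∀ f ∈ W t, T (v s) f = 0
  h2 : ∀ t, ∀ f ∈ W (t+1), T (v t) f = 0 → f ∈ W t
  h3 : ∀ t, ∃ I : V →ₗ[Fq] V, ∀ f ∈ W (t+1), I f ∈ W (t+1) ∧ T (v t) (I f) = f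
  w0 : ∀ f, f ∈ W 0 ↔ f ∈ Fq
  wtop : ∀ f, ∃ t, f ∈ W t
  wmono : Monotone W
  vspan : ∀ i n, N ≤ n → Finsupp.single (i, n) 1 ∈ Submodule.span Fq (Set.range v)
  vsup : ∀ s, v s ∈ Submodule.span Fq (Set.range fun i => Finsupp.single (i, s / l + N) 1)

include hV hFq hKquasi in
theorem exists_pkg [Nontrivial V] (hl : 0 < l) (hnorm : IsNormalADF D)
    (hFfield : ∀ f ∈ Fq, f ≠ 0 → ∃ g ∈ Fq, f * g = 1)
    (hKinv : IsUnit (Matrix.of fun i j : Fin l => Kc i j N)) :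
    ∃ T W v, Pkg pd D N Kc Fq T W v := by
  classical
  have hField : IsField Fq := by
    refine ⟨⟨0, 1, zero_ne_one⟩, mul_comm, ?_⟩
    rintro ⟨a, ha⟩ h
    obtain ⟨g, hg, hag⟩ := hFfield a ha (fun h' => h (Subtype.ext h'))
    exact ⟨⟨g, hg⟩, Subtype.ext hag⟩
  let KF : Matrix (Fin l) (Fin l) Fq := Matrix.of fun i j => ⟨Kc i j N, hKquasi i j N⟩
  have hKF : IsUnit KF.det := by
    have h1 : (Matrix.of fun i j : Fin l => Kc i j N) = Fq.subtype.mapMatrix KF := by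
      ext i j; rfl
    rw [h1, Matrix.isUnit_iff_isUnit_det, ← RingHom.map_det] at hKinv
    have h2 : KF.det ≠ 0 := by
      intro h
      rw [h, map_zero] at hKinv
      exact not_isUnit_zero hKinv
    obtain ⟨b, hb⟩ := hField.mul_inv_cancel h2
    exact IsUnit.of_mul_eq_one _ hb
  let A := KF⁻¹
  have hKA : KF * A = 1 := Matrix.mul_nonsing_inv _ hKF
  have hAK : A * KF = 1 := Matrix.nonsing_inv_mul _ hKF
  let T : ((Fin l × ℕ) →₀ Fq) →ₗ[Fq] (V →ₗ[Fq] V) :=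
    Finsupp.linearCombination Fq (T0l hV hFq N Kc)
  have hsingle : ∀ x f, T (Finsupp.single x 1) f = T0 pd D N Kc x f := by
    intro x f
    simp only [T, Finsupp.linearCombination_single, one_smul]
    rfl
  let js : ℕ → Fin l := fun s => ⟨s % l, Nat.mod_lt s hl⟩
  let v0 : ℕ → Fin l → ((Fin l × ℕ) →₀ Fq) := fun n j => ∑ i, A i j • Finsupp.single (i, n + N) 1
  let v : ℕ → ((Fin l × ℕ) →₀ Fq) := fun s => v0 (s / l) (js s)
  have hs : ∀ s, s / l * l + (js s : ℕ) = s := fun s => Nat.div_add_mod' s l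
  have hv0 : ∀ n j f, (∀ j n', n < n' → D j n' f = 0) → T (v0 n j) f = D j n f := by
    intro n j f hf
    simp only [v0, map_sum, map_smul, LinearMap.sum_apply, LinearMap.smul_apply, hsingle,
      T0_level n _ f hf]
    simp only [Finset.smul_sum]
    rw [Finset.sum_comm]
    have : ∀ j', ∑ i, A i j • (Kc j' i N * D j' n f) = if j' = j then D j' n f else 0 := by
      intro j'
      have h1 : ∑ i, A i j • (Kc j' i N * D j' n f) = ((KF * A) j' j) • D j' n f := by
        rw [Matrix.mul_apply, Finset.sum_smul]
        refine Finset.sum_congr rfl fun i _ => ?_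
        rw [mul_smul, smul_comm]
        rfl
      rw [h1, hKA, Matrix.one_apply]
      split_ifs <;> simp
    simp only [this]
    simp
  have hlex : ∀ t f, f ∈ Wf hV hFq (t+1) ↔ memVmi D (t / l) (js t) f := by
    intro t f
    rw [mem_Wf]
    constructor
    · intro h n j hn
      exact h j n ((lex_iff hl t n j).2 hn)
    · intro h j n hn
      exact h n j ((lex_iff hl t n j).1 hn)
  have hvW : ∀ t, ∀ f ∈ Wf hV hFq (t+1), T (v t) f = D (js t) (t / l) f := by
    intro t f hf
    exact hv0 _ _ _ fun j n' hn' => (hlex t f).1 hf n' j (Or.inl hn')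
  have hmono : Monotone (Wf hV hFq) := fun s t hst f hf j n h => hf j n (hst.trans h)
  have hcommD : ∀ x f i m, D i m (T x f) = T x (D i m f) := by
    intro x f i m
    have : (Dl hV hFq i m) ∘ₗ T x = T x ∘ₗ (Dl hV hFq i m) := by
      induction x using Finsupp.induction_linear with
      | zero => simp
      | add x y hx hy => rw [map_add, LinearMap.comp_add, LinearMap.add_comp, hx, hy]
      | single x r =>
        simp only [T, Finsupp.linearCombination_single]
        rw [LinearMap.comp_smul, LinearMap.smul_comp]
        congr 1
        ext g
        exact D_T0 hV hFq hKquasi x g i m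
    exact congrArg (fun g => g f) this
  have hT00 : ∀ t x, ∀ f ∈ Wf hV hFq t, T x f ∈ Wf hV hFq t := by
    intro t x f hf j n h
    rw [hcommD, hf j n h, map_zero]
  refine ⟨T, Wf hV hFq, v, hsingle, ?_, ?_, hT00, ?_, ?_, ?_, ?_, ?_, hmono, ?_, ?_⟩
  · intro x y f
    have : T x ∘ₗ T y = T y ∘ₗ T x := by
      induction x using Finsupp.induction_linear with
      | zero => simp
      | add x x' hx hx' => rw [map_add, LinearMap.comp_add, LinearMap.add_comp, hx, hx']
      | single x r =>
        induction y using Finsupp.induction_linear with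
        | zero => simp
        | add y y' hy hy' => rw [map_add, LinearMap.comp_add, LinearMap.add_comp, hy, hy']
        | single y s =>
          simp only [T, Finsupp.linearCombination_single]
          rw [LinearMap.comp_smul, LinearMap.smul_comp, LinearMap.comp_smul, LinearMap.smul_comp,
            smul_comm]
          congr 2
          ext g
          exact T0_comm hV hFq hKquasi x y g
    exact congrArg (fun g => g f) this
  · intro f
    obtain ⟨B, hB⟩ := d_bound hV f
    refine ⟨Finset.univ ×ˢ Finset.range (B + N), fun x hx => ?_⟩
    rw [hsingle, T0_eq N Kc x f B hB]
    simp only [Finset.mem_product, Finset.mem_univ, true_and, Finset.mem_range, not_lt] at hx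
    refine Finset.sum_eq_zero fun j _ => Finset.sum_eq_zero fun n hn => ?_
    rw [Finset.mem_range] at hn
    rw [theta_zero, zero_mul]
    omega
  · intro t s hts f hf
    rw [hvW s f (hmono (by omega) hf)]
    exact hf _ _ (by rw [hs]; exact hts)
  · intro t f hf h j n hn
    rw [hvW t f hf] at h
    rcases hn.eq_or_lt with h' | h'
    · subst h'
      have h1 : (n * l + (j : ℕ)) / l = n := by
        rw [Nat.mul_comm, Nat.mul_add_div hl, Nat.div_eq_of_lt j.2, add_zero]
      have h2 : js (n * l + (j : ℕ)) = j := by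
        ext
        simp only [js]
        rw [Nat.mul_comm, Nat.mul_add_mod, Nat.mod_eq_of_lt j.2]
      rwa [h1, h2] at h
    · exact hf j n h'
  · intro t
    refine exists_section hField _ (T (v t)) (hT00 _ _) fun f hf => ?_
    obtain ⟨g, hg, hgf⟩ := hnorm (t / l) (js t) f ((hlex t f).1 hf)
    have hg' := (hlex t g).2 hg
    exact ⟨g, hg', by rw [hvW t g hg', hgf]⟩
  · intro f
    rw [hFq, mem_Wf]
    simp
  · intro f
    obtain ⟨B, hB⟩ := d_bound hV f
    refine ⟨B * l + l, fun j n h => hB j n ?_⟩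
    by_contra hn
    have := Nat.mul_le_mul_right l (Nat.succ_le_of_lt (not_le.1 hn))
    rw [Nat.succ_mul] at this
    have := j.2
    omega
  · intro i n hn
    obtain ⟨n, rfl⟩ := Nat.exists_eq_add_of_le' hn
    have : (Finsupp.single (i, n + N) 1 : (Fin l × ℕ) →₀ Fq) = ∑ j, KF j i • v0 n j := by
      simp only [v0, Finset.smul_sum]
      rw [Finset.sum_comm]
      have : ∀ i', ∑ j, KF j i • A i' j • (Finsupp.single (i', n + N) 1 : (Fin l × ℕ) →₀ Fq)
          = if i' = i then Finsupp.single (i', n + N) 1 else 0 := by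
        intro i'
        have h1 : ∑ j, KF j i • A i' j • (Finsupp.single (i', n + N) 1 : (Fin l × ℕ) →₀ Fq)
            = ((A * KF) i' i) • (Finsupp.single (i', n + N) 1 : (Fin l × ℕ) →₀ Fq) := by
          rw [Matrix.mul_apply, Finset.sum_smul]
          refine Finset.sum_congr rfl fun j _ => ?_
          rw [mul_smul, smul_comm]
        rw [h1, hAK, Matrix.one_apply]
        split_ifs <;> simp
      simp only [this]
      simp
    rw [this]
    refine Submodule.sum_mem _ fun j _ => Submodule.smul_mem _ _ (Submodule.subset_span ?_)
    refine ⟨n * l + j, ?_⟩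
    have h1 : (n * l + (j : ℕ)) / l = n := by
      rw [Nat.mul_comm, Nat.mul_add_div hl, Nat.div_eq_of_lt j.2, add_zero]
    have h2 : js (n * l + (j : ℕ)) = j := by
      ext
      simp only [js]
      rw [Nat.mul_comm, Nat.mul_add_mod, Nat.mod_eq_of_lt j.2]
    simp only [v, h1, h2]
  · intro s
    exact Submodule.sum_mem _ fun j _ => Submodule.smul_mem _ _ (Submodule.subset_span ⟨j, rfl⟩)

end Concrete
section Final
open AlternatingMap MvPolynomial
variable {V : Type*} [CommRing V] {l : ℕ} {Fq : Subring V}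

lemma toC_sub {k : ℕ} (P Q : (Fin k → Fin l) → MvPolynomial (Fin k) V) (a) :
    toC (P - Q) a = toC P a - toC Q a := by
  simp [toC, coeff_sub]

lemma toC_add {k : ℕ} (P Q : (Fin k → Fin l) → MvPolynomial (Fin k) V) (a) :
    toC (P + Q) a = toC P a + toC Q a := by
  simp [toC, coeff_add]

lemma toC_smul {k : ℕ} (r : Fq) (P : (Fin k → Fin l) → MvPolynomial (Fin k) V) (a) :
    toC (r • P) a = r • toC P a := by
  simp [toC, coeff_smul]

lemma toC_zero {k : ℕ} (a) :
    toC (0 : (Fin k → Fin l) → MvPolynomial (Fin k) V) a = 0 := by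
  simp [toC]

lemma exists_w (hV2 : ∀ x : V, x + x = 0 → x = 0) {k : ℕ}
    (P : (Fin k → Fin l) → MvPolynomial (Fin k) V) (hP : OmegaSkew P) :
    ∃ w : ((Fin l × ℕ) →₀ Fq) [⋀^Fin k]→ₗ[Fq] V, FBd w ∧
      ∀ a, w (fun i => Finsupp.single (a i) 1) = toC P a := by
  obtain ⟨w, hw⟩ := exists_alt (F := Fq) hV2 (toC P) ((skew_toC P).1 hP)
  refine ⟨w, ?_, hw⟩
  refine FBd.of_finset (Finset.univ ×ˢ Finset.range
    ((Finset.univ.sup fun i => (P i).totalDegree) + 1)) ?_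
  rintro a ⟨b, hb⟩
  rw [hw]
  simp only [Finset.mem_product, Finset.mem_univ, true_and, Finset.mem_range, not_lt] at hb
  by_contra h
  have h1 := monomial_le_degreeOf b (mem_support_iff.2 h)
  have h2 := degreeOf_le_totalDegree (P fun i => (a i).1) b
  have h3 : (P fun i => (a i).1).totalDegree ≤ Finset.univ.sup (fun i => (P i).totalDegree) :=
    Finset.le_sup (f := fun i => (P i).totalDegree) (Finset.mem_univ _)
  rw [ex_apply] at h1
  omega

lemma exists_P {k : ℕ} (w : ((Fin l × ℕ) →₀ Fq) [⋀^Fin k]→ₗ[Fq] V) (hw : FBd w) :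
    ∃ P : (Fin k → Fin l) → MvPolynomial (Fin k) V, OmegaSkew P ∧
      ∀ a, w (fun i => Finsupp.single (a i) 1) = toC P a := by
  obtain ⟨S, hS⟩ := hw.exists_finset
  obtain ⟨P, hP⟩ := exists_poly (fun a => w (fun i => Finsupp.single (a i) 1)) S hS
  refine ⟨P, (skew_toC P).2 fun σ a => ?_, fun a => (hP a).symm⟩
  rw [hP, hP]
  exact w.map_perm (fun i => Finsupp.single (a i) 1) σ

variable {pd : V → V} {D : Fin l → ℕ → V → V} (hV : IsAlgDiffFun pd D)
  {N : ℕ} {Kc : Fin l → Fin l → ℕ → V}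
  {T : ((Fin l × ℕ) →₀ Fq) →ₗ[Fq] (V →ₗ[Fq] V)} {W : ℕ → Submodule Fq V}
  {v : ℕ → ((Fin l × ℕ) →₀ Fq)} (hp : Pkg pd D N Kc Fq T W v)

include hV hp in
lemma toC_delta_w {k : ℕ} (P : (Fin k → Fin l) → MvPolynomial (Fin k) V)
    (w : ((Fin l × ℕ) →₀ Fq) [⋀^Fin k]→ₗ[Fq] V)
    (hw : ∀ a, w (fun i => Finsupp.single (a i) 1) = toC P a) (a : Fin (k+1) → Fin l × ℕ) :
    dAlt T w (fun i => Finsupp.single (a i) 1) = toC (deltaK pd D N Kc P) a := by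
  rw [toC_deltaK hV, dAlt_apply]
  refine Finset.sum_congr rfl fun i _ => ?_
  rw [hp.single]
  congr 2
  exact hw (fun b => a (i.succAbove b))

include hV hp in
lemma deltaK_sub {k : ℕ} (P Q : (Fin k → Fin l) → MvPolynomial (Fin k) V) :
    deltaK pd D N Kc (P - Q) = deltaK pd D N Kc P - deltaK pd D N Kc Q := by
  apply toC_ext
  intro a
  rw [toC_sub, toC_deltaK hV, toC_deltaK hV, toC_deltaK hV, ← Finset.sum_sub_distrib]
  refine Finset.sum_congr rfl fun i _ => ?_
  rw [toC_sub, ← hp.single, ← hp.single, ← hp.single, map_sub, smul_sub]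

include hV hp in
lemma deltaK_const {k : ℕ} (P : (Fin k → Fin l) → MvPolynomial (Fin k) V)
    (h : ∀ a, toC P a ∈ Fq)
    (hFq : ∀ x : V, x ∈ Fq ↔ ∀ (j : Fin l) (n : ℕ), D j n x = 0) :
    deltaK pd D N Kc P = 0 := by
  apply toC_ext
  intro a
  rw [toC_zero, toC_deltaK hV]
  refine Finset.sum_eq_zero fun i _ => ?_
  rw [T0_eq N Kc _ _ 0 fun j n _ => (hFq _).1 (h _) j n]
  simp

include hV hp in
lemma deltaK_deltaK (hV2 : ∀ x : V, x + x = 0 → x = 0) {k : ℕ}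
    (P : (Fin k → Fin l) → MvPolynomial (Fin k) V) (hP : OmegaSkew P) :
    OmegaSkew (deltaK pd D N Kc P) ∧ deltaK pd D N Kc (deltaK pd D N Kc P) = 0 := by
  obtain ⟨w, hwF, hw⟩ := exists_w (Fq := Fq) hV2 P hP
  have h1 := toC_delta_w hV hp P w hw
  have h2 := toC_delta_w hV hp _ _ h1
  constructor
  · rw [skew_toC]
    intro σ a
    rw [← h1, ← h1]
    exact (dAlt T w).map_perm (fun i => Finsupp.single (a i) 1) σ
  · apply toC_ext
    intro a
    rw [← h2, dAlt_dAlt T hp.comm, toC_zero]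
    rfl

include hp in
lemma exists_val {k : ℕ} (w : ((Fin l × ℕ) →₀ Fq) [⋀^Fin k]→ₗ[Fq] V) (hw : FBd w) :
    ∃ t, ValIn (W t) w := by
  induction k with
  | zero =>
    obtain ⟨t, ht⟩ := hp.wtop (w ![])
    exact ⟨t, fun a => by rw [Subsingleton.elim a ![]]; exact ht⟩
  | succ k ih =>
    obtain ⟨S, hS⟩ := id hw
    choose t ht using fun y => ih _ (hw.curry (Finsupp.single y 1))
    refine ⟨S.sup t, fun a => ?_⟩
    have key : ∀ x, ∀ b, curryLeft w x b ∈ W (S.sup t) := by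
      intro x
      induction x using Finsupp.induction_linear with
      | zero => intro b; rw [_root_.map_zero]; exact Submodule.zero_mem _
      | add x y hx hy => intro b; rw [map_add]; exact Submodule.add_mem _ (hx b) (hy b)
      | single y r =>
        intro b
        rw [← mul_one r, ← smul_eq_mul, ← Finsupp.smul_single, map_smul]
        refine Submodule.smul_mem _ _ ?_
        by_cases hy : y ∈ S
        · exact hp.wmono (Finset.le_sup hy) (ht y b)
        · rw [hS y hy]; exact Submodule.zero_mem _
    have := key (a 0) (Matrix.vecTail a)
    rw [curryLeft_apply_apply] at this
    have h' : Matrix.vecCons (a 0) (Matrix.vecTail a) = a := Matrix.cons_head_tail a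
    rwa [h'] at this

lemma curry_single {k : ℕ} (w : ((Fin l × ℕ) →₀ Fq) [⋀^Fin (k+1)]→ₗ[Fq] V) (x : Fin l × ℕ)
    (h : ∀ a : Fin (k+1) → Fin l × ℕ, a 0 = x → w (fun i => Finsupp.single (a i) 1) = 0) :
    curryLeft w (Finsupp.single x 1) = 0 := by
  refine Module.Basis.ext_alternating (Finsupp.basisSingleOne (R := Fq)) fun a _ => ?_
  have := h (Fin.cons x a) rfl
  simp only [curryLeft_apply_apply, Finsupp.coe_basisSingleOne, AlternatingMap.zero_apply]
  rw [← this]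
  congr 1
  ext1 i
  refine Fin.cases ?_ (fun i => ?_) i <;> simp

include hp in
lemma curry_v {k : ℕ} (w : ((Fin l × ℕ) →₀ Fq) [⋀^Fin (k+1)]→ₗ[Fq] V) (s : ℕ)
    (h : ∀ i, curryLeft w (Finsupp.single (i, s / l + N) 1) = 0) : curryLeft w (v s) = 0 := by
  have : Submodule.span Fq (Set.range fun i : Fin l => Finsupp.single (i, s / l + N) 1)
      ≤ LinearMap.ker (curryLeft w) := by
    rw [Submodule.span_le]
    rintro _ ⟨i, rfl⟩
    exact h i
  exact this (hp.vsup s)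

include hp hV in
lemma closed_v {k : ℕ} (P : (Fin k → Fin l) → MvPolynomial (Fin k) V)
    (w : ((Fin l × ℕ) →₀ Fq) [⋀^Fin k]→ₗ[Fq] V)
    (hw : ∀ a, w (fun i => Finsupp.single (a i) 1) = toC P a)
    (H : ∀ a : Fin (k+1) → Fin l × ℕ, N ≤ (a 0).2 → toC (deltaK pd D N Kc P) a = 0) (s : ℕ) :
    curryLeft (dAlt T w) (v s) = 0 := by
  refine curry_v hp _ _ fun i => curry_single _ _ fun a ha => ?_
  rw [toC_delta_w hV hp P w hw]
  exact H a (by rw [ha]; simp)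

include hp hV in
theorem core_zero (hV2 : ∀ x : V, x + x = 0 → x = 0)
    (P : (Fin 0 → Fin l) → MvPolynomial (Fin 0) V) (hP : OmegaSkew P)
    (H : ∀ a : Fin 1 → Fin l × ℕ, N ≤ (a 0).2 → toC (deltaK pd D N Kc P) a = 0) (a) :
    toC P a ∈ Fq := by
  obtain ⟨w, hwF, hw⟩ := exists_w (Fq := Fq) hV2 P hP
  obtain ⟨t, ht⟩ := exists_val hp w hwF
  have := main_lemma_zero T W v hp.h2 w (closed_v hV hp P w hw H) t ht
  rw [← hw, ← hp.w0]
  exact this _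

include hp hV in
theorem core_succ (hl : 0 < l) (hV2 : ∀ x : V, x + x = 0 → x = 0) {k : ℕ}
    (P : (Fin (k+1) → Fin l) → MvPolynomial (Fin (k+1)) V) (hP : OmegaSkew P)
    (H : ∀ a : Fin (k+2) → Fin l × ℕ, N ≤ (a 0).2 → toC (deltaK pd D N Kc P) a = 0) :
    ∃ Q : (Fin k → Fin l) → MvPolynomial (Fin k) V, OmegaSkew Q ∧
      (∀ a, toC (P - deltaK pd D N Kc Q) a ∈ Fq) ∧
      (∀ a, (∃ α, N ≤ (a α).2) → toC (P - deltaK pd D N Kc Q) a = 0) := by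
  obtain ⟨w, hwF, hw⟩ := exists_w (Fq := Fq) hV2 P hP
  obtain ⟨t, ht⟩ := exists_val hp w hwF
  obtain ⟨S, hS⟩ := id hwF
  set n0 := (S.sup Prod.snd) + 1 with hn0
  obtain ⟨e, heF, hev, he⟩ := main_lemma T hp.comm hp.fin W v hp.h0 hp.h1 hp.h2 hp.h3
    (max t (n0 * l)) w hwF (fun a => hp.wmono (le_max_left _ _) (ht a))
    (by
      intro s hs
      refine curry_v hp _ _ fun i => hS _ fun hi => ?_
      have h1 := Finset.le_sup (f := Prod.snd) hi
      have h2 : n0 ≤ s / l := (Nat.le_div_iff_mul_le hl).2 ((le_max_right _ _).trans hs)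
      simp only at h1
      omega)
    (closed_v hV hp P w hw H)
  obtain ⟨Q, hQ, hQe⟩ := exists_P e heF
  have hd : ∀ a, (w - dAlt T e) (fun i => Finsupp.single (a i) 1)
      = toC (P - deltaK pd D N Kc Q) a := by
    intro a
    rw [toC_sub, AlternatingMap.sub_apply, hw, toC_delta_w hV hp Q e hQe]
  have hz : ∀ x : Fin l × ℕ, N ≤ x.2 → curryLeft (w - dAlt T e) (Finsupp.single x 1) = 0 := by
    rintro ⟨i, n⟩ hn
    have : Submodule.span Fq (Set.range v) ≤ LinearMap.ker (curryLeft (w - dAlt T e)) := by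
      rw [Submodule.span_le]
      rintro _ ⟨s, rfl⟩
      exact he s
    exact this (hp.vspan i n hn)
  refine ⟨Q, hQ, fun a => ?_, ?_⟩
  · rw [← hd, ← hp.w0]; exact hev _
  · rintro a ⟨i, hi⟩
    rw [← hd]
    have h1 := neg_one_pow_smul_map_insertNth (w - dAlt T e) i (Finsupp.single (a i) 1)
      (i.removeNth (fun i => Finsupp.single (a i) (1:Fq)))
    have h2 := congrArg (fun f => f (i.removeNth (fun i => Finsupp.single (a i) (1:Fq)))) (hz _ hi)
    simp only [curryLeft_apply_apply, AlternatingMap.zero_apply] at h2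
    rw [h2, Fin.insertNth_self_removeNth i (fun i => Finsupp.single (a i) (1:Fq))] at h1
    rcases neg_one_pow_eq_or ℤ (i : ℕ) with h | h
    · rw [h, one_smul] at h1; exact h1
    · rw [h, neg_smul, one_smul, neg_eq_zero] at h1; exact h1

lemma O_iff {k : ℕ} (P : (Fin k → Fin l) → MvPolynomial (Fin k) V) :
    ((∀ i m, coeff m (P i) ∈ Fq) ∧ (∀ i, ∀ m ∈ (P i).support, ∀ α : Fin k, m α < N)) ↔
    ((∀ a, toC P a ∈ Fq) ∧ (∀ a, (∃ α, N ≤ (a α).2) → toC P a = 0)) := by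
  constructor
  · rintro ⟨h1, h2⟩
    refine ⟨fun a => h1 _ _, ?_⟩
    rintro a ⟨α, hα⟩
    by_contra h
    have := h2 _ _ (mem_support_iff.2 h) α
    rw [ex_apply] at this
    omega
  · rintro ⟨h1, h2⟩
    refine ⟨fun i m => by rw [toC_pair]; exact h1 _, fun i m hm α => ?_⟩
    by_contra h
    rw [mem_support_iff, toC_pair] at hm
    exact hm (h2 _ ⟨α, not_lt.1 h⟩)

theorem rank_O [Nontrivial V] (hV2 : ∀ x : V, x + x = 0 → x = 0) {k : ℕ}
    (O : Submodule Fq ((Fin k → Fin l) → MvPolynomial (Fin k) V))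
    (hO : ∀ P, P ∈ O ↔ OmegaSkew P ∧
          (∀ i m, MvPolynomial.coeff m (P i) ∈ Fq) ∧
          (∀ i, ∀ m ∈ (P i).support, ∀ α : Fin k, m α < N)) :
    Module.rank Fq O = ((N * l).choose k : Cardinal) := by
  classical
  let X := ((Fin l × Fin N) →₀ Fq) [⋀^Fin k]→ₗ[Fq] Fq
  let c : X → (Fin k → Fin l × ℕ) → V := fun g a =>
    if h : ∀ b, (a b).2 < N then
      ((g fun b => Finsupp.single ((a b).1, (⟨(a b).2, h b⟩ : Fin N)) 1 : Fq) : V) else 0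
  have hex : ∀ g : X, ∃ P : (Fin k → Fin l) → MvPolynomial (Fin k) V, ∀ a, toC P a = c g a := by
    intro g
    refine exists_poly (c g) (Finset.univ ×ˢ Finset.range N) ?_
    rintro a ⟨b, hb⟩
    simp only [Finset.mem_product, Finset.mem_univ, true_and, Finset.mem_range] at hb
    exact dif_neg fun h => hb (h b)
  choose Ψ hΨ using hex
  have hmem : ∀ g, Ψ g ∈ O := by
    intro g
    rw [hO, O_iff, skew_toC]
    refine ⟨fun σ a => ?_, fun a => ?_, ?_⟩
    · rw [hΨ, hΨ]
      simp only [c]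
      by_cases h : ∀ b, (a b).2 < N
      · rw [dif_pos h, dif_pos fun b => h (σ b)]
        have := g.map_perm (fun b => Finsupp.single ((a b).1, (⟨(a b).2, h b⟩ : Fin N)) 1) σ
        have h2 := congrArg (Fq.subtype) this
        rw [Units.smul_def, map_zsmul] at h2
        exact h2
      · rw [dif_neg h, dif_neg, smul_zero]
        intro h'
        refine h fun b => ?_
        obtain ⟨b, rfl⟩ := σ.surjective b
        exact h' b
    · rw [hΨ]
      simp only [c]
      split_ifs
      · exact Subtype.property _
      · exact Fq.zero_mem
    · rintro a ⟨α, hα⟩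
      rw [hΨ]
      exact dif_neg fun h => absurd (h α) (not_lt.2 hα)
  let Φ : X →ₗ[Fq] O :=
    { toFun := fun g => ⟨Ψ g, hmem g⟩
      map_add' := fun g g' => by
        apply Subtype.ext
        apply toC_ext
        intro a
        change toC (Ψ (g + g')) a = toC (Ψ g + Ψ g') a
        rw [toC_add, hΨ, hΨ, hΨ]
        simp only [c]
        split_ifs
        · rfl
        · simp
      map_smul' := fun r g => by
        apply Subtype.ext
        apply toC_ext
        intro a
        change toC (Ψ (r • g)) a = toC (r • Ψ g) a
        rw [toC_smul, hΨ, hΨ]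
        simp only [c]
        split_ifs
        · rfl
        · simp }
  have hinj : Function.Injective Φ := by
    intro g g' h
    refine Module.Basis.ext_alternating (Finsupp.basisSingleOne (R := Fq)) fun a _ => ?_
    have h1 : Ψ g = Ψ g' := congrArg Subtype.val h
    have h2 := congrArg (fun P => toC P (fun b => ((a b).1, ((a b).2 : ℕ)))) h1
    simp only [hΨ, c] at h2
    rw [dif_pos (fun b => (a b).2.2), dif_pos (fun b => (a b).2.2)] at h2
    simpa using Subtype.ext h2
  have hsurj : Function.Surjective Φ := by
    rintro ⟨P, hP⟩
    have hP' := hP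
    rw [hO, O_iff, skew_toC] at hP'
    obtain ⟨h1, h2, h3⟩ := hP'
    obtain ⟨g, hg⟩ := exists_alt (F := Fq) (V := Fq) (J := Fin l × Fin N) (k := k)
      (fun x hx => Subtype.ext (hV2 x (congrArg Subtype.val hx)))
      (fun a => ⟨toC P (fun b => ((a b).1, ((a b).2 : ℕ))), h2 _⟩)
      (fun σ a => by
        apply Subtype.ext
        have := h1 σ (fun b => ((a b).1, ((a b).2 : ℕ)))
        refine this.trans ?_
        exact (map_zsmul Fq.subtype (Equiv.Perm.sign σ : ℤ)
          (⟨toC P (fun b => ((a b).1, ((a b).2 : ℕ))), h2 _⟩ : Fq)).symm)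
    refine ⟨g, ?_⟩
    apply Subtype.ext
    apply toC_ext
    intro a
    change toC (Ψ g) a = toC P a
    rw [hΨ]
    simp only [c]
    split_ifs with h
    · rw [hg fun b => ((a b).1, ⟨(a b).2, h b⟩)]
    · push Not at h
      exact (h3 a h).symm
  rw [← (LinearEquiv.ofBijective Φ ⟨hinj, hsurj⟩).rank_eq, rank_alt]
  simp [mul_comm]

end Final

/-- Let `V` be a normal algebra of differential functions in `ℓ < ∞` differential
variables over a field of characteristic zero, whose algebra of quasiconstants `F` is a
field, and let `K(∂)` be an `ℓ×ℓ` matrix differential operator of order `N` with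
quasiconstant coefficients and invertible leading coefficient.  Then for every `k ≥ 0`
one has `ker(δ_K : Ω̃^k → Ω̃^{k+1}) = δ_K(Ω̃^{k−1}) ⊕ Ω̃^k_{0,0}` (with `Ω̃^{−1} = 0`),
i.e. the inclusion `(Ω̃^•_{0,0}, 0) ⊆ (Ω̃^•(V), δ_K)` is a quasiisomorphism,
and `H^k(Ω̃^•(V), δ_K)` is an `F`-vector space of dimension `Nℓ choose k`. -/
theorem stmt_18 (V : Type*) [CommRing V] [Algebra ℚ V] [Nontrivial V]
    (l : ℕ) (hl : 0 < l) (pd : V → V) (D : Fin l → ℕ → V → V)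
    (hV : IsAlgDiffFun pd D) (hnorm : IsNormalADF D)
    (Fq : Subring V) (hFq : ∀ x : V, x ∈ Fq ↔ ∀ (j : Fin l) (n : ℕ), D j n x = 0)
    (hFfield : ∀ f ∈ Fq, f ≠ 0 → ∃ g ∈ Fq, f * g = 1)
    (N : ℕ) (Kc : Fin l → Fin l → ℕ → V)
    (hKquasi : ∀ (i j : Fin l) (m : ℕ), Kc i j m ∈ Fq)
    (hKinv : IsUnit (Matrix.of fun i j : Fin l => Kc i j N)) :
    (∀ (Z0 O0 : Submodule Fq ((Fin 0 → Fin l) → MvPolynomial (Fin 0) V)),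
      (∀ P, P ∈ Z0 ↔ OmegaSkew P ∧ deltaK pd D N Kc P = 0) →
      (∀ P, P ∈ O0 ↔ OmegaSkew P ∧
          (∀ i m, MvPolynomial.coeff m (P i) ∈ Fq) ∧
          (∀ i, ∀ m ∈ (P i).support, ∀ α : Fin 0, m α < N)) →
      Z0 = O0 ∧ Module.rank Fq Z0 = ((N * l).choose 0 : Cardinal)) ∧
    (∀ (k : ℕ)
        (Z B O : Submodule Fq ((Fin (k + 1) → Fin l) → MvPolynomial (Fin (k + 1)) V)),
      (∀ P, P ∈ Z ↔ OmegaSkew P ∧ deltaK pd D N Kc P = 0) →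
      (∀ P, P ∈ B ↔ ∃ Q : (Fin k → Fin l) → MvPolynomial (Fin k) V,
          OmegaSkew Q ∧ P = deltaK pd D N Kc Q) →
      (∀ P, P ∈ O ↔ OmegaSkew P ∧
          (∀ i m, MvPolynomial.coeff m (P i) ∈ Fq) ∧
          (∀ i, ∀ m ∈ (P i).support, ∀ α : Fin (k + 1), m α < N)) →
      (Z = B ⊔ O ∧ B ⊓ O = ⊥) ∧
      Module.rank Fq (↥Z ⧸ Submodule.comap Z.subtype B)
        = ((N * l).choose (k + 1) : Cardinal)) := by
  have hV2 : ∀ x : V, x + x = 0 → x = 0 := by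
    intro x hx
    have : x = (1/2 : ℚ) • (x + x) := by
      rw [smul_add, ← add_smul]; norm_num
    rw [this, hx, smul_zero]
  obtain ⟨T, W, v, hp⟩ := exists_pkg hV hFq hKquasi hl hnorm hFfield hKinv
  refine ⟨?_, ?_⟩
  · intro Z O hZ hO
    have hZO : Z = O := by
      ext P
      rw [hZ, hO, O_iff]
      constructor
      · rintro ⟨h1, h2⟩
        refine ⟨h1, core_zero hV hp hV2 P h1 fun a _ => by rw [h2, toC_zero], ?_⟩
        rintro a ⟨α, _⟩
        exact α.elim0
      · rintro ⟨h1, h2, _⟩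
        exact ⟨h1, deltaK_const hV hp P h2 hFq⟩
    refine ⟨hZO, ?_⟩
    rw [hZO]
    exact rank_O hV2 O hO
  · intro k Z B O hZ hB hO
    have hBZ : B ≤ Z := by
      intro P hP
      obtain ⟨Q, hQ, rfl⟩ := (hB P).1 hP
      exact (hZ _).2 (deltaK_deltaK hV hp hV2 Q hQ)
    have hOZ : O ≤ Z := by
      intro P hP
      rw [hO, O_iff] at hP
      exact (hZ _).2 ⟨hP.1, deltaK_const hV hp P hP.2.1 hFq⟩
    have hsup : Z = B ⊔ O := by
      apply le_antisymm
      · intro P hP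
        obtain ⟨h1, h2⟩ := (hZ P).1 hP
        obtain ⟨Q, hQ, hQ1, hQ2⟩ := core_succ hV hp hl hV2 P h1 fun a _ => by rw [h2, toC_zero]
        have hdQ : deltaK pd D N Kc Q ∈ B := (hB _).2 ⟨Q, hQ, rfl⟩
        have hsub : P - deltaK pd D N Kc Q ∈ Z := Z.sub_mem hP (hBZ hdQ)
        rw [Submodule.mem_sup]
        refine ⟨_, hdQ, P - deltaK pd D N Kc Q, ?_, by abel⟩
        rw [hO, O_iff]
        exact ⟨((hZ _).1 hsub).1, hQ1, hQ2⟩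
      · exact sup_le hBZ hOZ
    have hinf : B ⊓ O = ⊥ := by
      rw [eq_bot_iff]
      rintro P ⟨hPB, hPO⟩
      rw [Submodule.mem_bot]
      obtain ⟨Q, hQ, rfl⟩ := (hB P).1 hPB
      have hPO' := (hO _).1 hPO
      rw [O_iff] at hPO'
      have H : ∀ a : Fin (k+1) → Fin l × ℕ, N ≤ (a 0).2 → toC (deltaK pd D N Kc Q) a = 0 :=
        fun a ha => hPO'.2.2 a ⟨0, ha⟩
      cases k with
      | zero => exact deltaK_const hV hp Q (core_zero hV hp hV2 Q hQ H) hFq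
      | succ k =>
        obtain ⟨R, hR, hR1, _⟩ := core_succ hV hp hl hV2 Q hQ H
        have h1 := deltaK_const hV hp _ hR1 hFq
        rw [deltaK_sub hV hp, (deltaK_deltaK hV hp hV2 R hR).2, sub_zero] at h1
        exact h1
    refine ⟨⟨hsup, hinf⟩, ?_⟩
    have hcompl : IsCompl (Submodule.comap Z.subtype B) (Submodule.comap Z.subtype O) := by
      constructor
      · rw [disjoint_iff, ← Submodule.comap_inf, hinf]
        exact Z.ker_subtype
      · rw [codisjoint_iff, eq_top_iff]
        rintro ⟨P, hP⟩ _
        have hP' := hP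
        rw [hsup, Submodule.mem_sup] at hP'
        obtain ⟨b, hb, o, ho, hbo⟩ := hP'
        rw [Submodule.mem_sup]
        exact ⟨⟨b, hBZ hb⟩, hb, ⟨o, hOZ ho⟩, ho, Subtype.ext hbo⟩
    rw [(Submodule.quotientEquivOfIsCompl _ _ hcompl).rank_eq,
      (Submodule.comapSubtypeEquivOfLe hOZ).rank_eq]
    exact rank_O hV2 O hO
end
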